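/- arXiv:1512.08345 — 5 statements merged into one kernel-verified Lean document; each statement's English description precedes it below -/
import Mathlib

section
/- The multiple zeta value ζ(α_1,...,α_n) equals the iterated integral over 0 < t_1 < t_2 < ... < t_m < 1 of ω_1(t_1) ⋯ ω_m(t_m), where m = α_1 + ... + α_n, ω_i(t) = dt/(1-t) if i ∈ {1, α_1+1, α_1+α_2+1, ..., α_1+⋯+α_{n-1}+1}, and ω_i(t) = dt/t otherwise. -/
open MeasureTheory Real

/-- Multiple zeta value `ζ(α₀,…,α_{n-1}) = ∑_{0<ℓ₀<⋯<ℓ_{n-1}} ∏ ℓᵢ^{-αᵢ}`. -/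
noncomputable def mzv {n : ℕ} (α : Fin n → ℕ) : ℝ :=
  ∑' ℓ : {ℓ : Fin n → ℕ // StrictMono ℓ ∧ ∀ i, 0 < ℓ i},
    ∏ i, ((ℓ.1 i : ℝ) ^ (α i))⁻¹

/-- The open ordered simplex `0 < t 0 < ⋯ < t (m-1) < 1` in `Fin m → ℝ`. -/
def orderedSimplex (m : ℕ) : Set (Fin m → ℝ) :=
  {t | StrictMono t ∧ ∀ i, t i ∈ Set.Ioo (0 : ℝ) 1}

open scoped ENNReal

/-! Everything is nonnegative, so the computation takes place in `[0, ∞]`, where sums and integrals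
can be interchanged freely. Write `Li_α(x)` for the iterated integral over `0 < t₁ < ⋯ < t_m < x`,
and `Z_α(k)` for the nested sum restricted to `0 < ℓ₁ < ⋯ < ℓ_n ≤ k`. The point is the generating
function
  `Li_α(t) / (1 - t) = ∑_k Z_α(k) t^k`,
proved by induction on `n`, starting from the geometric series. If `α'` arises from `α` by appending
a block of length `a`, then its first form `dt / (1 - t)` integrates the right-hand side termwise,
and each of the remaining `a - 1` forms `dt / t` divides the coefficient of `t^(k + 1)` by `k + 1`;
hence `Li_α'(x) = ∑_k Z_α(k) (k + 1)^(-a) x^(k + 1)`. Dividing by `1 - x` replaces these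
coefficients by their partial sums, which are the `Z_α'(k)`, while `x = 1` gives `ζ(α')`. -/

section Ordered

variable {R : Type*}

/-- Strictly increasing `n`-tuples of elements of `s`: the index sets of nested sums (`R = ℕ`) and
the domains of iterated integrals (`R = ℝ`). -/
def strictMonoTuples [Preorder R] (n : ℕ) (s : Set R) : Set (Fin n → R) :=
  {t | StrictMono t ∧ ∀ i, t i ∈ s}

theorem snoc_mem_strictMonoTuples [Preorder R] {n : ℕ} {s : Set R} {p : Fin n → R} {a : R} :
    (Fin.snoc p a : Fin (n + 1) → R) ∈ strictMonoTuples (n + 1) s ↔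
      a ∈ s ∧ p ∈ strictMonoTuples n (s ∩ Set.Iio a) := by
  have mono_iff : StrictMono (Fin.snoc p a : Fin (n + 1) → R) ↔ StrictMono p ∧ ∀ i, p i < a := by
    simp [StrictMono, Fin.forall_fin_succ', (Fin.castSucc_lt_last _).not_gt, forall_and]
  simp only [strictMonoTuples, Set.mem_ofPred_eq, mono_iff, Fin.forall_fin_succ', Fin.snoc_castSucc,
    Fin.snoc_last, Set.mem_inter_iff, Set.mem_Iio, forall_and]
  tauto

theorem indicator_strictMonoTuples_snoc [Preorder R] {M : Type*} [CommMonoidWithZero M] {n : ℕ}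
    (f : Fin (n + 1) → R → M) (s : Set R) (p : Fin n → R) (a : R) :
    (strictMonoTuples (n + 1) s).indicator (fun t ↦ ∏ i, f i (t i)) (Fin.snoc p a) =
      s.indicator (f (Fin.last n)) a *
        (strictMonoTuples n (s ∩ Set.Iio a)).indicator (fun p ↦ ∏ i, Fin.init f i (p i)) p := by
  classical
  simp only [Set.indicator_apply, snoc_mem_strictMonoTuples, Fin.prod_univ_castSucc,
    Fin.snoc_castSucc, Fin.snoc_last, Fin.init, ite_and]
  split_ifs <;> simp [mul_comm]

theorem lintegral_pi_snoc [MeasurableSpace R] {n : ℕ} (μ : Measure R) [SigmaFinite μ]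
    {F : (Fin (n + 1) → R) → ℝ≥0∞} (hF : Measurable F) :
    ∫⁻ t, F t ∂Measure.pi (fun _ ↦ μ) =
      ∫⁻ a, ∫⁻ p, F (Fin.snoc p a) ∂Measure.pi (fun _ ↦ μ) ∂μ := by
  have hsnoc := (measurePreserving_piFinSuccAbove (fun _ : Fin (n + 1) ↦ μ) (Fin.last n)).symm
  rw [← hsnoc.lintegral_comp_emb (MeasurableEquiv.measurableEmbedding _) F,
    lintegral_prod (fun x ↦ F _) (hF.comp (MeasurableEquiv.measurable _)).aemeasurable]
  simp [MeasurableEquiv.piFinSuccAbove, Fin.insertNthEquiv, Fin.insertNth_last']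

/-- The iterated integral of `f 0 (t 0) ⋯ f (n - 1) (t (n - 1))` over the tuples
`t 0 < ⋯ < t (n - 1)` in `s`. For the counting measure on `ℕ` this is a nested sum. -/
noncomputable def iteratedLIntegral [Preorder R] [MeasurableSpace R] (μ : Measure R) {n : ℕ}
    (f : Fin n → R → ℝ≥0∞) (s : Set R) : ℝ≥0∞ :=
  ∫⁻ t in strictMonoTuples n s, ∏ i, f i (t i) ∂Measure.pi fun _ ↦ μ

theorem iteratedLIntegral_fin_zero [Preorder R] [MeasurableSpace R] (μ : Measure R)
    (f : Fin 0 → R → ℝ≥0∞) (s : Set R) : iteratedLIntegral μ f s = 1 := by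
  have : strictMonoTuples 0 s = Set.univ := by
    ext t
    simp [strictMonoTuples, Subsingleton.strictMono]
  simp [iteratedLIntegral, this]

variable [LinearOrder R] [TopologicalSpace R] [OrderClosedTopology R] [SecondCountableTopology R]
  [MeasurableSpace R] [OpensMeasurableSpace R] {μ : Measure R} {s : Set R}

theorem measurableSet_strictMonoTuples (n : ℕ) (hs : MeasurableSet s) :
    MeasurableSet (strictMonoTuples n s) := by
  simp only [strictMonoTuples, StrictMono]
  measurability

theorem iteratedLIntegral_succ [SigmaFinite μ] {n : ℕ} {f : Fin (n + 1) → R → ℝ≥0∞}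
    (hf : ∀ i, Measurable (f i)) (hs : MeasurableSet s) :
    iteratedLIntegral μ f s =
      ∫⁻ a in s, f (Fin.last n) a * iteratedLIntegral μ (Fin.init f) (s ∩ Set.Iio a) ∂μ := by
  have hsn := measurableSet_strictMonoTuples (n + 1) hs
  rw [iteratedLIntegral, ← lintegral_indicator hsn,
    lintegral_pi_snoc μ (.indicator (by fun_prop) hsn), ← lintegral_indicator hs]
  refine lintegral_congr fun a ↦ ?_
  have hsa := measurableSet_strictMonoTuples n (hs.inter (measurableSet_Iio (a := a)))
  have hinit : Measurable fun p : Fin n → R ↦ ∏ i, Fin.init f i (p i) := by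
    unfold Fin.init
    fun_prop
  simp_rw [indicator_strictMonoTuples_snoc]
  rw [lintegral_const_mul _ (hinit.indicator hsa), lintegral_indicator hsa]
  exact (Set.indicator_mul_left s (f (Fin.last n))
    fun a ↦ iteratedLIntegral μ (Fin.init f) (s ∩ Set.Iio a)).symm

theorem iteratedLIntegral_Ioo_succ [SigmaFinite μ] {w : ℕ → R → ℝ≥0∞}
    (hw : ∀ i, Measurable (w i)) (n : ℕ) (a b : R) :
    iteratedLIntegral μ (fun i : Fin (n + 1) ↦ w i) (Set.Ioo a b) =
      ∫⁻ t in Set.Ioo a b,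
        w n t * iteratedLIntegral μ (fun i : Fin n ↦ w i) (Set.Ioo a t) ∂μ := by
  rw [iteratedLIntegral_succ (fun i ↦ hw i) measurableSet_Ioo]
  refine setLIntegral_congr_fun measurableSet_Ioo fun t ht ↦ ?_
  simp only [Set.Ioo_inter_Iio, min_eq_right ht.2.le]
  rfl

theorem setIntegral_strictMonoTuples_eq_toReal {n : ℕ} {f : Fin n → R → ℝ}
    (hf : ∀ i, Measurable (f i)) (hs : MeasurableSet s) (hnonneg : ∀ i, ∀ x ∈ s, 0 ≤ f i x) :
    ∫ t in strictMonoTuples n s, ∏ i, f i (t i) ∂Measure.pi (fun _ ↦ μ) =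
      (iteratedLIntegral μ (fun i x ↦ ENNReal.ofReal (f i x)) s).toReal := by
  have hsn := measurableSet_strictMonoTuples n hs
  rw [integral_eq_lintegral_of_nonneg_ae, iteratedLIntegral]
  · congr 1
    exact setLIntegral_congr_fun hsn fun t ht ↦
      ENNReal.ofReal_prod_of_nonneg fun i _ ↦ hnonneg i _ (ht.2 i)
  · exact ae_restrict_of_forall_mem hsn fun t ht ↦
      Finset.prod_nonneg fun i _ ↦ hnonneg i _ (ht.2 i)
  · exact Measurable.aestronglyMeasurable (by fun_prop)

end Ordered

section PowerSeries

theorem inv_one_sub_mul_tsum_mul_pow (c : ℕ → ℝ≥0∞) (q : ℝ≥0∞) :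
    (1 - q)⁻¹ * ∑' k, c k * q ^ k = ∑' n, (∑ k ∈ Finset.range (n + 1), c k) * q ^ n := by
  calc (1 - q)⁻¹ * ∑' k, c k * q ^ k
      = ∑' p : ℕ × ℕ, q ^ p.2 * (c p.1 * q ^ p.1) := by
        simp_rw [ENNReal.tsum_prod', ENNReal.tsum_mul_right, ENNReal.tsum_mul_left,
          ENNReal.tsum_geometric]
    _ = ∑' n, ∑ p ∈ Finset.HasAntidiagonal.antidiagonal n, q ^ p.2 * (c p.1 * q ^ p.1) := by
        rw [← Finset.HasAntidiagonal.sigmaAntidiagonalEquivProd.tsum_eq, ENNReal.tsum_sigma']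
        exact tsum_congr fun n ↦ Finset.tsum_subtype _ fun p : ℕ × ℕ ↦ q ^ p.2 * (c p.1 * q ^ p.1)
    _ = ∑' n, (∑ k ∈ Finset.range (n + 1), c k) * q ^ n := by
        refine tsum_congr fun n ↦ ?_
        rw [← Finset.Nat.sum_antidiagonal_eq_sum_range_succ (fun k _ ↦ c k), Finset.sum_mul]
        refine Finset.sum_congr rfl fun p hp ↦ ?_
        rw [← Finset.HasAntidiagonal.mem_antidiagonal.1 hp, pow_add]
        ring

theorem inv_one_sub_mul_tsum_mul_pow_succ (c : ℕ → ℝ≥0∞) (q : ℝ≥0∞) :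
    (1 - q)⁻¹ * ∑' k, c k * q ^ (k + 1) = ∑' n, (∑ k ∈ Finset.range n, c k) * q ^ n := by
  rw [tsum_eq_zero_add' (f := fun n ↦ _ * q ^ n) ENNReal.summable, Finset.sum_range_zero, zero_mul,
    zero_add]
  simp_rw [pow_succ, ← mul_assoc, ENNReal.tsum_mul_right]
  rw [← mul_assoc, inv_one_sub_mul_tsum_mul_pow]

theorem setLIntegral_Ioo_ofReal_pow (k : ℕ) {x : ℝ} (hx : 0 ≤ x) :
    ∫⁻ t in Set.Ioo 0 x, ENNReal.ofReal t ^ k =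
      (k + 1 : ℝ≥0∞)⁻¹ * ENNReal.ofReal x ^ (k + 1) := by
  have hint : IntegrableOn (fun t : ℝ ↦ t ^ k) (Set.Ioo 0 x) :=
    (continuous_pow k).continuousOn.integrableOn_Icc.mono_set Set.Ioo_subset_Icc_self
  calc ∫⁻ t in Set.Ioo 0 x, ENNReal.ofReal t ^ k
      = ∫⁻ t in Set.Ioo 0 x, ENNReal.ofReal (t ^ k) :=
        setLIntegral_congr_fun measurableSet_Ioo fun t ht ↦ (ENNReal.ofReal_pow ht.1.le k).symm
    _ = ENNReal.ofReal (∫ t in Set.Ioo 0 x, t ^ k) :=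
        (ofReal_integral_eq_lintegral_ofReal hint
          (ae_restrict_of_forall_mem measurableSet_Ioo fun t ht ↦ pow_nonneg ht.1.le k)).symm
    _ = ENNReal.ofReal ((k + 1 : ℝ)⁻¹ * x ^ (k + 1)) := by
        rw [← integral_Ioc_eq_integral_Ioo, ← intervalIntegral.integral_of_le hx, integral_pow,
          zero_pow k.succ_ne_zero, sub_zero, div_eq_inv_mul]
    _ = (k + 1 : ℝ≥0∞)⁻¹ * ENNReal.ofReal x ^ (k + 1) := by
        rw [ENNReal.ofReal_mul (by positivity), ENNReal.ofReal_pow hx,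
          ENNReal.ofReal_inv_of_pos (by positivity), ENNReal.ofReal_add k.cast_nonneg zero_le_one,
          ENNReal.ofReal_natCast, ENNReal.ofReal_one]

theorem setLIntegral_Ioo_tsum_mul_ofReal_pow (c : ℕ → ℝ≥0∞) {x : ℝ} (hx : 0 ≤ x) :
    ∫⁻ t in Set.Ioo 0 x, ∑' k, c k * ENNReal.ofReal t ^ k =
      ∑' k, c k * (k + 1 : ℝ≥0∞)⁻¹ * ENNReal.ofReal x ^ (k + 1) := by
  rw [lintegral_tsum fun k ↦ by fun_prop]
  refine tsum_congr fun k ↦ ?_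
  rw [lintegral_const_mul _ (by fun_prop), setLIntegral_Ioo_ofReal_pow k hx, mul_assoc]

end PowerSeries

section Block

variable {w : ℕ → ℝ → ℝ≥0∞} {m : ℕ} {c : ℕ → ℝ≥0∞}

theorem iteratedLIntegral_block_eq_tsum (hw : ∀ i, Measurable (w i))
    (hstart : ∀ t ∈ Set.Ioo (0 : ℝ) 1,
      w m t * iteratedLIntegral volume (fun i : Fin m ↦ w i) (Set.Ioo 0 t) =
        ∑' k, c k * ENNReal.ofReal t ^ k)
    (hinv : ∀ i > m, ∀ t ∈ Set.Ioo (0 : ℝ) 1, w i t = (ENNReal.ofReal t)⁻¹)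
    (r : ℕ) {x : ℝ} (hx : x ∈ Set.Icc (0 : ℝ) 1) :
    iteratedLIntegral volume (fun i : Fin (m + r + 1) ↦ w i) (Set.Ioo 0 x) =
      ∑' k, c k * ((k + 1 : ℝ≥0∞) ^ (r + 1))⁻¹ * ENNReal.ofReal x ^ (k + 1) := by
  induction r generalizing x with
  | zero =>
    rw [iteratedLIntegral_Ioo_succ hw, setLIntegral_congr_fun measurableSet_Ioo
      fun t ht ↦ hstart t ⟨ht.1, ht.2.trans_le hx.2⟩]
    simpa using setLIntegral_Ioo_tsum_mul_ofReal_pow c hx.1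
  | succ r ih =>
    have integrand_eq : ∀ t ∈ Set.Ioo 0 x,
        w (m + (r + 1)) t *
            iteratedLIntegral volume (fun i : Fin (m + (r + 1)) ↦ w i) (Set.Ioo 0 t) =
          ∑' k, c k * ((k + 1 : ℝ≥0∞) ^ (r + 1))⁻¹ * ENNReal.ofReal t ^ k := by
      intro t ht
      have ht1 : t < 1 := ht.2.trans_le hx.2
      have hcancel : (ENNReal.ofReal t)⁻¹ * ENNReal.ofReal t = 1 :=
        ENNReal.inv_mul_cancel (by simpa using ht.1) ENNReal.ofReal_ne_top
      rw [hinv _ (by omega) t ⟨ht.1, ht1⟩, ← add_assoc, ih ⟨ht.1.le, ht1.le⟩,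
        ← ENNReal.tsum_mul_left]
      refine tsum_congr fun k ↦ ?_
      rw [pow_succ' (ENNReal.ofReal t), mul_left_comm, ← mul_assoc (ENNReal.ofReal t)⁻¹, hcancel,
        one_mul]
    rw [iteratedLIntegral_Ioo_succ hw, setLIntegral_congr_fun measurableSet_Ioo integrand_eq,
      setLIntegral_Ioo_tsum_mul_ofReal_pow _ hx.1]
    refine tsum_congr fun k ↦ ?_
    rw [pow_succ (k + 1 : ℝ≥0∞) (r + 1),
      ENNReal.mul_inv (.inr (by finiteness)) (.inl (by finiteness)), mul_assoc (c k)]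

end Block

section MZVSum

/-- The nested sum `∑ ∏ i, (ℓ i)⁻¹ ^ α i` over `ℓ 0 < ⋯ < ℓ (n - 1)` in `s`, with values in
`[0, ∞]`; the multiple zeta value is the case `s = Set.Ioi 0`. -/
noncomputable def mzvSum {n : ℕ} (α : Fin n → ℕ) (s : Set ℕ) : ℝ≥0∞ :=
  iteratedLIntegral .count (fun i (ℓ : ℕ) ↦ ((ℓ : ℝ≥0∞) ^ α i)⁻¹) s

theorem mzv_eq_toReal_mzvSum {n : ℕ} (α : Fin n → ℕ) : mzv α = (mzvSum α (Set.Ioi 0)).toReal := by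
  rw [mzvSum, iteratedLIntegral, lintegral_countable _ (Set.to_countable _),
    ENNReal.tsum_toReal_eq]
  · refine tsum_congr fun ℓ ↦ ?_
    simp [ENNReal.toReal_prod, Measure.pi_singleton]
  · intro ℓ
    have hℓ (i : Fin n) : (ℓ.1 i : ℝ≥0∞) ≠ 0 := Nat.cast_ne_zero.2 (ℓ.2.2 i).ne'
    simp only [Measure.pi_singleton, Measure.count_singleton, Finset.prod_const_one, mul_one]
    exact ENNReal.prod_ne_top fun i _ ↦ ENNReal.inv_ne_top.2 (pow_ne_zero _ (hℓ i))

theorem setLIntegral_count_Ioi_zero (g : ℕ → ℝ≥0∞) :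
    ∫⁻ ℓ in Set.Ioi 0, g ℓ ∂.count = ∑' k, g (k + 1) := by
  rw [← lintegral_indicator measurableSet_Ioi, lintegral_count,
    tsum_eq_zero_add' ENNReal.summable]
  simp

theorem setLIntegral_count_Ioo_zero (g : ℕ → ℝ≥0∞) (N : ℕ) :
    ∫⁻ ℓ in Set.Ioo 0 (N + 1), g ℓ ∂.count = ∑ k ∈ Finset.range N, g (k + 1) := by
  rw [← Finset.coe_Ioo, lintegral_finset]
  simp only [Measure.count_singleton, mul_one]
  rw [Finset.range_eq_Ico, Finset.sum_Ico_add' g 0 N 1]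
  rfl

variable {n : ℕ} (α : Fin (n + 1) → ℕ)

theorem mzvSum_Ioi_zero_succ :
    mzvSum α (Set.Ioi 0) =
      ∑' k : ℕ, mzvSum (Fin.init α) (Set.Ioo 0 (k + 1)) * ((k + 1 : ℝ≥0∞) ^ α (Fin.last n))⁻¹ := by
  rw [mzvSum, iteratedLIntegral_succ (fun _ ↦ .of_discrete) measurableSet_Ioi,
    setLIntegral_count_Ioi_zero]
  refine tsum_congr fun k ↦ ?_
  rw [Set.Ioi_inter_Iio, mul_comm, Nat.cast_add_one]
  rfl

theorem mzvSum_Ioo_zero_succ (N : ℕ) :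
    mzvSum α (Set.Ioo 0 (N + 1)) =
      ∑ k ∈ Finset.range N,
        mzvSum (Fin.init α) (Set.Ioo 0 (k + 1)) * ((k + 1 : ℝ≥0∞) ^ α (Fin.last n))⁻¹ := by
  rw [mzvSum, iteratedLIntegral_succ (fun _ ↦ .of_discrete) measurableSet_Ioo,
    setLIntegral_count_Ioo_zero]
  refine Finset.sum_congr rfl fun k hk ↦ ?_
  have hkN : k + 1 ≤ N + 1 := Nat.succ_le_succ (Finset.mem_range.1 hk).le
  rw [Set.Ioo_inter_Iio, min_eq_right hkN, mul_comm, Nat.cast_add_one]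
  rfl

end MZVSum

section MZVForm

/-- The density of the form `ω_{i+1}` in the iterated integral for `ζ(α)`: it is `1 / (1 - t)` when
`i` is the start of one of the consecutive blocks of lengths `α 0, α 1, …`, and `1 / t` otherwise.
It is indexed by all of `ℕ`, so that appending a block does not change the index type. -/
noncomputable def mzvForm {n : ℕ} (α : Fin n → ℕ) (i : ℕ) (t : ℝ) : ℝ :=
  if ∃ j : Fin n, i = ∑ r ∈ Finset.Iio j, α r then (1 - t)⁻¹ else t⁻¹

/-- The iterated integral of the forms attached to `α` over `0 < t 0 < ⋯ < t (m - 1) < x`, where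
`m` is the weight of `α`, that is, the multiple polylogarithm `Li_α(x)`. -/
noncomputable def mzvIntegral {n : ℕ} (α : Fin n → ℕ) (x : ℝ) : ℝ≥0∞ :=
  iteratedLIntegral volume (fun (i : Fin (∑ i, α i)) t ↦ ENNReal.ofReal (mzvForm α i t))
    (Set.Ioo 0 x)

theorem measurable_mzvForm {n : ℕ} (α : Fin n → ℕ) (i : ℕ) : Measurable (mzvForm α i) := by
  unfold mzvForm
  split_ifs <;> fun_prop

theorem mzvForm_nonneg {n : ℕ} (α : Fin n → ℕ) (i : ℕ) {t : ℝ} (ht : t ∈ Set.Icc (0 : ℝ) 1) :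
    0 ≤ mzvForm α i t := by
  unfold mzvForm
  split_ifs
  exacts [inv_nonneg.2 (sub_nonneg.2 ht.2), inv_nonneg.2 ht.1]

theorem exists_eq_sum_Iio_succ_iff {M : Type*} [AddCommMonoid M] {n : ℕ}
    (α : Fin (n + 1) → M) (i : M) :
    (∃ j : Fin (n + 1), i = ∑ r ∈ Finset.Iio j, α r) ↔
      (∃ j : Fin n, i = ∑ r ∈ Finset.Iio j, Fin.init α r) ∨ i = ∑ r, Fin.init α r := by
  simp only [Fin.exists_fin_succ', Fin.Iio_castSucc, Fin.Iio_last_eq_map, Finset.sum_map]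
  rfl

variable {n : ℕ} (α : Fin (n + 1) → ℕ)

theorem mzvForm_init {i : ℕ} (hi : i < ∑ r, Fin.init α r) :
    mzvForm α i = mzvForm (Fin.init α) i := by
  funext t
  simp only [mzvForm, exists_eq_sum_Iio_succ_iff, hi.ne, or_false]

theorem mzvForm_sum_init (t : ℝ) : mzvForm α (∑ r, Fin.init α r) t = (1 - t)⁻¹ :=
  if_pos ((exists_eq_sum_Iio_succ_iff α _).2 (.inr rfl))

theorem mzvForm_of_sum_init_lt {i : ℕ} (hi : ∑ r, Fin.init α r < i) (t : ℝ) :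
    mzvForm α i t = t⁻¹ := by
  refine if_neg fun h ↦ ?_
  obtain ⟨j, rfl⟩ | rfl := (exists_eq_sum_Iio_succ_iff α i).1 h
  · exact hi.not_ge (Finset.sum_le_sum_of_subset (Finset.subset_univ _))
  · exact hi.false

theorem mzvIntegral_succ_eq_tsum {c : ℕ → ℝ≥0∞} (hlast : 1 ≤ α (Fin.last n))
    (hinit : ∀ t ∈ Set.Ioo (0 : ℝ) 1,
      (1 - ENNReal.ofReal t)⁻¹ * mzvIntegral (Fin.init α) t = ∑' k, c k * ENNReal.ofReal t ^ k)
    {x : ℝ} (hx : x ∈ Set.Icc (0 : ℝ) 1) :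
    mzvIntegral α x =
      ∑' k, c k * ((k + 1 : ℝ≥0∞) ^ α (Fin.last n))⁻¹ * ENNReal.ofReal x ^ (k + 1) := by
  obtain ⟨r, hr⟩ := Nat.exists_eq_add_of_le' hlast
  have hsum : ∑ i, α i = ∑ i, Fin.init α i + r + 1 := by
    rw [Fin.sum_univ_castSucc, hr, add_assoc]
    rfl
  rw [mzvIntegral, hsum, hr]
  refine iteratedLIntegral_block_eq_tsum (w := fun i t ↦ ENNReal.ofReal (mzvForm α i t))
    (fun i ↦ (measurable_mzvForm α i).ennreal_ofReal) (fun t ht ↦ ?_) (fun i hi t ht ↦ ?_) r hx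
  · have hforms : (fun (i : Fin (∑ r, Fin.init α r)) t ↦ ENNReal.ofReal (mzvForm α i t)) =
        fun (i : Fin (∑ r, Fin.init α r)) t ↦ ENNReal.ofReal (mzvForm (Fin.init α) i t) := by
      funext i
      rw [mzvForm_init α i.2]
    rw [hforms, mzvForm_sum_init, ENNReal.ofReal_inv_of_pos (sub_pos.2 ht.2),
      ENNReal.ofReal_sub _ ht.1.le, ENNReal.ofReal_one]
    exact hinit t ht
  · simp only [mzvForm_of_sum_init_lt α hi, ENNReal.ofReal_inv_of_pos ht.1]

end MZVForm

theorem inv_one_sub_mul_mzvIntegral {n : ℕ} (α : Fin n → ℕ) (hα : ∀ i, 1 ≤ α i) {t : ℝ}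
    (ht : t ∈ Set.Ioo (0 : ℝ) 1) :
    (1 - ENNReal.ofReal t)⁻¹ * mzvIntegral α t =
      ∑' k : ℕ, mzvSum α (Set.Ioo 0 (k + 1)) * ENNReal.ofReal t ^ k := by
  induction n generalizing t with
  | zero =>
    have hint : mzvIntegral α t = 1 := iteratedLIntegral_fin_zero _ _ _
    have hsum (s : Set ℕ) : mzvSum α s = 1 := iteratedLIntegral_fin_zero _ _ _
    simp only [hint, hsum, mul_one, one_mul, ENNReal.tsum_geometric]
  | succ n ih =>
    rw [mzvIntegral_succ_eq_tsum α (hα _)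
      (fun t ht ↦ ih (Fin.init α) (fun i ↦ hα i.castSucc) ht) ⟨ht.1.le, ht.2.le⟩,
      inv_one_sub_mul_tsum_mul_pow_succ]
    simp only [mzvSum_Ioo_zero_succ]

theorem mzvSum_Ioi_zero_eq_mzvIntegral_one {n : ℕ} (α : Fin n → ℕ) (hα : ∀ i, 1 ≤ α i) :
    mzvSum α (Set.Ioi 0) = mzvIntegral α 1 := by
  cases n with
  | zero => exact (iteratedLIntegral_fin_zero _ _ _).trans (iteratedLIntegral_fin_zero _ _ _).symm
  | succ n =>
    rw [mzvSum_Ioi_zero_succ, mzvIntegral_succ_eq_tsum α (hα _)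
      (fun t ht ↦ inv_one_sub_mul_mzvIntegral (Fin.init α) (fun i ↦ hα i.castSucc) ht)
      ⟨zero_le_one, le_rfl⟩]
    simp only [ENNReal.ofReal_one, one_pow, mul_one]

theorem mzv_eq_iterated_integral (n : ℕ) (α : Fin (n + 1) → ℕ)
    (hpos : ∀ i, 1 ≤ α i) (hlast : 2 ≤ α (Fin.last n)) :
    mzv α =
      ∫ t in orderedSimplex (∑ i, α i),
        ∏ i : Fin (∑ i, α i),
          if ∃ j : Fin (n + 1), (i : ℕ) = ∑ r ∈ Finset.Iio j, α r
          then (1 - t i)⁻¹ else (t i)⁻¹ := by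
  rw [mzv_eq_toReal_mzvSum, mzvSum_Ioi_zero_eq_mzvIntegral_one α hpos]
  exact (setIntegral_strictMonoTuples_eq_toReal
    (f := fun (i : Fin (∑ i, α i)) ↦ mzvForm α i) (fun i ↦ measurable_mzvForm α i)
    measurableSet_Ioo fun i t ht ↦ mzvForm_nonneg α i ⟨ht.1.le, ht.2.le⟩).symm
end

section
/- Sum formula for multiple zeta values: for integers n ≥ 1 and m ≥ n+1, the sum of ζ(α_1,...,α_n) over all tuples of positive integers (α_1,...,α_n) with α_1 + ... + α_n = m and α_n ≥ 2 equals ζ(m). -/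
/-!
Expanding every `1 / (ℓ - x)` into a geometric series shows that the generating functions over
the weight `n + 2 + j`, with `x ^ j` as the monomial, of the two sides of the sum formula are
`∑_{0 < ℓ₀ < ⋯ < ℓₙ} 1 / ((ℓ₀ - x) ⋯ (ℓₙ - x) ℓₙ)` and `∑_{k > 0} 1 / ((k - x) k ^ (n + 1))`.

These agree by a connected sum. The connector `C(m, k) = Γ(m + 1 - x) Γ(k + 1 - x) /
(Γ(1 - x) Γ(m + k + 1 - x))` is symmetric, satisfies `C(0, k) = 1`, and telescopes:
`∑_{m > a} C(m, k) / (m - x) = C(a, k) / k`. With `a = 0` and the variables exchanged this reads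
`1 / ℓₙ = ∑_{k > 0} C(ℓₙ, k) / (k - x)`; once `k` is brought in this way, summing over
`ℓₙ, …, ℓ₀` in turn replaces each `1 / (ℓᵢ - x)` by `1 / k`, until only `C(0, k) = 1` is left.

All series have nonnegative terms, so the rearrangements take place in `ℝ≥0∞`.
-/

open Filter Polynomial
open scoped ENNReal NNReal Topology

namespace SumFormula

section ENNReal

lemma inv_sub_eq_tsum {y : ℝ≥0∞} (x : ℝ≥0∞) (hy₀ : y ≠ 0) (hy : y ≠ ∞) :
    (y - x)⁻¹ = ∑' j : ℕ, y⁻¹ ^ (j + 1) * x ^ j := by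
  have factor : y - x = y * (1 - y⁻¹ * x) := by
    rw [ENNReal.mul_sub fun _ _ ↦ hy, mul_one, ENNReal.mul_inv_cancel_left hy₀ hy]
  rw [factor, ENNReal.mul_inv (.inl hy₀) (.inl hy), ← ENNReal.tsum_geometric,
    ← ENNReal.tsum_mul_left]
  exact tsum_congr fun j ↦ by rw [mul_pow, pow_succ', mul_assoc]

lemma tsum_ofReal_sub_succ {f : ℕ → ℝ} (hf : Antitone f) (hlim : Tendsto f atTop (𝓝 0)) :
    ∑' i, ENNReal.ofReal (f i - f (i + 1)) = ENNReal.ofReal (f 0) := by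
  have nonneg (i : ℕ) : 0 ≤ f i - f (i + 1) := sub_nonneg.2 (hf i.le_succ)
  have hasSum : HasSum (fun i ↦ f i - f (i + 1)) (f 0) := by
    rw [hasSum_iff_tendsto_nat_of_nonneg nonneg]
    simpa only [Finset.sum_range_sub', sub_zero] using hlim.const_sub (f 0)
  rw [← ENNReal.ofReal_tsum_of_nonneg nonneg hasSum.summable, hasSum.tsum_eq]

lemma prod_tsum_eq_tsum_prod {n : ℕ} {κ : Fin n → Type*} (f : ∀ i, κ i → ℝ≥0∞) :
    ∏ i, ∑' a, f i a = ∑' a : ∀ i, κ i, ∏ i, f i (a i) := by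
  induction n with
  | zero => rw [tsum_fintype, Fintype.sum_unique]; simp
  | succ n ih =>
    simp_rw [← (Fin.consEquiv κ).tsum_eq, ENNReal.tsum_prod', Fin.prod_univ_succ, ih,
      ← ENNReal.tsum_mul_right, ← ENNReal.tsum_mul_left]
    rfl

lemma tsum_mul_pow_eq_tsum_fiber {ι : Type*} (f : ι → ℝ≥0∞) (deg : ι → ℕ) (x : ℝ≥0∞) :
    ∑' a, f a * x ^ deg a = ∑' j, (∑' a : {a // deg a = j}, f a) * x ^ j := by
  rw [← ENNReal.tsum_fiberwise _ deg]
  refine tsum_congr fun j ↦ ?_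
  rw [← ENNReal.tsum_mul_right]
  exact tsum_congr fun a ↦ by rw [a.2]

end ENNReal

section PowerSeries

variable {c d : ℕ → ℝ≥0∞}

lemma tsum_mul_pow_eq_add (c : ℕ → ℝ≥0∞) (x : ℝ≥0∞) :
    ∑' j, c j * x ^ j = c 0 + x * ∑' j, c (j + 1) * x ^ j := by
  rw [tsum_eq_zero_add' ENNReal.summable, pow_zero, mul_one, ← ENNReal.tsum_mul_left]
  exact congrArg _ (tsum_congr fun j ↦ by ring)

lemma tsum_shift_mul_pow_ne_top {x : ℝ≥0∞} (hx : x ≠ 0) (hc : ∑' j, c j * x ^ j ≠ ∞) :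
    ∑' j, c (j + 1) * x ^ j ≠ ∞ := by
  rw [tsum_mul_pow_eq_add, ENNReal.add_ne_top] at hc
  exact (ENNReal.lt_top_of_mul_ne_top_right hc.2 hx).ne

lemma tendsto_tsum_mul_pow_nhdsGT_zero
    (hc : ∀ᶠ x : ℝ≥0 in 𝓝[>] 0, ∑' j, c j * (x : ℝ≥0∞) ^ j ≠ ∞) :
    Tendsto (fun x : ℝ≥0 ↦ ∑' j, c j * (x : ℝ≥0∞) ^ j) (𝓝[>] 0) (𝓝 (c 0)) := by
  obtain ⟨r, hr, hr₀⟩ := (hc.and self_mem_nhdsWithin).exists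
  set B := ∑' j, c (j + 1) * (r : ℝ≥0∞) ^ j
  have hB : B ≠ ∞ := tsum_shift_mul_pow_ne_top (ENNReal.coe_ne_zero.2 (ne_of_gt hr₀)) hr
  have upper : Tendsto (fun x : ℝ≥0 ↦ c 0 + x * B) (𝓝[>] 0) (𝓝 (c 0)) := by
    have : Tendsto (fun x : ℝ≥0 ↦ (x : ℝ≥0∞)) (𝓝[>] 0) (𝓝 0) :=
      (ENNReal.continuous_coe.tendsto' 0 0 rfl).mono_left nhdsWithin_le_nhds
    simpa using (ENNReal.Tendsto.mul_const this (.inr hB)).const_add (c 0)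
  refine tendsto_of_tendsto_of_tendsto_of_le_of_le' tendsto_const_nhds upper ?_ ?_
  · exact .of_forall fun x ↦ (tsum_mul_pow_eq_add c x).symm ▸ le_self_add
  · filter_upwards [Ioo_mem_nhdsGT hr₀] with x hx
    rw [tsum_mul_pow_eq_add]
    gcongr
    exact ENNReal.tsum_le_tsum fun j ↦ by gcongr; exact hx.2.le

lemma coeff_zero_eq_of_eventually_tsum_mul_pow_eq
    (hd : ∀ᶠ x : ℝ≥0 in 𝓝[>] 0, ∑' j, d j * (x : ℝ≥0∞) ^ j ≠ ∞)
    (hcd : ∀ᶠ x : ℝ≥0 in 𝓝[>] 0,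
      ∑' j, c j * (x : ℝ≥0∞) ^ j = ∑' j, d j * (x : ℝ≥0∞) ^ j) :
    c 0 = d 0 := by
  have hc : ∀ᶠ x : ℝ≥0 in 𝓝[>] 0, ∑' j, c j * (x : ℝ≥0∞) ^ j ≠ ∞ := by
    filter_upwards [hd, hcd] with x hx heq
    rwa [heq]
  exact tendsto_nhds_unique_of_eventuallyEq
    (tendsto_tsum_mul_pow_nhdsGT_zero hc) (tendsto_tsum_mul_pow_nhdsGT_zero hd) hcd

lemma coeff_eq_of_eventually_tsum_mul_pow_eq
    (hd : ∀ᶠ x : ℝ≥0 in 𝓝[>] 0, ∑' j, d j * (x : ℝ≥0∞) ^ j ≠ ∞)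
    (hcd : ∀ᶠ x : ℝ≥0 in 𝓝[>] 0,
      ∑' j, c j * (x : ℝ≥0∞) ^ j = ∑' j, d j * (x : ℝ≥0∞) ^ j) (j : ℕ) :
    c j = d j := by
  have zeroth := coeff_zero_eq_of_eventually_tsum_mul_pow_eq hd hcd
  induction j generalizing c d with
  | zero => exact zeroth
  | succ _ ih =>
    have shift_hd : ∀ᶠ x : ℝ≥0 in 𝓝[>] 0, ∑' j, d (j + 1) * (x : ℝ≥0∞) ^ j ≠ ∞ := by
      filter_upwards [hd, self_mem_nhdsWithin] with x hx hx₀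
      exact tsum_shift_mul_pow_ne_top (ENNReal.coe_ne_zero.2 (ne_of_gt hx₀)) hx
    have shift_hcd : ∀ᶠ x : ℝ≥0 in 𝓝[>] 0,
        ∑' j, c (j + 1) * (x : ℝ≥0∞) ^ j = ∑' j, d (j + 1) * (x : ℝ≥0∞) ^ j := by
      filter_upwards [hd, hcd, self_mem_nhdsWithin] with x hx heq hx₀
      rw [tsum_mul_pow_eq_add d, ENNReal.add_ne_top] at hx
      rwa [tsum_mul_pow_eq_add c, tsum_mul_pow_eq_add d, zeroth, ENNReal.add_right_inj hx.1,
        ENNReal.mul_right_inj (ENNReal.coe_ne_zero.2 (ne_of_gt hx₀)) ENNReal.coe_ne_top] at heq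
    exact ih shift_hd shift_hcd (coeff_zero_eq_of_eventually_tsum_mul_pow_eq shift_hd shift_hcd)

end PowerSeries

section Connector

/-- Seki and Yamamoto's connector `m! n! / (m + n)!`, deformed by replacing each factorial `k!`
with `(1 - x)(2 - x)⋯(k - x)`. -/
noncomputable def connector (x : ℝ) (m n : ℕ) : ℝ :=
  (ascPochhammer ℝ m).eval (1 - x) * (ascPochhammer ℝ n).eval (1 - x) /
    (ascPochhammer ℝ (m + n)).eval (1 - x)

variable {x : ℝ}

lemma natCast_add_one_sub_pos (hx : x < 1) (m : ℕ) : 0 < (m + 1 - x : ℝ) := by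
  linarith [m.cast_nonneg (α := ℝ)]

lemma connector_comm (x : ℝ) (m n : ℕ) : connector x m n = connector x n m := by
  rw [connector, connector, mul_comm, add_comm]

lemma connector_pos (hx : x < 1) (m n : ℕ) : 0 < connector x m n := by
  have pos (k : ℕ) := ascPochhammer_pos k (1 - x) (sub_pos.2 hx)
  exact div_pos (mul_pos (pos m) (pos n)) (pos _)

lemma connector_zero_left (hx : x < 1) (n : ℕ) : connector x 0 n = 1 := by
  simp [connector, (ascPochhammer_pos n (1 - x) (sub_pos.2 hx)).ne']

lemma connector_succ_left (x : ℝ) (m n : ℕ) :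
    connector x (m + 1) n = connector x m n * ((m + 1 - x) / (m + n + 1 - x)) := by
  rw [connector, connector, add_right_comm, ascPochhammer_succ_eval, ascPochhammer_succ_eval,
    div_mul_div_comm]
  push_cast
  congr 1 <;> ring

lemma connector_sub_succ_left (hx : x < 1) (m n : ℕ) :
    connector x m n - connector x (m + 1) n = n * ((m + 1 - x)⁻¹ * connector x (m + 1) n) := by
  have h₁ : (m + 1 - x : ℝ) ≠ 0 := (natCast_add_one_sub_pos hx m).ne'
  have h₂ : (m + n + 1 - x : ℝ) ≠ 0 := mod_cast (natCast_add_one_sub_pos hx (m + n)).ne'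
  rw [connector_succ_left]
  field_simp
  ring

lemma antitone_connector_left (hx : x < 1) (n : ℕ) : Antitone fun m ↦ connector x m n := by
  refine antitone_nat_of_succ_le fun m ↦ sub_nonneg.1 ?_
  rw [connector_sub_succ_left hx]
  exact mul_nonneg n.cast_nonneg (mul_nonneg
    (inv_nonneg.2 (natCast_add_one_sub_pos hx m).le) (connector_pos hx (m + 1) n).le)

lemma connector_one_right (hx : x < 1) (m : ℕ) :
    connector x m 1 = (1 - x) / (m + 1 - x) := by
  rw [connector_comm, connector_succ_left, connector_zero_left hx]
  simp

lemma tendsto_connector_atTop (hx : x < 1) {n : ℕ} (hn : n ≠ 0) :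
    Tendsto (fun m ↦ connector x m n) atTop (𝓝 0) := by
  have bound (m : ℕ) : connector x m n ≤ (1 - x) / (m + 1 - x) := by
    rw [← connector_one_right hx, connector_comm x m n, connector_comm x m 1]
    exact antitone_connector_left hx m (Nat.one_le_iff_ne_zero.2 hn)
  refine squeeze_zero (fun m ↦ (connector_pos hx m n).le) bound ?_
  simp_rw [add_sub_assoc]
  exact (tendsto_natCast_atTop_atTop.atTop_add tendsto_const_nhds).const_div_atTop _

end Connector

section Transport

variable {x : ℝ≥0}

lemma inv_natCast_succ_sub_coe (hx : x < 1) (m : ℕ) :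
    (((m + 1 : ℕ) : ℝ≥0∞) - x)⁻¹ = ENNReal.ofReal ((m + 1 - x : ℝ)⁻¹) := by
  have pos : 0 < (m + 1 - x : ℝ) := natCast_add_one_sub_pos hx m
  rw [ENNReal.ofReal_inv_of_pos pos, ENNReal.ofReal_sub _ x.coe_nonneg, ENNReal.ofReal_coe_nnreal,
    ← Nat.cast_succ, ENNReal.ofReal_natCast]

lemma tsum_inv_sub_mul_connector (hx : x < 1) (a : ℕ) {n : ℕ} (hn : n ≠ 0) :
    ∑' i : ℕ, (((a + i + 1 : ℕ) : ℝ≥0∞) - x)⁻¹ * ENNReal.ofReal (connector x (a + i + 1) n) =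
      (n : ℝ≥0∞)⁻¹ * ENNReal.ofReal (connector x a n) := by
  have telescope : ∑' i : ℕ, ENNReal.ofReal (connector x (a + i) n - connector x (a + i + 1) n) =
      ENNReal.ofReal (connector x a n) := by
    refine tsum_ofReal_sub_succ (f := fun i ↦ connector x (a + i) n)
      (fun i j hij ↦ antitone_connector_left hx n (by lia)) ?_
    simp_rw [add_comm a]
    exact (tendsto_connector_atTop hx hn).comp (tendsto_add_atTop_nat a)
  have hn' : (n : ℝ≥0∞) ≠ 0 := Nat.cast_ne_zero.2 hn
  rw [← telescope, ← ENNReal.tsum_mul_left]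
  refine tsum_congr fun i ↦ ?_
  rw [connector_sub_succ_left (NNReal.coe_lt_one.2 hx), ENNReal.ofReal_mul n.cast_nonneg,
    ENNReal.ofReal_natCast, ENNReal.inv_mul_cancel_left hn' (ENNReal.natCast_ne_top n),
    ENNReal.ofReal_mul' (connector_pos (NNReal.coe_lt_one.2 hx) _ n).le,
    inv_natCast_succ_sub_coe hx]

lemma tsum_inv_sub_mul_connector_eq_inv (hx : x < 1) {m : ℕ} (hm : m ≠ 0) :
    ∑' k : ℕ, (((k + 1 : ℕ) : ℝ≥0∞) - x)⁻¹ * ENNReal.ofReal (connector x m (k + 1)) =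
      (m : ℝ≥0∞)⁻¹ := by
  simpa [connector_zero_left (NNReal.coe_lt_one.2 hx), connector_comm x m] using
    tsum_inv_sub_mul_connector hx 0 hm

end Transport

lemma strictMono_snoc {α : Type*} [Preorder α] {n : ℕ} {f : Fin n → α} {a : α}
    (hf : StrictMono f) (ha : ∀ i, f i < a) : StrictMono (Fin.snoc f a : Fin (n + 1) → α) := by
  intro i j hij
  induction j using Fin.lastCases with
  | last =>
    obtain ⟨i, rfl⟩ := Fin.exists_castSucc_eq.2 hij.ne
    simpa using ha i
  | cast j =>
    obtain ⟨i, rfl⟩ := Fin.exists_castSucc_eq.2 (hij.trans (Fin.castSucc_lt_last j)).ne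
    simpa using hf (Fin.castSucc_lt_castSucc_iff.1 hij)

/-- The summation range `0 < ℓ₀ < ⋯ < ℓ_{n-1}` of a multiple zeta value of depth `n`. -/
abbrev IndexTuple (n : ℕ) : Type :=
  {ℓ : Fin n → ℕ // StrictMono ℓ ∧ ∀ i, 0 < ℓ i}

namespace IndexTuple

variable {n : ℕ}

instance : Unique (IndexTuple 0) where
  default := ⟨Fin.elim0, fun i ↦ i.elim0, fun i ↦ i.elim0⟩
  uniq _ := Subtype.ext (Subsingleton.elim _ _)

/-- The largest entry of an index tuple, with value `0` on the empty tuple. -/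
def max (ℓ : IndexTuple n) : ℕ := Finset.univ.sup ℓ.1

lemma max_eq_last (ℓ : IndexTuple (n + 1)) : ℓ.max = ℓ.1 (Fin.last n) :=
  le_antisymm (Finset.sup_le fun i _ ↦ ℓ.2.1.monotone i.le_last)
    (Finset.le_sup (Finset.mem_univ _))

/-- The tuple `ℓ` extended by the new largest entry `ℓ.max + i + 1`. -/
def snoc (ℓ : IndexTuple n) (i : ℕ) : IndexTuple (n + 1) :=
  ⟨Fin.snoc ℓ.1 (ℓ.max + i + 1),
    strictMono_snoc ℓ.2.1 fun j ↦ by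
      have : ℓ.1 j ≤ ℓ.max := Finset.le_sup (Finset.mem_univ j)
      lia,
    Fin.lastCases (by simp) (by simpa using ℓ.2.2)⟩

/-- The tuple `ℓ` without its largest entry. -/
def dropMax (ℓ : IndexTuple (n + 1)) : IndexTuple n :=
  ⟨ℓ.1 ∘ Fin.castSucc, ℓ.2.1.comp Fin.strictMono_castSucc, fun i ↦ ℓ.2.2 i.castSucc⟩

lemma dropMax_snoc (ℓ : IndexTuple n) (i : ℕ) : (ℓ.snoc i).dropMax = ℓ :=
  Subtype.ext (Fin.init_snoc (α := fun _ ↦ ℕ) _ _)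

lemma max_snoc (ℓ : IndexTuple n) (i : ℕ) : (ℓ.snoc i).max = ℓ.max + i + 1 := by
  simp [max_eq_last, snoc]

lemma max_dropMax_lt_max (ℓ : IndexTuple (n + 1)) : ℓ.dropMax.max < ℓ.max := by
  rw [max_eq_last]
  exact (Finset.sup_lt_iff (ℓ.2.2 _)).2 fun i _ ↦ ℓ.2.1 i.castSucc_lt_last

lemma snoc_dropMax (ℓ : IndexTuple (n + 1)) : ℓ.dropMax.snoc (ℓ.max - ℓ.dropMax.max - 1) = ℓ := by
  have last : ℓ.dropMax.max + (ℓ.max - ℓ.dropMax.max - 1) + 1 = ℓ.1 (Fin.last n) := by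
    have := ℓ.max_dropMax_lt_max
    rw [← max_eq_last]
    lia
  apply Subtype.ext
  simp only [snoc, last]
  exact Fin.snoc_init_self _

/-- Splitting off the largest entry, encoded by its distance to the second largest one. -/
def snocEquiv (n : ℕ) : IndexTuple n × ℕ ≃ IndexTuple (n + 1) where
  toFun p := p.1.snoc p.2
  invFun ℓ := (ℓ.dropMax, ℓ.max - ℓ.dropMax.max - 1)
  left_inv p := Prod.ext (dropMax_snoc _ _) (by simp only [dropMax_snoc, max_snoc]; lia)
  right_inv ℓ := ℓ.snoc_dropMax

lemma tsum_succ (f : IndexTuple (n + 1) → ℝ≥0∞) :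
    ∑' ℓ, f ℓ = ∑' (ℓ : IndexTuple n) (i : ℕ), f (ℓ.snoc i) := by
  rw [← (snocEquiv n).tsum_eq, ENNReal.tsum_prod']
  rfl

lemma prod_snoc {M : Type*} [CommMonoid M] (ℓ : IndexTuple n) (i : ℕ) (w : ℕ → M) :
    ∏ j, w ((ℓ.snoc i).1 j) = (∏ j, w (ℓ.1 j)) * w (ℓ.max + i + 1) := by
  simp [snoc, Fin.prod_univ_castSucc]

end IndexTuple

section ConnectedSum

variable {x : ℝ≥0}

lemma tsum_prod_inv_sub_mul_connector (hx : x < 1) (n : ℕ) {k : ℕ} (hk : k ≠ 0) :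
    ∑' ℓ : IndexTuple n, (∏ i, ((ℓ.1 i : ℝ≥0∞) - x)⁻¹) * ENNReal.ofReal (connector x ℓ.max k) =
      (k : ℝ≥0∞)⁻¹ ^ n := by
  induction n with
  | zero =>
    rw [tsum_fintype, Fintype.sum_unique]
    simp [IndexTuple.max, connector_zero_left (NNReal.coe_lt_one.2 hx)]
  | succ n ih =>
    simp_rw [IndexTuple.tsum_succ, IndexTuple.max_snoc,
      IndexTuple.prod_snoc _ _ fun m ↦ ((m : ℝ≥0∞) - x)⁻¹, mul_assoc, ENNReal.tsum_mul_left,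
      tsum_inv_sub_mul_connector hx _ hk, mul_left_comm _ (k : ℝ≥0∞)⁻¹, ENNReal.tsum_mul_left,
      ih, pow_succ']

lemma tsum_prod_inv_sub_mul_inv_last (hx : x < 1) (n : ℕ) :
    ∑' ℓ : IndexTuple (n + 1),
        (∏ i, ((ℓ.1 i : ℝ≥0∞) - x)⁻¹) * (ℓ.1 (Fin.last n) : ℝ≥0∞)⁻¹ =
      ∑' k : ℕ, (((k + 1 : ℕ) : ℝ≥0∞) - x)⁻¹ * ((k + 1 : ℕ) : ℝ≥0∞)⁻¹ ^ (n + 1) := by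
  have connect (ℓ : IndexTuple (n + 1)) : (ℓ.1 (Fin.last n) : ℝ≥0∞)⁻¹ =
      ∑' k : ℕ, (((k + 1 : ℕ) : ℝ≥0∞) - x)⁻¹ * ENNReal.ofReal (connector x ℓ.max (k + 1)) := by
    rw [ℓ.max_eq_last, tsum_inv_sub_mul_connector_eq_inv hx (ℓ.2.2 _).ne']
  simp_rw [connect, ← ENNReal.tsum_mul_left]
  rw [ENNReal.tsum_comm]
  simp_rw [mul_left_comm, ENNReal.tsum_mul_left,
    tsum_prod_inv_sub_mul_connector hx _ (Nat.succ_ne_zero _)]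

end ConnectedSum

section Values

variable {n : ℕ}

/-- The multiple zeta value as an extended nonnegative real, so that it is meaningful for
divergent exponents and sums can be rearranged freely. -/
noncomputable def emzv (α : Fin n → ℕ) : ℝ≥0∞ :=
  ∑' ℓ : IndexTuple n, ∏ i, (ℓ.1 i : ℝ≥0∞)⁻¹ ^ α i

lemma natCast_inv_entry_ne_top (ℓ : IndexTuple n) (i : Fin n) : (ℓ.1 i : ℝ≥0∞)⁻¹ ≠ ∞ :=
  ENNReal.inv_ne_top.2 (Nat.cast_ne_zero.2 (ℓ.2.2 i).ne')

lemma mzv_eq_toReal_emzv (α : Fin n → ℕ) : mzv α = (emzv α).toReal := by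
  rw [emzv, ENNReal.tsum_toReal_eq fun ℓ ↦
    ENNReal.prod_ne_top fun i _ ↦ ENNReal.pow_ne_top (natCast_inv_entry_ne_top ℓ i)]
  simp [mzv, ENNReal.toReal_prod]

lemma emzv_depth_one (m : ℕ) : emzv ![m] = ∑' k : ℕ, ((k + 1 : ℕ) : ℝ≥0∞)⁻¹ ^ m := by
  rw [emzv, IndexTuple.tsum_succ, tsum_fintype, Fintype.sum_unique]
  simp [IndexTuple.snoc, IndexTuple.max, Fin.snoc]

lemma antitone_emzv_depth_one : Antitone fun m ↦ emzv ![m] := by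
  intro l m hlm
  simp only [emzv_depth_one]
  refine ENNReal.tsum_le_tsum fun k ↦ pow_le_pow_right_of_le_one' ?_ hlm
  exact ENNReal.inv_le_one.2 (Nat.one_le_cast.2 (by lia))

lemma emzv_depth_one_ne_top {m : ℕ} (hm : 2 ≤ m) : emzv ![m] ≠ ∞ := by
  have summable : Summable fun k : ℕ ↦ (((k + 1 : ℕ) : ℝ≥0)⁻¹) ^ m := by
    rw [← NNReal.summable_coe]
    simpa using (summable_nat_add_iff 1).2 (Real.summable_nat_pow_inv.2 hm)
  rw [emzv_depth_one]
  convert ENNReal.tsum_coe_ne_top_iff_summable.2 summable using 4 with k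
  rw [ENNReal.coe_pow, ENNReal.coe_inv (by positivity), ENNReal.coe_natCast]

lemma tsum_emzv_depth_one_mul_pow_ne_top {x : ℝ≥0} (hx : x < 1) {m : ℕ} (hm : 2 ≤ m) :
    ∑' j : ℕ, emzv ![m + j] * (x : ℝ≥0∞) ^ j ≠ ∞ := by
  have bound : ∑' j : ℕ, emzv ![m + j] * (x : ℝ≥0∞) ^ j ≤ emzv ![m] * (1 - (x : ℝ≥0∞))⁻¹ := by
    rw [← ENNReal.tsum_geometric, ← ENNReal.tsum_mul_left]
    gcongr with j
    exact antitone_emzv_depth_one (Nat.le_add_right m j)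
  have : (1 - (x : ℝ≥0∞))⁻¹ ≠ ∞ :=
    ENNReal.inv_ne_top.2 (tsub_pos_of_lt (ENNReal.coe_lt_one_iff.2 hx)).ne'
  exact ne_top_of_le_ne_top (ENNReal.mul_ne_top (emzv_depth_one_ne_top hm) this) bound

lemma tsum_emzv_depth_one_mul_pow (x : ℝ≥0∞) (n : ℕ) :
    ∑' j : ℕ, emzv ![n + 1 + j] * x ^ j =
      ∑' k : ℕ, (((k + 1 : ℕ) : ℝ≥0∞) - x)⁻¹ * ((k + 1 : ℕ) : ℝ≥0∞)⁻¹ ^ n := by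
  simp_rw [emzv_depth_one, ← ENNReal.tsum_mul_right]
  rw [ENNReal.tsum_comm]
  refine tsum_congr fun k ↦ ?_
  rw [inv_sub_eq_tsum x (Nat.cast_ne_zero.2 k.succ_ne_zero) (ENNReal.natCast_ne_top _),
    ← ENNReal.tsum_mul_right]
  exact tsum_congr fun j ↦ by ring

lemma tsum_emzv_mul_pow (x : ℝ≥0∞) (β : Fin n → ℕ) :
    ∑' j : ℕ, (∑' a : {a : Fin n → ℕ // ∑ i, a i = j}, emzv (a.1 + (1 + β))) * x ^ j =
      ∑' ℓ : IndexTuple n, (∏ i, ((ℓ.1 i : ℝ≥0∞) - x)⁻¹) * ∏ i, (ℓ.1 i : ℝ≥0∞)⁻¹ ^ β i := by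
  rw [← tsum_mul_pow_eq_tsum_fiber (fun a ↦ emzv (a + (1 + β))) fun a : Fin n → ℕ ↦ ∑ i, a i]
  simp_rw [emzv, ← ENNReal.tsum_mul_right]
  rw [ENNReal.tsum_comm]
  refine tsum_congr fun ℓ ↦ ?_
  simp_rw [fun i ↦ inv_sub_eq_tsum x (Nat.cast_ne_zero.2 (ℓ.2.2 i).ne') (ENNReal.natCast_ne_top _),
    prod_tsum_eq_tsum_prod, ← ENNReal.tsum_mul_right]
  refine tsum_congr fun a ↦ ?_
  simp only [Pi.add_apply, Pi.one_apply, ← add_assoc, pow_add _ (_ + 1), Finset.prod_mul_distrib,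
    Finset.prod_pow_eq_pow_sum]
  ring

end Values

section Admissible

/-- Adding `b` identifies the exponents of weight `j` with the exponents above `b` whose weight
exceeds that of `b` by `j`. -/
def addRightFiberEquiv {ι : Type*} [Fintype ι] (b : ι → ℕ) (j : ℕ) :
    {a : ι → ℕ // ∑ i, a i = j} ≃ {v : ι → ℕ // b ≤ v ∧ ∑ i, v i = ∑ i, b i + j} where
  toFun a := ⟨a.1 + b, le_add_self, by simp [Finset.sum_add_distrib, a.2, add_comm]⟩
  invFun v := ⟨v.1 - b, by
    have := congrArg (fun u : ι → ℕ ↦ ∑ i, u i) (tsub_add_cancel_of_le v.2.1)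
    simp only [Pi.add_apply, Finset.sum_add_distrib, v.2.2] at this
    lia⟩
  left_inv a := Subtype.ext (add_tsub_cancel_right a.1 b)
  right_inv v := Subtype.ext (tsub_add_cancel_of_le v.2.1)

variable {n : ℕ}

/-- The least admissible exponent `(1, …, 1, 2)`. -/
def minExponent (n : ℕ) : Fin (n + 1) → ℕ := 1 + Pi.single (Fin.last n) 1

lemma minExponent_le_iff {v : Fin (n + 1) → ℕ} :
    minExponent n ≤ v ↔ (∀ i, 0 < v i) ∧ 2 ≤ v (Fin.last n) := by
  have entrywise : minExponent n ≤ v ↔ (∀ i : Fin n, 0 < v i.castSucc) ∧ 2 ≤ v (Fin.last n) := by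
    simp [Pi.le_def, minExponent, Fin.forall_fin_succ', Nat.one_le_iff_ne_zero, Nat.pos_iff_ne_zero]
  rw [entrywise, Fin.forall_fin_succ']
  lia

lemma sum_minExponent (n : ℕ) : ∑ i, minExponent n i = n + 2 := by
  simp [minExponent, Finset.sum_add_distrib]

lemma tsum_admissible (f : (Fin (n + 1) → ℕ) → ℝ≥0∞) (j : ℕ) :
    ∑' v : {v : Fin (n + 1) → ℕ //
        (∀ i, 0 < v i) ∧ (∑ i, v i) = n + 2 + j ∧ 2 ≤ v (Fin.last n)}, f v.1 =
      ∑' a : {a : Fin (n + 1) → ℕ // ∑ i, a i = j}, f (a.1 + minExponent n) := by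
  have admissible_iff (v : Fin (n + 1) → ℕ) :
      (minExponent n ≤ v ∧ ∑ i, v i = ∑ i, minExponent n i + j) ↔
        (∀ i, 0 < v i) ∧ (∑ i, v i) = n + 2 + j ∧ 2 ≤ v (Fin.last n) := by
    rw [minExponent_le_iff, sum_minExponent]
    tauto
  rw [← ((addRightFiberEquiv _ j).trans (Equiv.subtypeEquivRight admissible_iff)).tsum_eq]
  rfl

lemma tsum_emzv_add_minExponent (n j : ℕ) :
    ∑' a : {a : Fin (n + 1) → ℕ // ∑ i, a i = j}, emzv (a.1 + minExponent n) =
      emzv ![n + 2 + j] := by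
  have small : ∀ᶠ x : ℝ≥0 in 𝓝[>] 0, x < 1 :=
    nhdsWithin_le_nhds (Iio_mem_nhds zero_lt_one)
  refine coeff_eq_of_eventually_tsum_mul_pow_eq
    (c := fun j ↦ ∑' a : {a : Fin (n + 1) → ℕ // ∑ i, a i = j}, emzv (a.1 + minExponent n))
    (d := fun j ↦ emzv ![n + 2 + j]) ?_ ?_ j
  · filter_upwards [small] with x hx
    exact tsum_emzv_depth_one_mul_pow_ne_top hx (by lia)
  · filter_upwards [small] with x hx
    have prod_single (ℓ : IndexTuple (n + 1)) :
        ∏ i, (ℓ.1 i : ℝ≥0∞)⁻¹ ^ (Pi.single (Fin.last n) 1 : Fin (n + 1) → ℕ) i =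
          (ℓ.1 (Fin.last n) : ℝ≥0∞)⁻¹ := by
      simp [Fin.prod_univ_castSucc]
    simp_rw [minExponent, tsum_emzv_mul_pow, prod_single, tsum_prod_inv_sub_mul_inv_last hx,
      ← tsum_emzv_depth_one_mul_pow]

end Admissible

end SumFormula

/-- Sum formula: for depth `n + 1 ≥ 1` and weight `m ≥ n + 2`, the sum of all
MZVs of depth `n + 1`, weight `m`, whose last entry is at least `2`, is `ζ(m)`. -/
theorem sum_formula (n m : ℕ) (h : n + 2 ≤ m) :
    (∑' α : {v : Fin (n + 1) → ℕ //
        (∀ i, 0 < v i) ∧ (∑ i, v i) = m ∧ 2 ≤ v (Fin.last n)},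
      mzv α.1) = mzv ![m] := by
  obtain ⟨j, rfl⟩ := Nat.exists_eq_add_of_le h
  have sum_emzv := (SumFormula.tsum_admissible SumFormula.emzv j).trans
    (SumFormula.tsum_emzv_add_minExponent n j)
  have finite := sum_emzv.trans_ne (SumFormula.emzv_depth_one_ne_top (by lia))
  simp_rw [SumFormula.mzv_eq_toReal_emzv]
  rw [← sum_emzv, ENNReal.tsum_toReal_eq (ENNReal.ne_top_of_tsum_ne_top finite)]
end

section
/- For nonnegative integers a_1, b_1, the iterated integral (1/(a_1! b_1!)) ∫_{0<s_1<s_2<1} (log((1-s_1)/(1-s_2)))^{a_1} (log(s_2/s_1))^{b_1} ds_1 ds_2 / ((1-s_1) s_2) equals the sum over all (a_1+1)-tuples of positive integers (α_0, α_1, ..., α_{a_1}) with α_0 + ... + α_{a_1} = a_1 + b_1 + 1 of ζ(α_0, α_1, ..., α_{a_1} + 1). -/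
open MeasureTheory Real

/-- Compositions of `m` into `n` positive parts. -/
def Comp (n m : ℕ) : Type := {v : Fin n → ℕ // (∀ i, 0 < v i) ∧ ∑ i, v i = m}

/-- Increase the last entry of a tuple by one. -/
def incLast {n : ℕ} (v : Fin n → ℕ) : Fin n → ℕ :=
  fun i => if (i : ℕ) = n - 1 then v i + 1 else v i

/-!
For fixed `t`, let `L a b n` be the integral over `0 < s < t` of
`log ((1 - s) / (1 - t)) ^ a / a! * log (t / s) ^ b / b! * s ^ n`. Integrating `s ^ n` by parts
and expanding `1 / (1 - s)` as a geometric series gives, apart from the boundary term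
`t ^ (n + 1) / (n + 1)` at `a = b = 0`,
`(n + 1) L a b n = ∑_{k > n} L (a - 1) b k + L a (b - 1) n`, with negative indices giving zero.
Let `S` be the sum of `ℓ₀ ^ (-α₀) ⋯ ℓ_a ^ (-α_a) t ^ ℓ_a` over `n + 1 = ℓ₀ < ⋯ < ℓ_a` and over the
compositions `α` of `a + b + 1`. It satisfies the same recursion, whose two terms correspond to
`α₀ = 1` and `α₀ > 1`; hence `L a b n = S`. Summing over `n` accounts for the factor `1 / (1 - s)`
of the double integral, and integrating `t ^ ℓ_a / t` over `(0, 1)` adds one to the last exponent.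
All sums and integrals have nonnegative terms, so they are interchanged freely in `ℝ≥0∞`.
-/

open Function Matrix Set
open scoped ENNReal

/-! ### Sums over compositions and increasing tuples -/

namespace Comp

variable {d w : ℕ}

lemma length_le (α : Comp d w) : d ≤ w := by
  simpa [α.2.2] using Finset.sum_le_sum fun i (_ : i ∈ Finset.univ) ↦ Nat.one_le_of_lt (α.2.1 i)

/-- Prepend a part equal to one. -/
def consOne (α : Comp d w) : Comp (d + 1) (w + 1) :=
  ⟨vecCons 1 α.1, Fin.forall_fin_succ.2 ⟨one_pos, α.2.1⟩, by
    simp [Fin.sum_univ_succ, α.2.2, add_comm]⟩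

/-- Increase the first part by one. -/
def succHead (α : Comp (d + 1) w) : Comp (d + 1) (w + 1) :=
  ⟨vecCons (vecHead α.1 + 1) (vecTail α.1),
    Fin.forall_fin_succ.2 ⟨Nat.succ_pos _, fun i ↦ α.2.1 i.succ⟩, by
    simp [Fin.sum_univ_succ, ← α.2.2, vecHead, vecTail, add_right_comm]⟩

lemma consOne_injective : Injective (consOne : Comp d w → Comp (d + 1) (w + 1)) := fun _ _ h ↦
  Subtype.ext (vecCons_inj.1 (congrArg Subtype.val h)).2

lemma succHead_injective : Injective (succHead : Comp (d + 1) w → Comp (d + 1) (w + 1)) := by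
  intro α β h
  obtain ⟨hhead, htail⟩ := vecCons_inj.1 (congrArg Subtype.val h)
  apply Subtype.ext
  rw [← cons_head_tail α.1, ← cons_head_tail β.1, htail, Nat.succ_injective hhead]

lemma consOne_ne_succHead (α : Comp d w) (β : Comp (d + 1) w) : consOne α ≠ succHead β := by
  intro h
  have hhead : 1 = β.1 0 + 1 := (vecCons_inj.1 (congrArg Subtype.val h)).1
  exact (β.2.1 0).ne (Nat.succ_injective hhead)

lemma sumElim_consOne_succHead_surjective :
    Surjective (Sum.elim consOne succHead : Comp d w ⊕ Comp (d + 1) w → Comp (d + 1) (w + 1)) := by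
  rintro ⟨γ, hpos, hsum⟩
  obtain ⟨k, β, rfl⟩ : ∃ k β, γ = vecCons (k + 1) β :=
    ⟨γ 0 - 1, vecTail γ, by rw [Nat.sub_add_cancel (hpos 0)]; exact (cons_head_tail γ).symm⟩
  obtain ⟨-, hβ⟩ := Fin.forall_fin_succ.1 hpos
  simp only [Fin.sum_univ_succ, cons_val_zero, cons_val_succ] at hsum hβ
  rcases k.eq_zero_or_pos with rfl | hk
  · exact ⟨.inl ⟨β, hβ, by omega⟩, rfl⟩
  · exact ⟨.inr ⟨vecCons k β, Fin.forall_fin_succ.2 ⟨hk, hβ⟩, by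
      simp only [Fin.sum_univ_succ, cons_val_zero, cons_val_succ]; omega⟩, rfl⟩

lemma tsum_succ (f : Comp (d + 1) (w + 1) → ℝ≥0∞) :
    ∑' α, f α = ∑' α, f (consOne α) + ∑' α, f (succHead α) := by
  rw [← (Equiv.ofBijective (Sum.elim consOne succHead)
    ⟨consOne_injective.sumElim succHead_injective consOne_ne_succHead,
      sumElim_consOne_succHead_surjective⟩).tsum_eq]
  exact ENNReal.summable.tsum_sum ENNReal.summable

end Comp

/-- The polynomial `∑ x₀ ^ α₀ ⋯ x_{d-1} ^ α_{d-1}` over the compositions `α` of `w` into `d`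
positive parts, i.e. `x₀ ⋯ x_{d-1}` times the complete homogeneous polynomial of degree
`w - d`. -/
noncomputable def compSum {d : ℕ} (x : Fin d → ℝ≥0∞) (w : ℕ) : ℝ≥0∞ :=
  ∑' α : Comp d w, ∏ i, x i ^ α.1 i

lemma compSum_of_lt {d w : ℕ} (x : Fin d → ℝ≥0∞) (h : w < d) : compSum x w = 0 :=
  haveI : IsEmpty (Comp d w) := ⟨fun α ↦ α.length_le.not_gt h⟩
  tsum_empty

lemma compSum_fin_one (x : Fin 1 → ℝ≥0∞) (w : ℕ) : compSum x (w + 1) = x 0 ^ (w + 1) := by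
  have hval (α : Comp 1 (w + 1)) : α.1 0 = w + 1 := by simpa using α.2.2
  let : Unique (Comp 1 (w + 1)) :=
    { default := ⟨fun _ ↦ w + 1, by simp, by simp⟩
      uniq := fun α ↦ Subtype.ext <| funext fun i ↦ by rw [Subsingleton.elim i 0, hval α] }
  rw [compSum, (hasSum_unique _).tsum_eq, Fin.prod_univ_one, hval]

lemma compSum_vecCons {d : ℕ} (y : ℝ≥0∞) (x : Fin d → ℝ≥0∞) (w : ℕ) :
    compSum (vecCons y x) (w + 1) = y * (compSum x w + compSum (vecCons y x) w) := by
  simp only [compSum, Comp.tsum_succ, mul_add, ← ENNReal.tsum_mul_left]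
  congr! 3 with α α
  · simp [Comp.consOne, Fin.prod_univ_succ]
  · simp [Comp.succHead, Fin.prod_univ_succ, vecHead, vecTail, pow_succ', mul_assoc]

/-- Increasing `d`-tuples of integers greater than `m`; `mzv` sums over `IncTuple d 0`. -/
abbrev IncTuple (d m : ℕ) : Type := {ℓ : Fin d → ℕ // StrictMono ℓ ∧ ∀ i, m < ℓ i}

lemma strictMono_vecCons_iff {α : Type*} [Preorder α] {d : ℕ} {k : α} {ℓ : Fin d → α} :
    StrictMono (vecCons k ℓ) ↔ StrictMono ℓ ∧ ∀ i, k < ℓ i := by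
  simp [StrictMono, Fin.forall_fin_succ, and_comm]

namespace IncTuple

variable {d m : ℕ}

/-- Prepend the entry `m + 1 + j`. -/
def cons (p : Σ j, IncTuple d (m + 1 + j)) : IncTuple (d + 1) m :=
  ⟨vecCons (m + 1 + p.1) p.2.1, strictMono_vecCons_iff.2 p.2.2, Fin.forall_fin_succ.2
    ⟨by simp only [cons_val_zero]; omega, fun i ↦ (by omega : m < m + 1 + p.1).trans (p.2.2.2 i)⟩⟩

lemma cons_bijective : Bijective (cons : (Σ j, IncTuple d (m + 1 + j)) → IncTuple (d + 1) m) := by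
  constructor
  · rintro ⟨j, ℓ⟩ ⟨k, ℓ'⟩ h
    obtain ⟨hhead, htail⟩ := vecCons_inj.1 (congrArg Subtype.val h)
    obtain rfl : j = k := Nat.add_left_cancel hhead
    exact congrArg (Sigma.mk j) (Subtype.ext htail)
  · rintro ⟨ℓ, hℓ, hm⟩
    obtain ⟨j, ℓ', rfl⟩ : ∃ j ℓ', ℓ = vecCons (m + 1 + j) ℓ' :=
      ⟨ℓ 0 - (m + 1), vecTail ℓ, by
        rw [Nat.add_sub_of_le (hm 0)]; exact (cons_head_tail ℓ).symm⟩
    exact ⟨⟨j, ℓ', strictMono_vecCons_iff.1 hℓ⟩, rfl⟩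

lemma tsum_succ (f : IncTuple (d + 1) m → ℝ≥0∞) :
    ∑' ℓ, f ℓ = ∑' (j : ℕ) (ℓ : IncTuple d (m + 1 + j)), f (cons ⟨j, ℓ⟩) := by
  rw [← (Equiv.ofBijective cons cons_bijective).tsum_eq]
  exact ENNReal.tsum_sigma' _

end IncTuple

/-- `1 / n` as an extended nonnegative real, so that series and integrals may be manipulated
without summability side conditions. -/
noncomputable def recip (n : ℕ) : ℝ≥0∞ := (n : ℝ≥0∞)⁻¹

/-- The part with `ℓ₀ = m` of the sum of `ℓ₀ ^ (-α₀) ⋯ ℓ_d ^ (-α_d) F(ℓ_d)` over the increasing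
tuples `ℓ` and the compositions `α` of `w` into `d + 1` parts. -/
noncomputable def chainSum (F : ℕ → ℝ≥0∞) (d w m : ℕ) : ℝ≥0∞ :=
  ∑' ℓ : IncTuple d m, compSum (recip ∘ vecCons m ℓ.1) w * F (vecCons m ℓ.1 (Fin.last d))

lemma comp_vecCons {α β : Type*} {d : ℕ} (f : α → β) (k : α) (ℓ : Fin d → α) :
    f ∘ vecCons k ℓ = vecCons (f k) (f ∘ ℓ) := Fin.comp_cons f k ℓ

lemma tsum_incTuple_eq_tsum_chainSum (F : ℕ → ℝ≥0∞) (d w m : ℕ) :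
    ∑' ℓ : IncTuple (d + 1) m, compSum (recip ∘ ℓ.1) w * F (ℓ.1 (Fin.last d)) =
      ∑' j, chainSum F d w (m + 1 + j) :=
  IncTuple.tsum_succ _

lemma chainSum_of_le (F : ℕ → ℝ≥0∞) {d w : ℕ} (h : w ≤ d) (m : ℕ) : chainSum F d w m = 0 := by
  simp [chainSum, compSum_of_lt _ (Nat.lt_succ_of_le h)]

lemma chainSum_zero (F : ℕ → ℝ≥0∞) (w m : ℕ) :
    chainSum F 0 (w + 1) m = recip m ^ (w + 1) * F m := by
  let : Unique (IncTuple 0 m) :=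
    { default := ⟨finZeroElim, Subsingleton.strictMono _, finZeroElim⟩
      uniq := fun _ ↦ Subtype.ext (Subsingleton.elim _ _) }
  rw [chainSum, (hasSum_unique _).tsum_eq, compSum_fin_one]
  rfl

lemma chainSum_succ (F : ℕ → ℝ≥0∞) (d w m : ℕ) :
    chainSum F (d + 1) (w + 1) m =
      recip m * (∑' j, chainSum F d w (m + 1 + j) + chainSum F (d + 1) w m) := by
  rw [← tsum_incTuple_eq_tsum_chainSum, chainSum, chainSum, ← ENNReal.tsum_add,
    ← ENNReal.tsum_mul_left]
  refine tsum_congr fun ℓ ↦ ?_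
  rw [comp_vecCons, compSum_vecCons, ← Fin.succ_last, cons_val_succ]
  ring

/-! ### Multiple zeta values -/

/-- The multiple zeta value as an extended nonnegative real, which is `∞` for a divergent series. -/
noncomputable def emzv {n : ℕ} (α : Fin n → ℕ) : ℝ≥0∞ :=
  ∑' ℓ : IncTuple n 0, ∏ i, recip (ℓ.1 i) ^ α i

lemma toReal_emzv {n : ℕ} (α : Fin n → ℕ) : (emzv α).toReal = mzv α := by
  have hfin (ℓ : IncTuple n 0) : ∏ i, recip (ℓ.1 i) ^ α i ≠ ∞ :=
    ENNReal.prod_ne_top fun i _ ↦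
      ENNReal.pow_ne_top (ENNReal.inv_ne_top.2 (Nat.cast_ne_zero.2 (ℓ.2.2 i).ne'))
  rw [emzv, mzv, ENNReal.tsum_toReal_eq hfin]
  simp [recip, ENNReal.toReal_prod]

lemma prod_pow_incLast {M : Type*} [CommMonoid M] {d : ℕ} (x : Fin (d + 1) → M)
    (α : Fin (d + 1) → ℕ) :
    ∏ i, x i ^ incLast α i = (∏ i, x i ^ α i) * x (Fin.last d) := by
  have hne (i : Fin d) : (i : ℕ) ≠ d := i.2.ne
  simp [Fin.prod_univ_castSucc, incLast, hne, pow_succ, mul_assoc]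

lemma tsum_emzv_incLast (d w : ℕ) :
    ∑' α : Comp (d + 1) w, emzv (incLast α.1) = ∑' j, chainSum recip d w (0 + 1 + j) := by
  simp only [emzv, ← tsum_incTuple_eq_tsum_chainSum, compSum, ← ENNReal.tsum_mul_right]
  rw [ENNReal.tsum_comm]
  exact tsum_congr fun ℓ ↦ tsum_congr fun α ↦ prod_pow_incLast (recip ∘ ℓ.1) α.1

lemma tsum_fin_prod {ι : Type*} (f : ι → ℝ≥0∞) (d : ℕ) :
    ∑' ℓ : Fin d → ι, ∏ i, f (ℓ i) = (∑' k, f k) ^ d := by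
  induction d with
  | zero => simp
  | succ d ih =>
    rw [← (Fin.consEquiv fun _ ↦ ι).tsum_eq, ENNReal.tsum_prod', pow_succ', ← ih,
      ← ENNReal.tsum_mul_right]
    simp [Fin.consEquiv, Fin.prod_univ_succ, ENNReal.tsum_mul_left]

lemma tsum_recip_rpow_ne_top {r : ℝ} (hr : 1 < r) : ∑' n : ℕ+, recip n ^ r ≠ ∞ := by
  have hsum : Summable fun n : ℕ+ ↦ ((n : ℝ) ^ r)⁻¹ :=
    (Real.summable_nat_rpow_inv.2 hr).comp_injective PNat.coe_injective
  convert hsum.tsum_ofReal_ne_top with n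
  have hn : (0 : ℝ) < n := by exact_mod_cast n.pos
  rw [recip, ENNReal.inv_rpow, ENNReal.ofReal_inv_of_pos (by positivity),
    ← ENNReal.ofReal_rpow_of_pos hn, ENNReal.ofReal_natCast]

-- The last factor is spread evenly over the others, all of which are at least as large.
lemma prod_recip_pow_incLast_le {d : ℕ} {α : Fin (d + 1) → ℕ} (hα : ∀ i, 0 < α i)
    {ℓ : Fin (d + 1) → ℕ} (hℓ : StrictMono ℓ) (hpos : ∀ i, 0 < ℓ i) :
    ∏ i, recip (ℓ i) ^ incLast α i ≤ ∏ i, recip (ℓ i) ^ (1 + ((d + 1 : ℕ) : ℝ)⁻¹) := by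
  have hlast : recip (ℓ (Fin.last d)) =
      ∏ _i : Fin (d + 1), recip (ℓ (Fin.last d)) ^ ((d + 1 : ℕ) : ℝ)⁻¹ := by
    rw [Fin.prod_const, ENNReal.rpow_inv_natCast_pow d.succ_ne_zero]
  rw [prod_pow_incLast (fun i ↦ recip (ℓ i)), hlast, ← Finset.prod_mul_distrib]
  refine Finset.prod_le_prod' fun i _ ↦ ?_
  rw [ENNReal.rpow_add_of_nonneg _ _ zero_le_one (by positivity), ENNReal.rpow_one]
  gcongr
  · exact pow_le_of_le_one (zero_le)
      (ENNReal.inv_le_one.2 (Nat.one_le_cast.2 (hpos i))) (hα i).ne'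
  · exact ENNReal.inv_le_inv.2 (Nat.cast_le.2 (hℓ.monotone (Fin.le_last i)))

lemma emzv_incLast_ne_top {d : ℕ} {α : Fin (d + 1) → ℕ} (hα : ∀ i, 0 < α i) :
    emzv (incLast α) ≠ ∞ := by
  set r : ℝ := 1 + ((d + 1 : ℕ) : ℝ)⁻¹
  have hr : 1 < r := lt_add_of_pos_right _ (by positivity)
  let toPNat (ℓ : IncTuple (d + 1) 0) (i : Fin (d + 1)) : ℕ+ := ⟨ℓ.1 i, ℓ.2.2 i⟩
  have htoPNat : Injective toPNat := fun ℓ ℓ' h ↦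
    Subtype.ext <| funext fun i ↦ congrArg PNat.val (congrFun h i)
  refine ne_top_of_le_ne_top (ENNReal.pow_ne_top (n := d + 1) (tsum_recip_rpow_ne_top hr)) ?_
  calc emzv (incLast α)
      ≤ ∑' ℓ : IncTuple (d + 1) 0, ∏ i, recip (toPNat ℓ i) ^ r :=
        ENNReal.tsum_le_tsum fun ℓ ↦ prod_recip_pow_incLast_le hα ℓ.2.1 ℓ.2.2
    _ ≤ ∑' ℓ : Fin (d + 1) → ℕ+, ∏ i, recip (ℓ i) ^ r :=
        ENNReal.tsum_comp_le_tsum_of_injective htoPNat fun ℓ ↦ ∏ i, recip (ℓ i) ^ r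
    _ = (∑' n : ℕ+, recip n ^ r) ^ (d + 1) := tsum_fin_prod (fun n : ℕ+ ↦ recip n ^ r) _

lemma toReal_tsum_emzv_incLast (d w : ℕ) :
    (∑' α : Comp (d + 1) w, emzv (incLast α.1)).toReal =
      ∑' α : Comp (d + 1) w, mzv (incLast α.1) := by
  simp only [ENNReal.tsum_toReal_eq fun α : Comp (d + 1) w ↦ emzv_incLast_ne_top α.2.1,
    toReal_emzv]

/-! ### Integration -/

lemma ofReal_eq_ofReal_add_lintegral_Ioo {φ ψ : ℝ → ℝ} {s t : ℝ} (hst : s ≤ t)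
    (hφ : ∀ u ∈ Icc s t, HasDerivAt φ (-ψ u) u) (hφt : 0 ≤ φ t) (hψ : ∀ u ∈ Ioo s t, 0 ≤ ψ u) :
    ENNReal.ofReal (φ s) = ENNReal.ofReal (φ t) + ∫⁻ u in Ioo s t, ENNReal.ofReal (ψ u) := by
  have hderiv (u) (hu : u ∈ Icc s t) : HasDerivAt (-φ) (ψ u) u := by
    simpa only [neg_neg] using (hφ u hu).neg
  have hint : IntegrableOn ψ (Ioc s t) :=
    intervalIntegral.integrableOn_deriv_of_nonneg
      (fun u hu ↦ (hderiv u hu).continuousAt.continuousWithinAt)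
      (fun u hu ↦ hderiv u (Ioo_subset_Icc_self hu)) hψ
  have hftc : ∫ u in Ioo s t, ψ u = φ s - φ t := by
    rw [← integral_Ioc_eq_integral_Ioo, ← intervalIntegral.integral_of_le hst,
      intervalIntegral.integral_eq_sub_of_hasDerivAt (fun u hu ↦ hderiv u (uIcc_of_le hst ▸ hu))
        ((intervalIntegrable_iff_integrableOn_Ioc_of_le hst).2 hint)]
    exact neg_sub_neg _ _
  rw [← ofReal_integral_eq_lintegral_ofReal (hint.mono_set Ioo_subset_Ioc_self)
    (ae_restrict_of_forall_mem measurableSet_Ioo hψ),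
    ← ENNReal.ofReal_add hφt (setIntegral_nonneg measurableSet_Ioo hψ), hftc, add_sub_cancel]

lemma lintegral_Ioo_pow {t : ℝ} (ht : 0 ≤ t) (n : ℕ) :
    ∫⁻ u in Ioo 0 t, ENNReal.ofReal u ^ n = recip (n + 1) * ENNReal.ofReal t ^ (n + 1) := by
  have hderiv (u : ℝ) :
      HasDerivAt (fun u : ℝ ↦ (t ^ (n + 1) - u ^ (n + 1)) / (n + 1 : ℕ)) (-u ^ n) u := by
    refine (((hasDerivAt_pow (n + 1) u).const_sub _).div_const _).congr_deriv ?_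
    field_simp
    simp
  have hpow : ∀ u ∈ Ioo 0 t, ENNReal.ofReal u ^ n = ENNReal.ofReal (u ^ n) :=
    fun u hu ↦ (ENNReal.ofReal_pow hu.1.le n).symm
  have hftc := ofReal_eq_ofReal_add_lintegral_Ioo ht (fun u _ ↦ hderiv u) (by simp)
    fun u hu ↦ pow_nonneg hu.1.le n
  rw [setLIntegral_congr_fun measurableSet_Ioo hpow, recip, ← ENNReal.ofReal_pow ht,
    ← ENNReal.div_eq_inv_mul, ← ENNReal.ofReal_natCast, ← ENNReal.ofReal_div_of_pos (by positivity)]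
  simpa using hftc.symm

/-- The open triangle `0 < s < u < t`; the domain of the double integral is `triangle 1`. -/
def triangle (t : ℝ) : Set (ℝ × ℝ) := {p | 0 < p.1 ∧ p.1 < p.2 ∧ p.2 < t}

lemma measurableSet_triangle (t : ℝ) : MeasurableSet (triangle t) :=
  (measurableSet_lt measurable_const measurable_fst).inter
    ((measurableSet_lt measurable_fst measurable_snd).inter
      (measurableSet_lt measurable_snd measurable_const))

lemma lintegral_triangle_eq_fst_snd {Φ : ℝ × ℝ → ℝ≥0∞} (hΦ : Measurable Φ) (t : ℝ) :
    ∫⁻ p in triangle t, Φ p = ∫⁻ s in Ioo 0 t, ∫⁻ u in Ioo s t, Φ (s, u) := by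
  rw [← lintegral_indicator (measurableSet_triangle t), Measure.volume_eq_prod,
    lintegral_prod _ (hΦ.indicator (measurableSet_triangle t)).aemeasurable,
    ← lintegral_indicator measurableSet_Ioo]
  refine lintegral_congr fun s ↦ ?_
  by_cases hs : s ∈ Ioo 0 t
  · rw [indicator_of_mem hs, ← lintegral_indicator measurableSet_Ioo]
    simp [indicator_apply, triangle, hs.1]
  · rw [indicator_of_notMem hs, lintegral_eq_zero_of_ae_eq_zero]
    exact ae_of_all _ fun u ↦ indicator_of_notMem (fun h ↦ hs ⟨h.1, h.2.1.trans h.2.2⟩) _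

lemma lintegral_triangle_eq_snd_fst {Φ : ℝ × ℝ → ℝ≥0∞} (hΦ : Measurable Φ) (t : ℝ) :
    ∫⁻ p in triangle t, Φ p = ∫⁻ u in Ioo 0 t, ∫⁻ s in Ioo 0 u, Φ (s, u) := by
  rw [← lintegral_indicator (measurableSet_triangle t), Measure.volume_eq_prod,
    lintegral_prod_symm _ (hΦ.indicator (measurableSet_triangle t)).aemeasurable,
    ← lintegral_indicator measurableSet_Ioo]
  refine lintegral_congr fun u ↦ ?_
  by_cases hu : u ∈ Ioo 0 t
  · rw [indicator_of_mem hu, ← lintegral_indicator measurableSet_Ioo]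
    simp [indicator_apply, triangle, hu.2]
  · rw [indicator_of_notMem hu, lintegral_eq_zero_of_ae_eq_zero]
    exact ae_of_all _ fun s ↦ indicator_of_notMem (fun h ↦ hu ⟨h.1.trans h.2.1, h.2.2⟩) _

lemma lintegral_mul_pow_by_parts {φ ψ : ℝ → ℝ} {t : ℝ} (ht : 0 ≤ t)
    (hφ : ∀ u ∈ Ioc 0 t, HasDerivAt φ (-ψ u) u) (hφt : 0 ≤ φ t)
    (hψ : ∀ u ∈ Ioo 0 t, 0 ≤ ψ u) (hψm : Measurable ψ) (n : ℕ) :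
    ∫⁻ s in Ioo 0 t, ENNReal.ofReal (φ s) * ENNReal.ofReal s ^ n =
      recip (n + 1) * (ENNReal.ofReal (φ t) * ENNReal.ofReal t ^ (n + 1) +
        ∫⁻ u in Ioo 0 t, ENNReal.ofReal (ψ u) * ENNReal.ofReal u ^ (n + 1)) := by
  have hψm' : Measurable fun u ↦ ENNReal.ofReal (ψ u) := hψm.ennreal_ofReal
  have hftc : ∀ s ∈ Ioo 0 t, ENNReal.ofReal (φ s) * ENNReal.ofReal s ^ n =
      ENNReal.ofReal (φ t) * ENNReal.ofReal s ^ n +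
        ∫⁻ u in Ioo s t, ENNReal.ofReal (ψ u) * ENNReal.ofReal s ^ n := by
    intro s hs
    rw [lintegral_mul_const _ hψm', ← add_mul, ← ofReal_eq_ofReal_add_lintegral_Ioo hs.2.le
      (fun u hu ↦ hφ u ⟨hs.1.trans_le hu.1, hu.2⟩) hφt fun u hu ↦ hψ u ⟨hs.1.trans hu.1, hu.2⟩]
  have hpow : ∀ u ∈ Ioo 0 t, ∫⁻ s in Ioo 0 u, ENNReal.ofReal (ψ u) * ENNReal.ofReal s ^ n =
      recip (n + 1) * (ENNReal.ofReal (ψ u) * ENNReal.ofReal u ^ (n + 1)) := by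
    intro u hu
    rw [lintegral_const_mul _ (by fun_prop), lintegral_Ioo_pow hu.1.le, mul_left_comm]
  rw [setLIntegral_congr_fun measurableSet_Ioo hftc, lintegral_add_left (by fun_prop),
    lintegral_const_mul _ (by fun_prop), lintegral_Ioo_pow ht,
    ← lintegral_triangle_eq_fst_snd (Φ := fun p ↦ ENNReal.ofReal (ψ p.2) * ENNReal.ofReal p.1 ^ n)
      (by fun_prop), lintegral_triangle_eq_snd_fst (by fun_prop),
    setLIntegral_congr_fun measurableSet_Ioo hpow, lintegral_const_mul _ (by fun_prop),
    mul_left_comm, mul_add]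

/-- The integrand in `s` and `t` of the double integral without its rational factors, with
arbitrary functions `f` and `g` of the two logarithms in place of powers. -/
noncomputable def logKernel (f g : ℝ → ℝ) (s t : ℝ) : ℝ :=
  f (log ((1 - s) / (1 - t))) * g (log (t / s))

lemma measurable_logKernel {f g : ℝ → ℝ} (hf : Measurable f) (hg : Measurable g) :
    Measurable fun p : ℝ × ℝ ↦ logKernel f g p.1 p.2 :=
  (hf.comp (measurable_log.comp (by fun_prop))).mul (hg.comp (measurable_log.comp (by fun_prop)))

lemma logKernel_nonneg {f g : ℝ → ℝ} (hf : ∀ x, 0 ≤ x → 0 ≤ f x) (hg : ∀ x, 0 ≤ x → 0 ≤ g x)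
    {s t : ℝ} (hs : 0 < s) (hst : s ≤ t) (ht : t < 1) : 0 ≤ logKernel f g s t :=
  mul_nonneg (hf _ (log_nonneg ((one_le_div (sub_pos.2 ht)).2 (by linarith))))
    (hg _ (log_nonneg ((one_le_div hs).2 hst)))

lemma logKernel_self (f g : ℝ → ℝ) {t : ℝ} (ht0 : t ≠ 0) (ht1 : t ≠ 1) :
    logKernel f g t t = f 0 * g 0 := by
  rw [logKernel, div_self (sub_ne_zero.2 ht1.symm), div_self ht0, log_one]

lemma hasDerivAt_logKernel {f g : ℝ → ℝ} (hf : Differentiable ℝ f) (hg : Differentiable ℝ g)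
    {s t : ℝ} (hs0 : s ≠ 0) (hs1 : s ≠ 1) (ht0 : t ≠ 0) (ht1 : t ≠ 1) :
    HasDerivAt (fun s ↦ logKernel f g s t)
      (-(logKernel (deriv f) g s t * (1 - s)⁻¹ + logKernel f (deriv g) s t * s⁻¹)) s := by
  have hs1' : 1 - s ≠ 0 := sub_ne_zero.2 hs1.symm
  have ht1' : 1 - t ≠ 0 := sub_ne_zero.2 ht1.symm
  have hlog₁ : HasDerivAt (fun s ↦ log ((1 - s) / (1 - t))) (-(1 - s)⁻¹) s := by
    refine ((((hasDerivAt_id s).const_sub 1).div_const (1 - t)).log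
      (div_ne_zero hs1' ht1')).congr_deriv ?_
    simp only [id]
    field_simp
  have hlog₂ : HasDerivAt (fun s ↦ log (t / s)) (-s⁻¹) s := by
    refine (((hasDerivAt_inv hs0).const_mul t).log
      (mul_ne_zero ht0 (inv_ne_zero hs0))).congr_deriv ?_
    field_simp
  refine (((hf _).hasDerivAt.comp s hlog₁).mul ((hg _).hasDerivAt.comp s hlog₂)).congr_deriv ?_
  simp only [logKernel, Function.comp_apply]
  ring

/-- The moment `∫₀ᵗ logKernel f g s t * sⁿ ds` as an extended nonnegative real. -/
noncomputable def logMoment (f g : ℝ → ℝ) (t : ℝ) (n : ℕ) : ℝ≥0∞ :=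
  ∫⁻ s in Ioo 0 t, ENNReal.ofReal (logKernel f g s t) * ENNReal.ofReal s ^ n

lemma lintegral_logKernel_mul_inv_one_sub {f g : ℝ → ℝ} (hf : Measurable f) (hg : Measurable g)
    {t : ℝ} (ht : t < 1) (n : ℕ) :
    ∫⁻ s in Ioo 0 t, ENNReal.ofReal (logKernel f g s t) * ENNReal.ofReal (1 - s)⁻¹ *
      ENNReal.ofReal s ^ n = ∑' j, logMoment f g t (n + j) := by
  have hmeas (j : ℕ) : Measurable fun s ↦
      ENNReal.ofReal (logKernel f g s t) * ENNReal.ofReal s ^ (n + j) :=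
    ((measurable_logKernel hf hg).comp measurable_prodMk_right).ennreal_ofReal.mul (by fun_prop)
  simp only [logMoment, ← lintegral_tsum fun j ↦ (hmeas j).aemeasurable]
  refine setLIntegral_congr_fun measurableSet_Ioo fun s hs ↦ ?_
  have hs1 : 0 < 1 - s := sub_pos.2 (hs.2.trans ht)
  have hgeom : ENNReal.ofReal (1 - s)⁻¹ = ∑' j, ENNReal.ofReal s ^ j := by
    rw [ENNReal.tsum_geometric, ENNReal.ofReal_inv_of_pos hs1, ENNReal.ofReal_sub _ hs.1.le,
      ENNReal.ofReal_one]
  simp only [hgeom, pow_add, ← mul_assoc, ENNReal.tsum_mul_left]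
  ring

lemma ofReal_mul_inv_add_mul_inv_mul_pow {x y s : ℝ} (hx : 0 ≤ x) (hy : 0 ≤ y) (hs0 : 0 < s)
    (hs1 : s < 1) (n : ℕ) :
    ENNReal.ofReal (x * (1 - s)⁻¹ + y * s⁻¹) * ENNReal.ofReal s ^ (n + 1) =
      ENNReal.ofReal x * ENNReal.ofReal (1 - s)⁻¹ * ENNReal.ofReal s ^ (n + 1) +
        ENNReal.ofReal y * ENNReal.ofReal s ^ n := by
  have hs1' : 0 ≤ (1 - s)⁻¹ := inv_nonneg.2 (sub_nonneg.2 hs1.le)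
  have hpow : ENNReal.ofReal s⁻¹ * ENNReal.ofReal s ^ (n + 1) = ENNReal.ofReal s ^ n := by
    rw [pow_succ', ← mul_assoc, ← ENNReal.ofReal_mul (inv_nonneg.2 hs0.le),
      inv_mul_cancel₀ hs0.ne', ENNReal.ofReal_one, one_mul]
  rw [ENNReal.ofReal_add (mul_nonneg hx hs1') (mul_nonneg hy (inv_nonneg.2 hs0.le)),
    ENNReal.ofReal_mul hx, ENNReal.ofReal_mul hy, add_mul, mul_assoc (ENNReal.ofReal y), hpow]

lemma logMoment_eq {f g : ℝ → ℝ} (hf : Differentiable ℝ f) (hg : Differentiable ℝ g)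
    (hf0 : ∀ x, 0 ≤ x → 0 ≤ f x) (hg0 : ∀ x, 0 ≤ x → 0 ≤ g x)
    (hf' : ∀ x, 0 ≤ x → 0 ≤ deriv f x) (hg' : ∀ x, 0 ≤ x → 0 ≤ deriv g x)
    {t : ℝ} (ht0 : 0 < t) (ht1 : t < 1) (n : ℕ) :
    logMoment f g t n = recip (n + 1) * (ENNReal.ofReal (f 0 * g 0) * ENNReal.ofReal t ^ (n + 1) +
      (∑' j, logMoment (deriv f) g t (n + 1 + j) + logMoment f (deriv g) t n)) := by
  have hmeas₁ : Measurable fun s ↦ logKernel (deriv f) g s t :=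
    (measurable_logKernel (measurable_deriv f) hg.continuous.measurable).comp
      measurable_prodMk_right
  have hmeas₂ : Measurable fun s ↦ logKernel f (deriv g) s t :=
    (measurable_logKernel hf.continuous.measurable (measurable_deriv g)).comp
      measurable_prodMk_right
  have hnonneg₁ {s : ℝ} (hs : s ∈ Ioo 0 t) : 0 ≤ logKernel (deriv f) g s t :=
    logKernel_nonneg hf' hg0 hs.1 hs.2.le ht1
  have hnonneg₂ {s : ℝ} (hs : s ∈ Ioo 0 t) : 0 ≤ logKernel f (deriv g) s t :=
    logKernel_nonneg hf0 hg' hs.1 hs.2.le ht1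
  have hsplit : ∀ s ∈ Ioo 0 t, _ := fun s hs ↦ ofReal_mul_inv_add_mul_inv_mul_pow
    (hnonneg₁ hs) (hnonneg₂ hs) hs.1 (hs.2.trans ht1) n
  rw [logMoment, lintegral_mul_pow_by_parts ht0.le (fun u hu ↦ hasDerivAt_logKernel hf hg
      hu.1.ne' (hu.2.trans_lt ht1).ne ht0.ne' ht1.ne) (logKernel_nonneg hf0 hg0 ht0 le_rfl ht1)
    (fun u hu ↦ add_nonneg (mul_nonneg (hnonneg₁ hu) (inv_nonneg.2 (by linarith [hu.2])))
      (mul_nonneg (hnonneg₂ hu) (inv_nonneg.2 hu.1.le))) (by fun_prop),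
    logKernel_self f g ht0.ne' ht1.ne, setLIntegral_congr_fun measurableSet_Ioo hsplit,
    lintegral_add_right _ (by fun_prop), lintegral_logKernel_mul_inv_one_sub (measurable_deriv f)
      hg.continuous.measurable ht1, ← logMoment]

/-- The divided power `x ^ a / a!`. -/
noncomputable def divPow (a : ℕ) : ℝ → ℝ := fun x ↦ x ^ a / a.factorial

lemma differentiable_divPow (a : ℕ) : Differentiable ℝ (divPow a) :=
  (differentiable_pow a).div_const _

lemma measurable_divPow (a : ℕ) : Measurable (divPow a) :=
  (differentiable_divPow a).continuous.measurable

lemma divPow_nonneg (a : ℕ) (x : ℝ) (hx : 0 ≤ x) : 0 ≤ divPow a x :=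
  div_nonneg (pow_nonneg hx a) (Nat.cast_nonneg _)

lemma divPow_zero : divPow 0 = 1 := by
  ext x
  simp [divPow]

lemma deriv_divPow_zero : deriv (divPow 0) = 0 := by
  rw [divPow_zero]
  exact deriv_const' 1

lemma deriv_divPow_succ (a : ℕ) : deriv (divPow (a + 1)) = divPow a := by
  ext x
  refine (((hasDerivAt_pow (a + 1) x).div_const _).congr_deriv ?_).deriv
  rw [divPow, Nat.factorial_succ, Nat.cast_mul,
    mul_div_mul_left _ _ (Nat.cast_ne_zero.2 a.succ_ne_zero), Nat.add_sub_cancel]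

lemma deriv_divPow_nonneg (a : ℕ) (x : ℝ) (hx : 0 ≤ x) : 0 ≤ deriv (divPow a) x := by
  cases a with
  | zero => simp [deriv_divPow_zero]
  | succ a => simpa only [deriv_divPow_succ] using divPow_nonneg a x hx

lemma logMoment_zero_left (g : ℝ → ℝ) (t : ℝ) (n : ℕ) : logMoment 0 g t n = 0 := by
  simp [logMoment, logKernel]

lemma logMoment_zero_right (f : ℝ → ℝ) (t : ℝ) (n : ℕ) : logMoment f 0 t n = 0 := by
  simp [logMoment, logKernel]

lemma logMoment_divPow {t : ℝ} (ht0 : 0 < t) (ht1 : t < 1) (a b n : ℕ) :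
    logMoment (divPow a) (divPow b) t n =
      chainSum (fun k ↦ ENNReal.ofReal t ^ k) a (a + b + 1) (n + 1) := by
  have hrec (a b n : ℕ) := logMoment_eq (differentiable_divPow a) (differentiable_divPow b)
    (divPow_nonneg a) (divPow_nonneg b) (deriv_divPow_nonneg a) (deriv_divPow_nonneg b) ht0 ht1 n
  induction a generalizing b n with
  | zero =>
    induction b generalizing n with
    | zero =>
      rw [hrec]
      simp [chainSum_zero, deriv_divPow_zero, logMoment_zero_left, logMoment_zero_right, divPow]
    | succ b ihb =>
      rw [hrec, deriv_divPow_zero, deriv_divPow_succ, ihb, chainSum_zero, chainSum_zero]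
      simp [logMoment_zero_left, divPow, pow_succ', mul_assoc]
  | succ a iha =>
    have hzero : divPow (a + 1) 0 = 0 := by simp [divPow]
    induction b generalizing n with
    | zero =>
      rw [hrec, deriv_divPow_succ, deriv_divPow_zero, logMoment_zero_right, chainSum_succ,
        chainSum_of_le _ le_rfl]
      simp [iha, hzero, add_right_comm]
    | succ b ihb =>
      have hweight : a + (b + 1) + 1 = a + 1 + b + 1 := by omega
      rw [hrec, deriv_divPow_succ, deriv_divPow_succ, ihb, ← add_assoc (a + 1),
        chainSum_succ _ a (a + 1 + b + 1)]
      simp only [iha, hzero, hweight, zero_mul, ENNReal.ofReal_zero, zero_add,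
        add_right_comm (n + 1) _ 1]

lemma lintegral_Ioo_zero_one_pow_mul_inv {k : ℕ} (hk : 0 < k) :
    ∫⁻ t in Ioo (0 : ℝ) 1, ENNReal.ofReal t ^ k * ENNReal.ofReal t⁻¹ = recip k := by
  obtain ⟨n, rfl⟩ := Nat.exists_eq_succ_of_ne_zero hk.ne'
  have hpow : ∀ t ∈ Ioo (0 : ℝ) 1,
      ENNReal.ofReal t ^ (n + 1) * ENNReal.ofReal t⁻¹ = ENNReal.ofReal t ^ n := by
    intro t ht
    rw [pow_succ, mul_assoc, ← ENNReal.ofReal_mul ht.1.le, mul_inv_cancel₀ ht.1.ne',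
      ENNReal.ofReal_one, mul_one]
  rw [setLIntegral_congr_fun measurableSet_Ioo hpow, lintegral_Ioo_pow zero_le_one]
  simp

lemma lintegral_tsum_chainSum_pow (d w : ℕ) :
    ∫⁻ t in Ioo 0 1, (∑' j, chainSum (fun k ↦ ENNReal.ofReal t ^ k) d w (0 + 1 + j)) *
      ENNReal.ofReal t⁻¹ = ∑' j, chainSum recip d w (0 + 1 + j) := by
  simp only [← tsum_incTuple_eq_tsum_chainSum, ← ENNReal.tsum_mul_right, mul_assoc]
  rw [lintegral_tsum fun ℓ ↦ by fun_prop]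
  refine tsum_congr fun ℓ ↦ ?_
  rw [lintegral_const_mul _ (by fun_prop), lintegral_Ioo_zero_one_pow_mul_inv (ℓ.2.2 _)]

lemma lintegral_triangle_logKernel (a b : ℕ) :
    ∫⁻ p in triangle 1, ENNReal.ofReal
      (logKernel (divPow a) (divPow b) p.1 p.2 * ((1 - p.1) * p.2)⁻¹) =
      ∑' α : Comp (a + 1) (a + b + 1), emzv (incLast α.1) := by
  have hmeas := measurable_logKernel (measurable_divPow a) (measurable_divPow b)
  have hfactor {s t : ℝ} (hs : s ∈ Ioo 0 t) (ht : t < 1) :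
      ENNReal.ofReal (logKernel (divPow a) (divPow b) s t * ((1 - s) * t)⁻¹) =
        ENNReal.ofReal (logKernel (divPow a) (divPow b) s t) * ENNReal.ofReal (1 - s)⁻¹ *
          ENNReal.ofReal s ^ 0 * ENNReal.ofReal t⁻¹ := by
    have hK := logKernel_nonneg (divPow_nonneg a) (divPow_nonneg b) hs.1 hs.2.le ht
    have hs1 : 0 ≤ (1 - s)⁻¹ := inv_nonneg.2 (by linarith [hs.2])
    rw [mul_inv, ← mul_assoc, ENNReal.ofReal_mul (mul_nonneg hK hs1), ENNReal.ofReal_mul hK,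
      pow_zero, mul_one]
  have hinner : ∀ t ∈ Ioo (0 : ℝ) 1, ∫⁻ s in Ioo 0 t, ENNReal.ofReal
      (logKernel (divPow a) (divPow b) s t * ((1 - s) * t)⁻¹) =
      (∑' j, chainSum (fun k ↦ ENNReal.ofReal t ^ k) a (a + b + 1) (0 + 1 + j)) *
        ENNReal.ofReal t⁻¹ := by
    intro t ht
    rw [setLIntegral_congr_fun measurableSet_Ioo fun s hs ↦ hfactor hs ht.2,
      lintegral_mul_const' _ _ ENNReal.ofReal_ne_top,
      lintegral_logKernel_mul_inv_one_sub (measurable_divPow a) (measurable_divPow b) ht.2]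
    simp only [logMoment_divPow ht.1 ht.2, add_right_comm]
  rw [lintegral_triangle_eq_snd_fst (by fun_prop), setLIntegral_congr_fun measurableSet_Ioo hinner,
    lintegral_tsum_chainSum_pow, tsum_emzv_incLast]

theorem double_integral_eq_sum_mzv (a₁ b₁ : ℕ) :
    ((a₁.factorial : ℝ) * b₁.factorial)⁻¹ *
      ∫ s in {s : ℝ × ℝ | 0 < s.1 ∧ s.1 < s.2 ∧ s.2 < 1},
        (Real.log ((1 - s.1) / (1 - s.2))) ^ a₁ * (Real.log (s.2 / s.1)) ^ b₁ *
          ((1 - s.1) * s.2)⁻¹ =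
    ∑' α : Comp (a₁ + 1) (a₁ + b₁ + 1), mzv (incLast α.1) := by
  have hkernel (s : ℝ × ℝ) : ((a₁.factorial : ℝ) * b₁.factorial)⁻¹ *
      (log ((1 - s.1) / (1 - s.2)) ^ a₁ * log (s.2 / s.1) ^ b₁ * ((1 - s.1) * s.2)⁻¹) =
      logKernel (divPow a₁) (divPow b₁) s.1 s.2 * ((1 - s.1) * s.2)⁻¹ := by
    simp only [logKernel, divPow]
    ring
  have hnonneg : ∀ s ∈ triangle 1,
      0 ≤ logKernel (divPow a₁) (divPow b₁) s.1 s.2 * ((1 - s.1) * s.2)⁻¹ := fun s hs ↦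
    mul_nonneg (logKernel_nonneg (divPow_nonneg _) (divPow_nonneg _) hs.1 hs.2.1.le hs.2.2)
      (inv_nonneg.2 (mul_nonneg (by linarith [hs.2.1, hs.2.2]) (by linarith [hs.1, hs.2.1])))
  have hmeas := measurable_logKernel (measurable_divPow a₁) (measurable_divPow b₁)
  rw [← integral_const_mul, ← toReal_tsum_emzv_incLast, ← lintegral_triangle_logKernel]
  simp only [hkernel]
  exact integral_eq_lintegral_of_nonneg_ae
    (ae_restrict_of_forall_mem (measurableSet_triangle 1) hnonneg)
    (by fun_prop : Measurable _).aestronglyMeasurable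
end

section
/- For nonnegative integers a_1, b_1, the integral (1/(a_1! b_1!)) ∫_{0<s_1<s_2<1} (log((1-s_1)/(1-s_2)))^{a_1} (log(s_2/s_1))^{b_1} ds_1 ds_2 / ((1-s_1) s_2) equals ζ(a_1 + b_1 + 2). -/
open MeasureTheory Real

/-!
The coordinates `x = log ((1 - s₁) / (1 - s₂))`, `y = log (s₂ / s₁)` turn the open triangle into the
open quadrant and `ds₁ ds₂ / ((1 - s₁) s₂)` into `dx dy / (e^(x + y) - 1)`. Expanding
`1 / (e^(x + y) - 1) = ∑ e^(-n (x + y))` over `n ≥ 1` separates the variables, so that the `n`-th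
term is a product of two Gamma integrals, `Γ(a + 1) Γ(b + 1) / n ^ (a + b + 2)`.
-/

open Set

section ChangeOfVariables

/-- The open triangle `0 < s₁ < s₂ < 1`. -/
def openTriangle : Set (ℝ × ℝ) := {s | 0 < s.1 ∧ s.1 < s.2 ∧ s.2 < 1}

/-- The change of variables `(s₁, s₂) ↦ (log ((1 - s₁) / (1 - s₂)), log (s₂ / s₁))`, which maps
the open triangle onto the open quadrant. -/
noncomputable def logRatio (s : ℝ × ℝ) : ℝ × ℝ :=
  (log ((1 - s.1) / (1 - s.2)), log (s.2 / s.1))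

/-- The inverse of `logRatio`, obtained by solving `(1 - s₁) / (1 - s₂) = eˣ`, `s₂ / s₁ = eʸ`. -/
noncomputable def logRatioInv (z : ℝ × ℝ) : ℝ × ℝ :=
  ((exp z.1 - 1) / (exp (z.1 + z.2) - 1), exp z.2 * ((exp z.1 - 1) / (exp (z.1 + z.2) - 1)))

/-- The Fréchet derivative of `logRatio` on the open triangle. -/
noncomputable def logRatioFDeriv (s : ℝ × ℝ) : ℝ × ℝ →L[ℝ] ℝ × ℝ :=
  (Matrix.toLin (.finTwoProd ℝ) (.finTwoProd ℝ)
    !![-(1 - s.1)⁻¹, (1 - s.2)⁻¹; -s.1⁻¹, s.2⁻¹]).toContinuousLinearMap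

lemma isOpen_openTriangle : IsOpen openTriangle :=
  (isOpen_lt continuous_const continuous_fst).inter
    ((isOpen_lt continuous_fst continuous_snd).inter (isOpen_lt continuous_snd continuous_const))

variable {s : ℝ × ℝ}

lemma exp_logRatio_fst (hs : s ∈ openTriangle) :
    exp (logRatio s).1 = (1 - s.1) / (1 - s.2) := by
  obtain ⟨-, h₁₂, h₂⟩ := hs
  exact exp_log (div_pos (by linarith) (by linarith))

lemma exp_logRatio_snd (hs : s ∈ openTriangle) : exp (logRatio s).2 = s.2 / s.1 := by
  obtain ⟨h₁, h₁₂, -⟩ := hs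
  exact exp_log (div_pos (by linarith) h₁)

lemma exp_logRatio_add_sub_one (hs : s ∈ openTriangle) :
    exp ((logRatio s).1 + (logRatio s).2) - 1 = (s.2 - s.1) / ((1 - s.2) * s.1) := by
  rw [exp_add, exp_logRatio_fst hs, exp_logRatio_snd hs]
  obtain ⟨h₁, -, h₂⟩ := hs
  have : 1 - s.2 ≠ 0 := by linarith
  field_simp
  ring

lemma mapsTo_logRatio : MapsTo logRatio openTriangle (Ioi 0 ×ˢ Ioi 0) := by
  rintro s ⟨h₁, h₁₂, h₂⟩
  exact ⟨log_pos ((one_lt_div (by linarith)).2 (by linarith)), log_pos ((one_lt_div h₁).2 h₁₂)⟩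

lemma one_sub_logRatioInv_fst {z : ℝ × ℝ} (hz : z ∈ Ioi (0 : ℝ) ×ˢ Ioi (0 : ℝ)) :
    1 - (logRatioInv z).1 = exp z.1 * (1 - (logRatioInv z).2) := by
  have : exp (z.1 + z.2) - 1 ≠ 0 := (sub_pos.2 (one_lt_exp_iff.2 (add_pos hz.1 hz.2))).ne'
  simp only [logRatioInv]
  field_simp
  rw [exp_add]
  ring

lemma mapsTo_logRatioInv : MapsTo logRatioInv (Ioi 0 ×ˢ Ioi 0) openTriangle := by
  intro z hz
  have hx : 1 < exp z.1 := one_lt_exp_iff.2 hz.1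
  have hy : 1 < exp z.2 := one_lt_exp_iff.2 hz.2
  have hxy : 1 < exp (z.1 + z.2) := one_lt_exp_iff.2 (add_pos hz.1 hz.2)
  have h₁ : 0 < (logRatioInv z).1 := div_pos (sub_pos.2 hx) (sub_pos.2 hxy)
  have h₁₂ : (logRatioInv z).1 < (logRatioInv z).2 := lt_mul_of_one_lt_left h₁ hy
  refine ⟨h₁, h₁₂, ?_⟩
  nlinarith [one_sub_logRatioInv_fst hz]

lemma leftInvOn_logRatioInv : LeftInvOn logRatioInv logRatio openTriangle := by
  intro s hs
  have h_fst : (logRatioInv (logRatio s)).1 = s.1 := by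
    simp only [logRatioInv, exp_logRatio_add_sub_one hs, exp_logRatio_fst hs]
    obtain ⟨h₁, h₁₂, h₂⟩ := hs
    have : s.2 - s.1 ≠ 0 := by linarith
    have : 1 - s.2 ≠ 0 := by linarith
    field_simp
    ring
  have h_snd : (logRatioInv (logRatio s)).2 = s.2 := by
    change exp (logRatio s).2 * (logRatioInv (logRatio s)).1 = s.2
    rw [h_fst, exp_logRatio_snd hs, div_mul_cancel₀ _ hs.1.ne']
  exact Prod.ext h_fst h_snd

lemma rightInvOn_logRatioInv : RightInvOn logRatioInv logRatio (Ioi 0 ×ˢ Ioi 0) := by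
  intro z hz
  obtain ⟨h₁, -, h₂⟩ := mapsTo_logRatioInv hz
  have h_fst : (1 - (logRatioInv z).1) / (1 - (logRatioInv z).2) = exp z.1 := by
    rw [one_sub_logRatioInv_fst hz, mul_div_cancel_right₀ _ (sub_pos.2 h₂).ne']
  have h_snd : (logRatioInv z).2 / (logRatioInv z).1 = exp z.2 := mul_div_cancel_right₀ _ h₁.ne'
  simp only [logRatio, h_fst, h_snd, log_exp]

lemma bijOn_logRatio : BijOn logRatio openTriangle (Ioi 0 ×ˢ Ioi 0) :=
  InvOn.bijOn ⟨leftInvOn_logRatioInv, rightInvOn_logRatioInv⟩ mapsTo_logRatio mapsTo_logRatioInv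

lemma hasFDerivAt_logRatio (hs : s ∈ openTriangle) :
    HasFDerivAt logRatio (logRatioFDeriv s) s := by
  have log_sub_log : (fun t : ℝ × ℝ ↦ (log (1 - t.1) - log (1 - t.2), log t.2 - log t.1))
      =ᶠ[nhds s] logRatio := by
    filter_upwards [isOpen_openTriangle.mem_nhds hs] with t ⟨h₁, h₁₂, h₂⟩
    simp only [logRatio]
    rw [log_div (by linarith) (by linarith), log_div (by linarith) (by linarith)]
  obtain ⟨h₁, h₁₂, h₂⟩ := hs
  have d_fst : HasFDerivAt (fun t : ℝ × ℝ ↦ t.1) (.fst ℝ ℝ ℝ) s := hasFDerivAt_fst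
  have d_snd : HasFDerivAt (fun t : ℝ × ℝ ↦ t.2) (.snd ℝ ℝ ℝ) s := hasFDerivAt_snd
  have deriv :=
    (((d_fst.const_sub 1).log (by linarith)).sub ((d_snd.const_sub 1).log (by linarith))).prodMk
      ((d_snd.log (by linarith)).sub (d_fst.log (by linarith)))
  refine (deriv.congr_of_eventuallyEq log_sub_log.symm).congr_fderiv ?_
  rw [logRatioFDeriv, Matrix.toLin_finTwoProd_toContinuousLinearMap]
  ext <;> simp

lemma det_logRatioFDeriv (hs : s ∈ openTriangle) :
    (logRatioFDeriv s).det =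
      (exp ((logRatio s).1 + (logRatio s).2) - 1) * ((1 - s.1) * s.2)⁻¹ := by
  rw [exp_logRatio_add_sub_one hs, logRatioFDeriv, LinearMap.det_toContinuousLinearMap,
    LinearMap.det_toLin, Matrix.det_fin_two_of]
  obtain ⟨h₁, h₁₂, h₂⟩ := hs
  have : 1 - s.1 ≠ 0 := by linarith
  have : 1 - s.2 ≠ 0 := by linarith
  have : s.2 ≠ 0 := by linarith
  field_simp
  ring

theorem setIntegral_openTriangle_comp_logRatio {E : Type*} [NormedAddCommGroup E]
    [NormedSpace ℝ E] (f : ℝ × ℝ → E) :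
    ∫ s in openTriangle, ((1 - s.1) * s.2)⁻¹ • f (logRatio s) =
      ∫ z in Ioi 0 ×ˢ Ioi 0, (exp (z.1 + z.2) - 1)⁻¹ • f z := by
  rw [← bijOn_logRatio.image_eq, integral_image_eq_integral_abs_det_fderiv_smul volume
    isOpen_openTriangle.measurableSet (fun s hs ↦ (hasFDerivAt_logRatio hs).hasFDerivWithinAt)
    bijOn_logRatio.injOn]
  refine setIntegral_congr_fun isOpen_openTriangle.measurableSet fun s hs ↦ ?_
  have h_exp : 0 < exp ((logRatio s).1 + (logRatio s).2) - 1 :=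
    sub_pos.2 (one_lt_exp_iff.2 (add_pos (mapsTo_logRatio hs).1 (mapsTo_logRatio hs).2))
  have h_weight : 0 < (1 - s.1) * s.2 := by
    obtain ⟨h₁, h₁₂, h₂⟩ := hs
    exact mul_pos (by linarith) (by linarith)
  simp only [det_logRatioFDeriv hs, abs_of_pos (mul_pos h_exp (inv_pos.2 h_weight)), smul_smul]
  rw [mul_right_comm, mul_inv_cancel₀ h_exp.ne', one_mul]

end ChangeOfVariables

section DirichletSeries

/-- The function of `x` whose integral over `(0, ∞)` is `Γ(s) / r ^ s`. -/
noncomputable def gammaIntegrand (s : ℂ) (r x : ℝ) : ℂ := (x : ℂ) ^ (s - 1) * exp (-(r * x))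

variable {s t : ℂ} {r : ℝ}

lemma integral_gammaIntegrand (hs : 0 < s.re) (hr : 0 < r) :
    ∫ x in Ioi 0, gammaIntegrand s r x = Complex.Gamma s / r ^ s := by
  have h := Complex.integral_cpow_mul_exp_neg_mul_Ioi hs (r := r) hr
  rw [one_div, Complex.inv_cpow _ _ (Complex.arg_ofReal_of_nonneg hr.le ▸ pi_pos.ne),
    inv_mul_eq_div] at h
  simpa [gammaIntegrand] using h

lemma integrableOn_gammaIntegrand (hs : 0 < s.re) (hr : 0 < r) :
    IntegrableOn (gammaIntegrand s r) (Ioi 0) := by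
  refine Integrable.of_integral_ne_zero ?_
  rw [integral_gammaIntegrand hs hr]
  simp [Complex.Gamma_ne_zero_of_re_pos hs, Complex.cpow_eq_zero_iff, hr.ne']

lemma integral_norm_gammaIntegrand (hs : 0 < s.re) (hr : 0 < r) :
    ∫ x in Ioi 0, ‖gammaIntegrand s r x‖ = Gamma s.re / r ^ s.re := by
  have h := integral_rpow_mul_exp_neg_mul_Ioi hs hr
  rw [one_div, inv_rpow hr.le, inv_mul_eq_div] at h
  rw [← h]
  refine setIntegral_congr_fun measurableSet_Ioi fun x hx ↦ ?_
  simp [gammaIntegrand, -Complex.ofReal_exp, Complex.norm_cpow_eq_rpow_re_of_pos hx]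

lemma setIntegral_gammaIntegrand_mul (hs : 0 < s.re) (ht : 0 < t.re) (hr : 0 < r) :
    ∫ z in Ioi (0 : ℝ) ×ˢ Ioi (0 : ℝ), gammaIntegrand s r z.1 * gammaIntegrand t r z.2 =
      Complex.Gamma s * Complex.Gamma t / r ^ (s + t) := by
  rw [Measure.volume_eq_prod, setIntegral_prod_mul, integral_gammaIntegrand hs hr,
    integral_gammaIntegrand ht hr, Complex.cpow_add _ _ (Complex.ofReal_ne_zero.2 hr.ne'),
    div_mul_div_comm]

lemma integrableOn_gammaIntegrand_mul (hs : 0 < s.re) (ht : 0 < t.re) (hr : 0 < r) :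
    IntegrableOn (fun z : ℝ × ℝ ↦ gammaIntegrand s r z.1 * gammaIntegrand t r z.2)
      (Ioi 0 ×ˢ Ioi 0) := by
  rw [IntegrableOn, Measure.volume_eq_prod, ← Measure.prod_restrict]
  exact (integrableOn_gammaIntegrand hs hr).mul_prod (integrableOn_gammaIntegrand ht hr)

lemma setIntegral_norm_gammaIntegrand_mul (hs : 0 < s.re) (ht : 0 < t.re) (hr : 0 < r) :
    ∫ z in Ioi (0 : ℝ) ×ˢ Ioi (0 : ℝ), ‖gammaIntegrand s r z.1 * gammaIntegrand t r z.2‖ =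
      Gamma s.re * Gamma t.re / r ^ (s + t).re := by
  simp only [norm_mul]
  rw [Measure.volume_eq_prod, setIntegral_prod_mul (fun x ↦ ‖gammaIntegrand s r x‖)
      (fun y ↦ ‖gammaIntegrand t r y‖), integral_norm_gammaIntegrand hs hr,
    integral_norm_gammaIntegrand ht hr, Complex.add_re, rpow_add hr, div_mul_div_comm]

theorem hasSum_setIntegral_cpow_mul_cpow_mul {ι : Type*} [Countable ι] {a : ι → ℂ} {p : ι → ℝ}
    {F : ℝ → ℂ} (hs : 0 < s.re) (ht : 0 < t.re) (hp : ∀ i, 0 < p i)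
    (hF : ∀ x, 0 < x → HasSum (fun i ↦ a i * exp (-(p i * x))) (F x))
    (ha : Summable fun i ↦ ‖a i‖ / p i ^ (s + t).re) :
    HasSum (fun i ↦ Complex.Gamma s * Complex.Gamma t * (a i / p i ^ (s + t)))
      (∫ z in Ioi (0 : ℝ) ×ˢ Ioi (0 : ℝ),
        (z.1 : ℂ) ^ (s - 1) * (z.2 : ℂ) ^ (t - 1) * F (z.1 + z.2)) := by
  let G (i : ι) (z : ℝ × ℝ) : ℂ :=
    a i * (gammaIntegrand s (p i) z.1 * gammaIntegrand t (p i) z.2)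
  have integral_G (i : ι) : ∫ z in Ioi (0 : ℝ) ×ˢ Ioi (0 : ℝ), G i z =
      Complex.Gamma s * Complex.Gamma t * (a i / p i ^ (s + t)) := by
    rw [integral_const_mul, setIntegral_gammaIntegrand_mul hs ht (hp i), mul_div_left_comm]
  have integral_norm_G (i : ι) : ∫ z in Ioi (0 : ℝ) ×ˢ Ioi (0 : ℝ), ‖G i z‖ =
      Gamma s.re * Gamma t.re * (‖a i‖ / p i ^ (s + t).re) := by
    simp only [G, norm_mul (a i)]
    rw [integral_const_mul, setIntegral_norm_gammaIntegrand_mul hs ht (hp i), mul_div_left_comm]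
  have tsum_G (z : ℝ × ℝ) (hz : z ∈ Ioi (0 : ℝ) ×ˢ Ioi (0 : ℝ)) :
      ∑' i, G i z = (z.1 : ℂ) ^ (s - 1) * (z.2 : ℂ) ^ (t - 1) * F (z.1 + z.2) := by
    rw [← (hF _ (add_pos hz.1 hz.2)).tsum_eq, ← tsum_mul_left]
    refine tsum_congr fun i ↦ ?_
    simp only [G, gammaIntegrand, mul_add, neg_add, exp_add, Complex.ofReal_mul]
    ring
  have h := hasSum_integral_of_summable_integral_norm
    (fun i ↦ (integrableOn_gammaIntegrand_mul hs ht (hp i)).const_mul (a i))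
    (by simpa only [G, integral_norm_G] using ha.mul_left _)
  rw [setIntegral_congr_fun (measurableSet_Ioi.prod measurableSet_Ioi) tsum_G] at h
  simpa only [G, integral_G] using h

lemma hasSum_exp_neg_succ_mul {x : ℝ} (hx : 0 < x) :
    HasSum (fun n : ℕ ↦ exp (-((n + 1) * x))) (exp x - 1)⁻¹ := by
  have h := (hasSum_geometric_of_lt_one (exp_pos (-x)).le
    (exp_lt_one_iff.2 (neg_neg_of_pos hx))).mul_left (exp (-x))
  have h_exp : exp x - 1 ≠ 0 := (sub_pos.2 (one_lt_exp_iff.2 hx)).ne'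
  convert! h using 1
  · ext n
    rw [← exp_nat_mul, ← exp_add]
    ring_nf
  · rw [exp_neg]
    field_simp

theorem setIntegral_cpow_mul_cpow_div_exp_sub_one (hs : 0 < s.re) (ht : 0 < t.re)
    (hst : 1 < (s + t).re) :
    ∫ z in Ioi (0 : ℝ) ×ˢ Ioi (0 : ℝ), (exp (z.1 + z.2) - 1)⁻¹ •
        ((z.1 : ℂ) ^ (s - 1) * (z.2 : ℂ) ^ (t - 1)) =
      Complex.Gamma s * Complex.Gamma t * riemannZeta (s + t) := by
  have h_summable : Summable fun n : ℕ ↦ ‖(1 : ℂ)‖ / ((n : ℝ) + 1) ^ (s + t).re := by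
    simpa using (summable_nat_add_iff 1).2 (summable_nat_rpow_inv.2 hst)
  have h := hasSum_setIntegral_cpow_mul_cpow_mul hs ht (fun n : ℕ ↦ n.cast_add_one_pos)
    (F := fun x ↦ ((exp x - 1)⁻¹ : ℝ))
    (fun x hx ↦ by
      simpa only [one_mul] using Complex.hasSum_ofReal.2 (hasSum_exp_neg_succ_mul hx))
    h_summable
  rw [zeta_eq_tsum_one_div_nat_add_one_cpow hst, ← tsum_mul_left]
  simpa [mul_comm] using h.tsum_eq.symm

end DirichletSeries

lemma mzv_singleton (m : ℕ) : mzv ![m] = ∑' n : ℕ+, ((n : ℝ) ^ m)⁻¹ := by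
  let e : {ℓ : Fin 1 → ℕ // StrictMono ℓ ∧ ∀ i, 0 < ℓ i} ≃ ℕ+ :=
    (Equiv.funUnique (Fin 1) ℕ).subtypeEquiv fun ℓ ↦ by
      simp [Subsingleton.strictMono, Fin.forall_fin_one]
  rw [mzv, ← e.tsum_eq]
  exact tsum_congr fun ℓ ↦ Fin.prod_univ_one _

lemma ofReal_mzv_singleton {m : ℕ} (hm : 1 < m) : (mzv ![m] : ℂ) = riemannZeta m := by
  rw [mzv_singleton, Complex.ofReal_tsum,
    zeta_eq_tsum_one_div_nat_add_one_cpow (by simpa using hm)]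
  simpa using tsum_pnat_eq_tsum_succ (f := fun n : ℕ ↦ ((n : ℂ) ^ m)⁻¹)

theorem double_integral_eq_zeta_general {a b : ℂ} (ha : -1 < a.re) (hb : -1 < b.re)
    (hab : -1 < (a + b).re) :
    (Complex.Gamma (a + 1) * Complex.Gamma (b + 1))⁻¹ *
      ∫ s in openTriangle,
        (log ((1 - s.1) / (1 - s.2)) : ℂ) ^ a * (log (s.2 / s.1) : ℂ) ^ b *
          (((1 - s.1) * s.2)⁻¹ : ℝ) =
    riemannZeta (a + b + 2) := by
  have ha' : 0 < (a + 1).re := by simpa using by linarith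
  have hb' : 0 < (b + 1).re := by simpa using by linarith
  have hab' : 1 < (a + 1 + (b + 1)).re := by
    simp only [Complex.add_re, Complex.one_re] at hab ⊢
    linarith
  have h_change := setIntegral_openTriangle_comp_logRatio fun z ↦ (z.1 : ℂ) ^ a * (z.2 : ℂ) ^ b
  have h_zeta := setIntegral_cpow_mul_cpow_div_exp_sub_one ha' hb' hab'
  simp only [add_sub_cancel_right] at h_zeta
  have h_Gamma := mul_ne_zero (Complex.Gamma_ne_zero_of_re_pos ha')
    (Complex.Gamma_ne_zero_of_re_pos hb')
  rw [inv_mul_eq_iff_eq_mul₀ h_Gamma, show a + b + 2 = a + 1 + (b + 1) by ring]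
  simpa only [logRatio, Complex.real_smul, mul_comm (Complex.ofReal _)] using h_change.trans h_zeta

theorem double_integral_eq_zeta (a₁ b₁ : ℕ) :
    ((a₁.factorial : ℝ) * b₁.factorial)⁻¹ *
      ∫ s in {s : ℝ × ℝ | 0 < s.1 ∧ s.1 < s.2 ∧ s.2 < 1},
        (Real.log ((1 - s.1) / (1 - s.2))) ^ a₁ * (Real.log (s.2 / s.1)) ^ b₁ *
          ((1 - s.1) * s.2)⁻¹ =
    mzv ![a₁ + b₁ + 2] := by
  have h_re (n : ℕ) : -1 < (n : ℂ).re := by simpa using neg_one_lt_zero.trans_le n.cast_nonneg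
  have h := double_integral_eq_zeta_general (h_re a₁) (h_re b₁) (mod_cast h_re (a₁ + b₁))
  rw [← Complex.ofReal_inj, ofReal_mzv_singleton (by lia)]
  simpa [openTriangle, Complex.Gamma_nat_eq_factorial, ← integral_complex_ofReal] using h
end

section
/- Theorem 1 (two-factor weighted sum formula with parameters): For nonnegative integers k, ℓ and real parameters μ_1, μ_2, ξ_1, ξ_2, the sum over a_1+a_2=k, b_1+b_2=ℓ of μ_1^{a_1} μ_2^{a_2} ξ_1^{b_1} ξ_2^{b_2} ζ(a_1+b_1+2) ζ(a_2+b_2+2) equals the sum over σ ∈ S_2 of [ ∑_{a_1+a_2=k, b_1+b_2=ℓ} μ_{σ(1)}^{a_1} μ_{σ(2)}^{a_2} ξ_{σ(1)}^{b_1} ξ_{σ(2)}^{b_2} ∑_{|α|=a_1+b_1+1, |β|=a_2+b_2+1} ζ(α_0,...,α_{a_1}+1, β_0,...,β_{a_2}+1) + ∑_{a_1+a_2+a_3=k, b_1+b_2+b_3=ℓ} μ_{σ(1)}^{a_1} ξ_{σ(1)}^{b_1} (μ_{σ(1)}+μ_{σ(2)})^{a_2} (ξ_{σ(1)}+ξ_{σ(2)})^{b_2}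 (μ_{σ(1)}^{a_3} ξ_{σ(1)}^{b_3} + μ_{σ(2)}^{a_3} ξ_{σ(2)}^{b_3}) ∑_{|α|=a_1+b_1+1, |β|=a_2+b_2+1, |γ|=a_3+b_3+1} ζ(α_0,...,α_{a_1}, β_0,...,β_{a_2}+γ_0, γ_1,...,γ_{a_3}+1) ]. -/
open Finset

/-- `∑ ζ(α₀,…,α_{a₁}+1, β₀,…,β_{a₂}+1)` over compositions `|α| = a₁+b₁+1`,
`|β| = a₂+b₂+1`. -/
noncomputable def S2 (a₁ b₁ a₂ b₂ : ℕ) : ℝ :=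
  ∑' (α : Comp (a₁ + 1) (a₁ + b₁ + 1)) (β : Comp (a₂ + 1) (a₂ + b₂ + 1)),
    mzv (Fin.append (incLast α.1) (incLast β.1))

/-- `∑ ζ(α₀,…,α_{a₁}, β₀,…,β_{a₂}+γ₀, γ₁,…,γ_{a₃}+1)` over compositions
`|α| = a₁+b₁+1`, `|β| = a₂+b₂+1`, `|γ| = a₃+b₃+1`. -/
noncomputable def S3 (a₁ b₁ a₂ b₂ a₃ b₃ : ℕ) : ℝ :=
  ∑' (α : Comp (a₁ + 1) (a₁ + b₁ + 1)) (β : Comp (a₂ + 1) (a₂ + b₂ + 1))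
     (γ : Comp (a₃ + 1) (a₃ + b₃ + 1)),
    mzv (incLast (Fin.append α.1 (Fin.append
      (Function.update β.1 (Fin.last a₂) (β.1 (Fin.last a₂) + γ.1 0))
      (Fin.tail γ.1))))

/-!
Let `I₀` and `I₁` be the iterated-integral operators of `dz / z` and `dz / (1 - z)`, and let
`W(a, b)` be the sum of all words with `a` letters `I₁` and `b` letters `I₀`. The nested sum of
`I₀ W(a, b) I₁` is `∑ ζ(α₀, …, α_a + 1)` over `|α| = a + b + 1`, which by the sum formula equals
`ζ(a + b + 2)`. So the left-hand side is a coefficient of a product of two generating series.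

The series `F = ∑ W(a, b) (μ s) ^ a (ξ t) ^ b`, applied to a fixed power series in `z`, solves an
inhomogeneous linear equation with connection form `ξ t dz / z + μ s dz / (1 - z)`. The connection
forms of two factors add up under multiplication, and a solution is determined by its constant term.
This puts the shuffle product of the two series in closed form, in which the words with
parameters `(μ, ξ)`, `(μ', ξ')` and `(μ + μ', ξ + ξ')` give the double and triple sums.

The double and triple sums converge because all their terms are nonnegative and at `μ = ξ = 1` they
add up to the product of two convergent series.

The sum formula is proved by connected sums (Seki–Yamamoto): after summing over `b` against `y ^ b`
the operators become powers of `(1 - y I₀)⁻¹ I₁`, and the connector moves one such factor at a time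
across to a sum over a single variable. Comparing coefficients of `y ^ b` gives the formula.
-/

namespace MultipleZeta

open PowerSeries

theorem sum_antidiagonalTuple_succ {M : Type*} [AddCommMonoid M] (n b : ℕ)
    (f : (Fin (n + 1) → ℕ) → M) :
    ∑ v ∈ Nat.antidiagonalTuple (n + 1) b, f v =
      ∑ p ∈ antidiagonal b, ∑ w ∈ Nat.antidiagonalTuple n p.2, f (Fin.snoc w p.1) := by
  rw [Finset.sum_sigma']
  refine Finset.sum_bij' (fun v _ ↦ ⟨(v (Fin.last n), ∑ i, Fin.init v i), Fin.init v⟩)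
    (fun q _ ↦ Fin.snoc q.2 q.1.1) ?_ ?_ (fun v _ ↦ Fin.snoc_init_self v) ?_
    (fun v _ ↦ by rw [Fin.snoc_init_self])
  · intro v hv
    rw [Nat.mem_antidiagonalTuple, Fin.sum_univ_castSucc] at hv
    simpa [Nat.mem_antidiagonalTuple, Fin.init, add_comm] using hv
  · rintro ⟨p, w⟩ h
    simp only [mem_sigma, HasAntidiagonal.mem_antidiagonal, Nat.mem_antidiagonalTuple] at h
    simp [Nat.mem_antidiagonalTuple, Fin.sum_univ_castSucc, ← h.1, h.2, add_comm]
  · rintro ⟨⟨i, j⟩, w⟩ h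
    simp only [mem_sigma, HasAntidiagonal.mem_antidiagonal, Nat.mem_antidiagonalTuple] at h
    simp [h.2]

section Words

variable {A : Type*} [Semiring A] (x y : A)

/-- The word `y ^ v n * x * y ^ v (n - 1) * x * ⋯ * x * y ^ v 0`. -/
def word : (n : ℕ) → (Fin (n + 1) → ℕ) → A
  | 0, v => y ^ v 0
  | n + 1, v => y ^ v (Fin.last (n + 1)) * x * word n (Fin.init v)

/-- The sum of all words with `a` letters `x` and `b` letters `y`, i.e. the coefficient of
`s ^ a * t ^ b` in the noncommutative geometric series `∑ n, (s * x + t * y) ^ n`. -/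
def wordSum (a b : ℕ) : A :=
  ∑ v ∈ Nat.antidiagonalTuple (a + 1) b, word x y a v

theorem wordSum_zero_left (b : ℕ) : wordSum x y 0 b = y ^ b := by
  simp [wordSum, word]

theorem wordSum_succ (a b : ℕ) :
    wordSum x y (a + 1) b = ∑ p ∈ antidiagonal b, y ^ p.1 * x * wordSum x y a p.2 := by
  simp only [wordSum, sum_antidiagonalTuple_succ (a + 1), word, Fin.snoc_last, Fin.init_snoc,
    Finset.mul_sum]

theorem wordSum_succ_zero (a : ℕ) : wordSum x y (a + 1) 0 = x * wordSum x y a 0 := by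
  simp [wordSum_succ]

theorem wordSum_succ_succ (a b : ℕ) :
    wordSum x y (a + 1) (b + 1) = x * wordSum x y a (b + 1) + y * wordSum x y (a + 1) b := by
  simp only [wordSum_succ, Nat.sum_antidiagonal_succ, pow_zero, one_mul, pow_succ', mul_sum,
    mul_assoc]

end Words

section Operators

/-- The operator `I₀` on real sequences, `(I₀ g) m = g m / m`. Identifying `g` with `∑ g m z ^ m`,
it is the iterated-integral operator of the form `dz / z`; it kills `g 0` since `x / 0 = 0`. -/
noncomputable def I₀ : Module.End ℝ (ℕ → ℝ) where
  toFun g m := g m / m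
  map_add' f g := by ext m; simp [add_div]
  map_smul' c g := by ext m; simp [mul_div_assoc]

/-- The operator `(J s g) m = m⁻ˢ * ∑ j < m, g j`, which appends one summation to a nested sum. -/
noncomputable def J (s : ℕ) : Module.End ℝ (ℕ → ℝ) where
  toFun g m := (∑ j ∈ range m, g j) / (m : ℝ) ^ s
  map_add' f g := by ext m; simp [add_div, sum_add_distrib]
  map_smul' c g := by ext m; simp [mul_div_assoc, ← mul_sum]

/-- The iterated-integral operator of the form `dz / (1 - z)`. -/
noncomputable abbrev I₁ : Module.End ℝ (ℕ → ℝ) := J 1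

theorem I₀_apply (g : ℕ → ℝ) (m : ℕ) : I₀ g m = g m / m := rfl

theorem J_apply (s : ℕ) (g : ℕ → ℝ) (m : ℕ) :
    J s g m = (∑ j ∈ range m, g j) / (m : ℝ) ^ s := rfl

theorem J_add (s t : ℕ) : J (s + t) = I₀ ^ t * J s := by
  induction t with
  | zero => simp
  | succ t ih =>
    rw [pow_succ', mul_assoc, ← ih]
    ext g m
    simp only [Module.End.mul_apply, I₀_apply, J_apply, ← add_assoc, pow_succ, div_div]

theorem J_succ (s : ℕ) : J (s + 1) = I₀ ^ s * I₁ := by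
  rw [add_comm, J_add]

/-- The operator `J (α last) * ⋯ * J (α 0)`. -/
noncomputable def nestedSum : {n : ℕ} → (Fin n → ℕ) → Module.End ℝ (ℕ → ℝ)
  | 0, _ => 1
  | n + 1, α => J (α (Fin.last n)) * nestedSum (Fin.init α)

theorem nestedSum_append {m n : ℕ} (α : Fin m → ℕ) (β : Fin n → ℕ) :
    nestedSum (Fin.append α β) = nestedSum β * nestedSum α := by
  induction n with
  | zero => simp [nestedSum, Fin.append_right_nil]
  | succ n ih =>
    have hinit : Fin.init (n := m + n) (Fin.append α β : Fin (m + (n + 1)) → ℕ) =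
        Fin.append α (Fin.init β) := by
      ext i
      refine Fin.addCases (fun i ↦ ?_) (fun i ↦ ?_) i
      · exact (Fin.append_left α β i).trans (Fin.append_left α (Fin.init β) i).symm
      · exact (Fin.append_right α β i.castSucc).trans (Fin.append_right α (Fin.init β) i).symm
    have hlast : Fin.append α β (Fin.last (m + n)) = β (Fin.last n) :=
      Fin.append_right α β (Fin.last n)
    refine (congrArg₂ (fun s γ ↦ J s * nestedSum γ) hlast hinit).trans ?_
    rw [ih, nestedSum, mul_assoc]

theorem nestedSum_update_last {n : ℕ} (α : Fin (n + 1) → ℕ) (t : ℕ) :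
    nestedSum (Function.update α (Fin.last n) (α (Fin.last n) + t)) = I₀ ^ t * nestedSum α := by
  simp only [nestedSum, Function.update_self, Fin.init_update_last, J_add, mul_assoc]

theorem nestedSum_incLast {n : ℕ} (hn : n ≠ 0) (α : Fin n → ℕ) :
    nestedSum (incLast α) = I₀ * nestedSum α := by
  obtain ⟨n, rfl⟩ := Nat.exists_eq_succ_of_ne_zero hn
  have hupdate : incLast α = Function.update α (Fin.last n) (α (Fin.last n) + 1) := by
    ext i
    refine Fin.lastCases (by simp [incLast]) (fun j ↦ ?_) i
    simp [incLast, j.isLt.ne]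
  rw [hupdate, nestedSum_update_last, pow_one]

theorem nestedSum_add_one {a : ℕ} (v : Fin (a + 1) → ℕ) :
    nestedSum (fun i ↦ v i + 1) = word I₁ I₀ a v * I₁ := by
  induction a with
  | zero => exact (mul_one _).trans (J_succ _)
  | succ a ih =>
    rw [nestedSum, J_succ, word, mul_assoc _ _ I₁, ← ih]
    rfl

theorem nestedSum_tail_add_one {a : ℕ} (v : Fin (a + 1) → ℕ) :
    nestedSum (Fin.tail fun i ↦ v i + 1) * I₀ ^ v 0 = word I₁ I₀ a v := by
  induction a with
  | zero => simp [nestedSum, word]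
  | succ a ih =>
    rw [nestedSum, word, ← ih (Fin.init v), mul_assoc, ← J_succ]
    rfl

/-- The unit mass at `0`, to which nested sums are applied. -/
noncomputable abbrev δ₀ : ℕ → ℝ := Pi.single 0 1

end Operators

section Nonneg

/-- The operators that map nonnegative sequences to nonnegative sequences. -/
noncomputable def nonnegOperators : Subsemiring (Module.End ℝ (ℕ → ℝ)) where
  carrier := {T | ∀ g, 0 ≤ g → 0 ≤ T g}
  zero_mem' _ _ := le_rfl
  one_mem' _ hg := hg
  add_mem' hS hT g hg := add_nonneg (hS g hg) (hT g hg)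
  mul_mem' hS hT g hg := hS _ (hT g hg)

theorem J_mem_nonnegOperators (s : ℕ) : J s ∈ nonnegOperators := fun _ hg m ↦
  div_nonneg (sum_nonneg fun j _ ↦ hg j) (by positivity)

theorem I₀_mem_nonnegOperators : I₀ ∈ nonnegOperators := fun _ hg m ↦
  div_nonneg (hg m) m.cast_nonneg

theorem nestedSum_mem_nonnegOperators {n : ℕ} (α : Fin n → ℕ) :
    nestedSum α ∈ nonnegOperators := by
  induction n with
  | zero => exact one_mem _
  | succ n ih => exact mul_mem (J_mem_nonnegOperators _) (ih _)

theorem wordSum_mem {A : Type*} [Semiring A] {R : Subsemiring A} {x y : A} (hx : x ∈ R)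
    (hy : y ∈ R) (a b : ℕ) : wordSum x y a b ∈ R := by
  induction a generalizing b with
  | zero => exact wordSum_zero_left x y b ▸ pow_mem hy b
  | succ a ih =>
    rw [wordSum_succ]
    exact sum_mem fun p _ ↦ mul_mem (mul_mem (pow_mem hy _) hx) (ih _)

theorem wordSum_mem_nonnegOperators (a b : ℕ) : wordSum I₁ I₀ a b ∈ nonnegOperators :=
  wordSum_mem (J_mem_nonnegOperators 1) I₀_mem_nonnegOperators a b

theorem apply_δ₀_nonneg {T : Module.End ℝ (ℕ → ℝ)} (hT : T ∈ nonnegOperators) (m : ℕ) :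
    0 ≤ T δ₀ m :=
  hT δ₀ (Pi.single_nonneg.2 zero_le_one) m

theorem smul_mem_nonnegOperators {c : ℝ} (hc : 0 ≤ c) {T : Module.End ℝ (ℕ → ℝ)}
    (hT : T ∈ nonnegOperators) : c • T ∈ nonnegOperators :=
  fun g hg ↦ smul_nonneg hc (hT g hg)

theorem summable_of_summable_add {S T : Module.End ℝ (ℕ → ℝ)} (hS : S ∈ nonnegOperators)
    (hT : T ∈ nonnegOperators) (h : Summable ((S + T) δ₀)) : Summable (S δ₀) :=
  h.of_nonneg_of_le (apply_δ₀_nonneg hS) fun m ↦ le_add_of_nonneg_right (apply_δ₀_nonneg hT m)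

theorem summable_of_summable_sum {ι : Type*} {s : Finset ι} {T : ι → Module.End ℝ (ℕ → ℝ)}
    (hT : ∀ i ∈ s, T i ∈ nonnegOperators) (h : Summable ((∑ i ∈ s, T i) δ₀)) {i : ι}
    (hi : i ∈ s) : Summable (T i δ₀) := by
  classical
  rw [← add_sum_erase s T hi] at h
  exact summable_of_summable_add (hT i hi) (sum_mem fun j hj ↦ hT j (mem_of_mem_erase hj)) h

end Nonneg

section NestedSums

open Filter Topology

open scoped Classical in
/-- The strictly increasing tuples with entries in `[1, N)`. -/
noncomputable def increasingTuples (n N : ℕ) : Finset (Fin n → ℕ) :=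
  {f ∈ Fintype.piFinset fun _ ↦ Ico 1 N | StrictMono f}

theorem mem_increasingTuples {n N : ℕ} (f : Fin n → ℕ) :
    f ∈ increasingTuples n N ↔ (∀ i, 1 ≤ f i ∧ f i < N) ∧ StrictMono f := by
  simp [increasingTuples]

theorem strictMono_iff_init {n : ℕ} {α : Type*} [Preorder α] (f : Fin (n + 1) → α) :
    StrictMono f ↔ StrictMono (Fin.init f) ∧ ∀ i, Fin.init f i < f (Fin.last n) := by
  refine ⟨fun h ↦ ⟨h.comp Fin.strictMono_castSucc, fun i ↦ h i.castSucc_lt_last⟩, ?_⟩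
  rintro ⟨hinit, hlast⟩ i j hij
  induction i using Fin.lastCases with
  | last => exact absurd hij (Fin.le_last j).not_gt
  | cast i =>
    induction j using Fin.lastCases with
    | last => exact hlast i
    | cast j => exact hinit hij

theorem sum_increasingTuples_succ {M : Type*} [AddCommMonoid M] {n N : ℕ}
    (F : (Fin (n + 1) → ℕ) → M) :
    ∑ f ∈ increasingTuples (n + 1) N, F f =
      ∑ m ∈ Ico 1 N, ∑ g ∈ increasingTuples n m, F (Fin.snoc g m) := by
  rw [Finset.sum_sigma']
  refine Finset.sum_bij' (fun f _ ↦ ⟨f (Fin.last n), Fin.init f⟩)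
    (fun p _ ↦ Fin.snoc p.2 p.1) ?_ ?_ (fun f _ ↦ Fin.snoc_init_self f) (fun p _ ↦ by simp)
    (fun f _ ↦ by rw [Fin.snoc_init_self])
  · intro f hf
    rw [mem_increasingTuples, strictMono_iff_init] at hf
    rw [mem_sigma, mem_increasingTuples, mem_Ico]
    exact ⟨hf.1 _, fun i ↦ ⟨(hf.1 i.castSucc).1, hf.2.2 i⟩, hf.2.1⟩
  · rintro ⟨m, g⟩ h
    simp only [mem_sigma, mem_increasingTuples, mem_Ico] at h
    obtain ⟨hm, hg, hmono⟩ := h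
    rw [mem_increasingTuples, strictMono_iff_init, Fin.forall_fin_succ']
    simp only [Fin.init_snoc, Fin.snoc_castSucc, Fin.snoc_last]
    exact ⟨⟨fun i ↦ ⟨(hg i).1, (hg i).2.trans hm.2⟩, hm⟩, hmono, fun i ↦ (hg i).2⟩

theorem sum_increasingTuples_prod {n N : ℕ} (α : Fin n → ℕ) (hN : 0 < N) :
    ∑ f ∈ increasingTuples n N, ∏ i, ((f i : ℝ) ^ α i)⁻¹ =
      ∑ m ∈ range N, nestedSum α δ₀ m := by
  induction n generalizing N with
  | zero =>
    have huniv : increasingTuples 0 N = univ := by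
      ext f
      simp only [mem_increasingTuples, IsEmpty.forall_iff, Subsingleton.strictMono, and_self,
        mem_univ]
    simp [huniv, nestedSum, hN]
  | succ n ih =>
    rw [sum_increasingTuples_succ, range_eq_Ico, sum_eq_sum_Ico_succ_bot hN]
    simp only [nestedSum, Module.End.mul_apply, J_apply, range_zero, sum_empty, zero_div, zero_add]
    refine sum_congr rfl fun m hm ↦ ?_
    rw [← ih (Fin.init α) (mem_Ico.1 hm).1, sum_div]
    refine sum_congr rfl fun g _ ↦ ?_
    simp [Fin.prod_univ_castSucc, Fin.init, div_eq_mul_inv, mul_comm]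

theorem hasSum_of_tendsto_sum_of_nonneg {ι : Type*} {F : ι → ℝ} {a : ℝ} {s : ℕ → Finset ι}
    (hF : ∀ i, 0 ≤ F i) (hs : Monotone s) (hcover : ∀ i, ∃ N, i ∈ s N)
    (h : Tendsto (fun N ↦ ∑ i ∈ s N, F i) atTop (𝓝 a)) : HasSum F a := by
  have hs_atTop : Tendsto s atTop atTop := tendsto_atTop_finset_of_monotone hs hcover
  have hmono : Monotone fun N ↦ ∑ i ∈ s N, F i := fun N M hNM ↦
    sum_le_sum_of_subset_of_nonneg (hs hNM) fun i _ _ ↦ hF i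
  have hsum : Summable F := summable_of_sum_le (c := a) hF fun u ↦ by
    obtain ⟨N, hN⟩ := (hs_atTop.eventually_ge_atTop u).exists
    exact (sum_le_sum_of_subset_of_nonneg hN fun i _ _ ↦ hF i).trans (hmono.ge_of_tendsto h N)
  exact tendsto_nhds_unique (hsum.hasSum.comp hs_atTop) h ▸ hsum.hasSum

theorem mzv_eq_of_hasSum {n : ℕ} (α : Fin n → ℕ) {a : ℝ} (h : HasSum (nestedSum α δ₀) a) :
    mzv α = a := by
  classical
  let s (N : ℕ) : Finset {f : Fin n → ℕ // StrictMono f ∧ ∀ i, 0 < f i} :=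
    (increasingTuples n N).subtype _
  have mem_s (f) (N : ℕ) : f ∈ s N ↔ ∀ i, f.1 i < N := by
    simp only [s, mem_subtype, mem_increasingTuples, f.2.1, and_true]
    exact forall_congr' fun i ↦ and_iff_right (f.2.2 i)
  refine (hasSum_of_tendsto_sum_of_nonneg (s := s) (fun f ↦ by positivity) ?_ ?_ ?_).tsum_eq
  · intro N M hNM f hf
    rw [mem_s] at hf ⊢
    exact fun i ↦ (hf i).trans_le hNM
  · refine fun f ↦ ⟨∑ i, f.1 i + 1, (mem_s f _).2 fun i ↦ Nat.lt_succ_of_le ?_⟩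
    exact single_le_sum (f := f.1) (fun _ _ ↦ Nat.zero_le _) (mem_univ i)
  · refine h.tendsto_sum_nat.congr' ?_
    filter_upwards [eventually_gt_atTop 0] with N hN
    rw [← sum_increasingTuples_prod α hN]
    exact (sum_subtype_of_mem (fun f : Fin n → ℕ ↦ ∏ i, ((f i : ℝ) ^ α i)⁻¹) fun f hf ↦
      ⟨((mem_increasingTuples f).1 hf).2, fun i ↦ (((mem_increasingTuples f).1 hf).1 i).1⟩).symm

theorem hasSum_sum_apply {ι : Type*} {s : Finset ι} {T : ι → Module.End ℝ (ℕ → ℝ)}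
    {g : ℕ → ℝ} {c : ι → ℝ} (h : ∀ i ∈ s, HasSum (T i g) (c i)) :
    HasSum ((∑ i ∈ s, T i) g) (∑ i ∈ s, c i) := by
  rw [LinearMap.sum_apply]
  simpa only [← Finset.sum_apply] using hasSum_sum h

theorem hasSum_sum_nestedSum {ι : Type*} {n : ℕ} (s : Finset ι) (α : ι → Fin n → ℕ)
    (h : Summable ((∑ i ∈ s, nestedSum (α i)) δ₀)) :
    HasSum ((∑ i ∈ s, nestedSum (α i)) δ₀) (∑ i ∈ s, mzv (α i)) := by
  refine hasSum_sum_apply fun i hi ↦ ?_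
  have h := (summable_of_summable_sum (fun i _ ↦ nestedSum_mem_nonnegOperators (α i)) h hi).hasSum
  exact mzv_eq_of_hasSum _ h ▸ h

end NestedSums

section BiSeries

/-- Formal power series in two commuting variables: the outer one is written `t`, the inner one
`s`. -/
abbrev BiSeries (A : Type*) [Semiring A] := PowerSeries (PowerSeries A)

variable {R A : Type*} [CommSemiring R] [Semiring A] [Algebra R A]

/-- The generating series `∑ a b, (μ s) ^ a * (ξ t) ^ b * wordSum x y a b`. -/
noncomputable def wordSeries (x y : A) (μ ξ : R) : BiSeries A :=
  .mk fun b ↦ .mk fun a ↦ (μ ^ a * ξ ^ b) • wordSum x y a b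

theorem coeff_coeff_wordSeries (x y : A) (μ ξ : R) (a b : ℕ) :
    coeff a (coeff b (wordSeries x y μ ξ)) = (μ ^ a * ξ ^ b) • wordSum x y a b := by
  simp [wordSeries]

theorem wordSeries_eq (x y : A) (μ ξ : R) :
    wordSeries x y μ ξ =
      1 + C X * C (C (μ • x)) * wordSeries x y μ ξ + X * C (C (ξ • y)) * wordSeries x y μ ξ := by
  ext b a : 2
  rcases b with _ | b <;> rcases a with _ | a <;>
    simp only [wordSeries, mul_assoc, map_add, coeff_C_mul, coeff_mk,
      coeff_zero_X_mul, coeff_succ_X_mul, coeff_one, if_true, if_false,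
      Nat.succ_ne_zero, add_zero, zero_add, smul_mul_smul_comm, wordSum_zero_left,
      wordSum_succ_zero, wordSum_succ_succ, pow_succ', smul_add, pow_zero, one_smul, mul_one,
      one_mul, mul_left_comm ξ]

theorem coeff_coeff_mul (P Q : BiSeries A) (k l : ℕ) :
    coeff k (coeff l (P * Q)) = ∑ a ∈ antidiagonal k, ∑ b ∈ antidiagonal l,
      coeff a.1 (coeff b.1 P) * coeff a.2 (coeff b.2 Q) := by
  rw [sum_comm]
  simp only [coeff_mul, map_sum]

theorem coeff_coeff_mul_wordSeries (x y : A) (μ ξ : R) (P : BiSeries A) (k l : ℕ) :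
    coeff k (coeff l (P * wordSeries x y μ ξ)) = ∑ a ∈ antidiagonal k, ∑ b ∈ antidiagonal l,
      (μ ^ a.1 * ξ ^ b.1) • (coeff a.2 (coeff b.2 P) * wordSum x y a.1 b.1) := by
  rw [coeff_coeff_mul, ← Nat.sum_antidiagonal_swap]
  refine sum_congr rfl fun a _ ↦ ?_
  rw [← Nat.sum_antidiagonal_swap]
  refine sum_congr rfl fun b _ ↦ ?_
  rw [coeff_coeff_wordSeries, mul_smul_comm]
  rfl

end BiSeries

section DifferentialEquation

variable {R : Type*} [CommRing R]

/-- The Euler derivation `z * d / dz`. -/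
noncomputable def θ : Derivation R R⟦X⟧ R⟦X⟧ := (X : R⟦X⟧) • derivative R

/-- The power series `z / (1 - z)`. -/
noncomputable def ω : R⟦X⟧ := .mk fun m ↦ if m = 0 then 0 else 1

theorem coeff_θ (f : R⟦X⟧) (m : ℕ) : coeff m (θ f) = m * coeff m f := by
  rcases m with _ | m
  · simp [θ]
  · simp [θ, coeff_succ_X_mul, coeff_derivative, mul_comm]

theorem θ_mul (f g : R⟦X⟧) : θ (f * g) = θ f * g + f * θ g := by
  rw [Derivation.leibniz, smul_eq_mul, smul_eq_mul]
  ring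

theorem θ_C_mul (r : R) (f : R⟦X⟧) : θ (C r * f) = C r * θ f := by
  rw [← smul_eq_C_mul, ← smul_eq_C_mul, Derivation.map_smul]

theorem coeff_ω_mul (f : R⟦X⟧) (m : ℕ) : coeff m (ω * f) = ∑ j ∈ range m, coeff j f := by
  rw [mul_comm, coeff_mul, Nat.sum_antidiagonal_eq_sum_range_succ_mk, sum_range_succ]
  simp only [ω, coeff_mk, tsub_self, if_true, mul_zero, add_zero]
  refine sum_congr rfl fun j hj ↦ ?_
  rw [if_neg (Nat.sub_ne_zero_of_lt (mem_range.1 hj)), mul_one]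

theorem eq_zero_of_θ_eq_mul [NoZeroDivisors R] {c f : R⟦X⟧}
    (hc : ∀ m : ℕ, m ≠ 0 → (m : R) ≠ constantCoeff c)
    (hf₀ : constantCoeff f = 0) (hf : θ f = c * f) : f = 0 := by
  ext m
  induction m using Nat.strong_induction_on with
  | _ m ih =>
  rcases eq_or_ne m 0 with rfl | hm
  · simpa using hf₀
  have hcoeff : (m : R) * coeff m f = constantCoeff c * coeff m f := by
    rw [← coeff_θ, hf, coeff_mul, Nat.sum_antidiagonal_eq_sum_range_succ_mk, sum_range_succ',
      sum_eq_zero fun i _ ↦ ?_]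
    · simp
    · rw [ih _ (Nat.sub_lt (Nat.pos_of_ne_zero hm) i.succ_pos), map_zero, mul_zero]
  exact (mul_eq_mul_right_iff.1 hcoeff).resolve_left (hc m hm)

theorem eq_of_θ_eq_mul_add [NoZeroDivisors R] {c f g h : R⟦X⟧}
    (hc : ∀ m : ℕ, m ≠ 0 → (m : R) ≠ constantCoeff c)
    (hfg : constantCoeff f = constantCoeff g) (hf : θ f = c * f + h) (hg : θ g = c * g + h) :
    f = g :=
  sub_eq_zero.1 <| eq_zero_of_θ_eq_mul hc (by rw [map_sub, hfg, sub_self])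
    (by rw [map_sub, hf, hg]; ring)

theorem eq_of_θ_eq [NoZeroDivisors R] [CharZero R] {f g : R⟦X⟧}
    (hfg : constantCoeff f = constantCoeff g) (h : θ f = θ g) : f = g :=
  eq_of_θ_eq_mul_add (c := 0) (fun m hm ↦ by simpa using hm) hfg (by simpa using h) (by simp)

end DifferentialEquation

section GeneratingSeries

/-- For a series `P` of operators on sequences in `s` and `t`, the power series in a third variable
`z` with coefficients the terms of the sequence `P δ₀`. -/
noncomputable def genSeries :
    BiSeries (Module.End ℝ (ℕ → ℝ)) →+ PowerSeries (BiSeries ℝ) where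
  toFun P := .mk fun m ↦ .mk fun l ↦ .mk fun k ↦ coeff k (coeff l P) δ₀ m
  map_zero' := by ext; simp
  map_add' P Q := by ext; simp

variable (μ ξ μ' ξ' : ℝ) (P : BiSeries (Module.End ℝ (ℕ → ℝ)))

theorem coeff_genSeries (k l m : ℕ) :
    coeff k (coeff l (coeff m (genSeries P))) = coeff k (coeff l P) δ₀ m := by
  simp [genSeries]

theorem genSeries_one : genSeries 1 = 1 := by
  ext m l k
  rw [coeff_genSeries]
  rcases m with _ | m <;> rcases l with _ | l <;> rcases k with _ | k <;> simp [coeff_one]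

theorem genSeries_C_X_mul : genSeries (C X * P) = C (C X) * genSeries P := by
  ext m l k
  rcases k with _ | k <;>
    simp [coeff_genSeries, coeff_succ_X_mul, coeff_zero_X_mul]

theorem genSeries_X_mul : genSeries (X * P) = C X * genSeries P := by
  ext m l k
  rw [coeff_genSeries, coeff_C_mul]
  rcases l with _ | l
  · rw [coeff_zero_X_mul, coeff_zero_X_mul]
    simp
  · rw [coeff_succ_X_mul, coeff_succ_X_mul, coeff_genSeries]

theorem genSeries_smul_mul (T : Module.End ℝ (ℕ → ℝ)) :
    genSeries (C (C (μ • T)) * P) = C (C (C μ)) * genSeries (C (C T) * P) := by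
  ext m l k
  simp [coeff_genSeries]

theorem constantCoeff_genSeries_I₀_mul : constantCoeff (genSeries (C (C I₀) * P)) = 0 := by
  ext l k
  rw [← coeff_zero_eq_constantCoeff_apply, coeff_genSeries]
  simp [I₀_apply]

theorem constantCoeff_genSeries_I₁_mul : constantCoeff (genSeries (C (C I₁) * P)) = 0 := by
  ext l k
  rw [← coeff_zero_eq_constantCoeff_apply, coeff_genSeries]
  simp [J_apply]

theorem coeff_θ_genSeries (k l m : ℕ) :
    coeff k (coeff l (coeff m (θ (genSeries P)))) = m * coeff k (coeff l P) δ₀ m := by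
  have hm : (m : BiSeries ℝ) = C (C (m : ℝ)) := by simp only [map_natCast]
  rw [coeff_θ, hm, coeff_C_mul, coeff_C_mul, coeff_genSeries]

variable {P} in
theorem θ_genSeries_I₀_mul (hP : constantCoeff (genSeries P) = 0) :
    θ (genSeries (C (C I₀) * P)) = genSeries P := by
  ext m l k
  rw [coeff_θ_genSeries, coeff_C_mul, coeff_C_mul, Module.End.mul_apply, I₀_apply]
  rcases eq_or_ne m 0 with rfl | hm
  · simp [hP]
  · rw [coeff_genSeries, mul_div_cancel₀ _ (Nat.cast_ne_zero.2 hm)]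

theorem θ_genSeries_I₁_mul : θ (genSeries (C (C I₁) * P)) = ω * genSeries P := by
  ext m l k
  rw [coeff_θ_genSeries, coeff_C_mul, coeff_C_mul, Module.End.mul_apply, J_apply, coeff_ω_mul]
  simp only [map_sum, coeff_genSeries, pow_one]
  rcases eq_or_ne m 0 with rfl | hm
  · simp
  · rw [mul_div_cancel₀ _ (Nat.cast_ne_zero.2 hm)]

/-- The connection form `ξ t dz / z + μ s dz / (1 - z)`, divided by `dz / z`. -/
noncomputable def kernel : PowerSeries (BiSeries ℝ) :=
  C (C (C μ * X)) * ω + C (C (C ξ) * X)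

theorem kernel_add : kernel (μ + μ') (ξ + ξ') = kernel μ ξ + kernel μ' ξ' := by
  simp only [kernel, map_add, add_mul]
  ring

theorem natCast_ne_constantCoeff_kernel (m : ℕ) (hm : m ≠ 0) :
    (m : BiSeries ℝ) ≠ constantCoeff (kernel μ ξ) := fun h ↦ hm <| by
  simpa [kernel, ω] using congrArg (fun r ↦ constantCoeff (constantCoeff r)) h

/-- The generating series of the words in `I₁` and `I₀`. -/
noncomputable abbrev opSeries : BiSeries (Module.End ℝ (ℕ → ℝ)) :=
  wordSeries I₁ I₀ μ ξ

theorem genSeries_opSeries_mul :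
    genSeries (opSeries μ ξ * P) = genSeries P +
      C (C X) * (C (C (C μ)) * genSeries (C (C I₁) * (opSeries μ ξ * P))) +
      C X * (C (C (C ξ)) * genSeries (C (C I₀) * (opSeries μ ξ * P))) := by
  rw [← genSeries_smul_mul, ← genSeries_smul_mul, ← genSeries_C_X_mul, ← genSeries_X_mul,
    ← map_add, ← map_add]
  conv_lhs => rw [opSeries, wordSeries_eq]
  simp only [add_mul, one_mul, mul_assoc]

variable {P}

theorem constantCoeff_genSeries_opSeries_mul (hP : constantCoeff (genSeries P) = 0) :
    constantCoeff (genSeries (opSeries μ ξ * P)) = 0 := by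
  rw [genSeries_opSeries_mul]
  simp only [map_add, map_mul, hP, constantCoeff_genSeries_I₀_mul,
    constantCoeff_genSeries_I₁_mul, mul_zero, add_zero]

theorem θ_genSeries_opSeries_mul (hP : constantCoeff (genSeries P) = 0) :
    θ (genSeries (opSeries μ ξ * P)) =
      kernel μ ξ * genSeries (opSeries μ ξ * P) + θ (genSeries P) := by
  conv_lhs => rw [genSeries_opSeries_mul]
  rw [map_add, map_add, θ_C_mul, θ_C_mul, θ_C_mul, θ_C_mul, θ_genSeries_I₁_mul,
    θ_genSeries_I₀_mul (constantCoeff_genSeries_opSeries_mul μ ξ hP), kernel]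
  simp only [map_mul]
  ring

variable {μ ξ} in
theorem eq_genSeries_opSeries_mul {f : PowerSeries (BiSeries ℝ)}
    (hP : constantCoeff (genSeries P) = 0) (hf₀ : constantCoeff f = 0)
    (hf : θ f = kernel μ ξ * f + θ (genSeries P)) : f = genSeries (opSeries μ ξ * P) :=
  eq_of_θ_eq_mul_add (natCast_ne_constantCoeff_kernel μ ξ)
    (by rw [hf₀, constantCoeff_genSeries_opSeries_mul μ ξ hP]) hf
    (θ_genSeries_opSeries_mul μ ξ hP)

end GeneratingSeries

section ProductFormula

variable (μ ξ μ' ξ' : ℝ)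

/-- The generating series of the operators `wordSum I₁ I₀ a b * I₁`, which produce multiple
polylogarithms. -/
noncomputable def polylogSeries : BiSeries (Module.End ℝ (ℕ → ℝ)) :=
  opSeries μ ξ * C (C I₁)

/-- The generating series of the operators `I₀ * wordSum I₁ I₀ a b * I₁`, which produce sums of
multiple zeta values of fixed weight and depth. -/
noncomputable def zetaSeries : BiSeries (Module.End ℝ (ℕ → ℝ)) :=
  C (C I₀) * polylogSeries μ ξ

theorem constantCoeff_genSeries_polylogSeries :
    constantCoeff (genSeries (polylogSeries μ ξ)) = 0 :=
  constantCoeff_genSeries_opSeries_mul μ ξ <| by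
    simpa using constantCoeff_genSeries_I₁_mul 1

theorem constantCoeff_genSeries_zetaSeries :
    constantCoeff (genSeries (zetaSeries μ ξ)) = 0 :=
  constantCoeff_genSeries_I₀_mul _

theorem θ_genSeries_polylogSeries :
    θ (genSeries (polylogSeries μ ξ)) = kernel μ ξ * genSeries (polylogSeries μ ξ) + ω := by
  have hI₁ : constantCoeff (genSeries (C (C I₁))) = 0 := by
    simpa using constantCoeff_genSeries_I₁_mul 1
  have hθ : θ (genSeries (C (C I₁))) = ω := by
    simpa [genSeries_one] using θ_genSeries_I₁_mul 1
  rw [polylogSeries, θ_genSeries_opSeries_mul μ ξ hI₁, hθ]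

theorem θ_genSeries_zetaSeries :
    θ (genSeries (zetaSeries μ ξ)) = genSeries (polylogSeries μ ξ) :=
  θ_genSeries_I₀_mul (constantCoeff_genSeries_polylogSeries μ ξ)

theorem genSeries_polylogSeries_mul_polylogSeries :
    genSeries (polylogSeries μ ξ) * genSeries (polylogSeries μ' ξ') =
      genSeries (opSeries (μ + μ') (ξ + ξ') *
        (C (C I₁) * (polylogSeries μ ξ + polylogSeries μ' ξ'))) := by
  refine eq_genSeries_opSeries_mul (constantCoeff_genSeries_I₁_mul _)
    (by rw [map_mul, constantCoeff_genSeries_polylogSeries, zero_mul]) ?_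
  rw [θ_mul, θ_genSeries_polylogSeries, θ_genSeries_polylogSeries, θ_genSeries_I₁_mul, kernel_add,
    map_add]
  ring

theorem genSeries_polylogSeries_mul_zetaSeries :
    genSeries (polylogSeries μ ξ) * genSeries (zetaSeries μ' ξ') =
      genSeries (opSeries μ ξ * (C (C I₁) * zetaSeries μ' ξ' +
        C (C I₀) * (opSeries (μ + μ') (ξ + ξ') *
          (C (C I₁) * (polylogSeries μ ξ + polylogSeries μ' ξ'))))) := by
  refine eq_genSeries_opSeries_mul ?_
    (by rw [map_mul, constantCoeff_genSeries_polylogSeries, zero_mul]) ?_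
  · rw [map_add, map_add, constantCoeff_genSeries_I₁_mul, constantCoeff_genSeries_I₀_mul, add_zero]
  · rw [θ_mul, θ_genSeries_polylogSeries, θ_genSeries_zetaSeries, map_add genSeries, map_add θ,
      θ_genSeries_I₁_mul, θ_genSeries_I₀_mul (constantCoeff_genSeries_opSeries_mul _ _
        (constantCoeff_genSeries_I₁_mul _)), ← genSeries_polylogSeries_mul_polylogSeries]
    ring

/-- The generating series of the operators `doubleOperator`. -/
noncomputable def doubleSeries : BiSeries (Module.End ℝ (ℕ → ℝ)) :=
  C (C I₀) * opSeries μ' ξ' * C (C I₁) * C (C I₀) * opSeries μ ξ * C (C I₁)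

/-- The generating series of the operators `tripleOperator`. -/
noncomputable def tripleSeries : BiSeries (Module.End ℝ (ℕ → ℝ)) :=
  C (C I₀) * (opSeries μ ξ + opSeries μ' ξ') * C (C I₀) * opSeries (μ + μ') (ξ + ξ') *
    C (C I₁) * opSeries μ ξ * C (C I₁)

theorem genSeries_zetaSeries_mul_zetaSeries :
    genSeries (zetaSeries μ ξ) * genSeries (zetaSeries μ' ξ') =
      genSeries ((doubleSeries μ ξ μ' ξ' + tripleSeries μ ξ μ' ξ') +
        (doubleSeries μ' ξ' μ ξ + tripleSeries μ' ξ' μ ξ)) := by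
  have hP (μ ξ μ' ξ' : ℝ) : constantCoeff (genSeries (opSeries μ ξ * (C (C I₁) * zetaSeries μ' ξ' +
      C (C I₀) * (opSeries (μ + μ') (ξ + ξ') *
        (C (C I₁) * (polylogSeries μ ξ + polylogSeries μ' ξ')))))) = 0 := by
    rw [← genSeries_polylogSeries_mul_zetaSeries, map_mul, constantCoeff_genSeries_polylogSeries,
      zero_mul]
  have hcoeff : (doubleSeries μ ξ μ' ξ' + tripleSeries μ ξ μ' ξ') +
      (doubleSeries μ' ξ' μ ξ + tripleSeries μ' ξ' μ ξ) = C (C I₀) *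
        (opSeries μ ξ * (C (C I₁) * zetaSeries μ' ξ' + C (C I₀) * (opSeries (μ + μ') (ξ + ξ') *
          (C (C I₁) * (polylogSeries μ ξ + polylogSeries μ' ξ')))) +
        opSeries μ' ξ' * (C (C I₁) * zetaSeries μ ξ + C (C I₀) * (opSeries (μ' + μ) (ξ' + ξ) *
          (C (C I₁) * (polylogSeries μ' ξ' + polylogSeries μ ξ))))) := by
    simp only [doubleSeries, tripleSeries, zetaSeries, polylogSeries, mul_add, add_mul, mul_assoc,
      add_comm μ' μ, add_comm ξ' ξ]
    abel
  have : CharZero (BiSeries ℝ) := algebraRat.charZero _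
  rw [hcoeff]
  refine eq_of_θ_eq ?_ ?_
  · rw [map_mul, constantCoeff_genSeries_zetaSeries, zero_mul, constantCoeff_genSeries_I₀_mul]
  · rw [θ_genSeries_I₀_mul (by rw [map_add, map_add, hP, hP, add_zero]), map_add genSeries,
      ← genSeries_polylogSeries_mul_zetaSeries, ← genSeries_polylogSeries_mul_zetaSeries, θ_mul,
      θ_genSeries_zetaSeries, θ_genSeries_zetaSeries]
    ring

/-- The operator whose sequences sum to `S2 a b a' b'`. -/
noncomputable def doubleOperator (a b a' b' : ℕ) : Module.End ℝ (ℕ → ℝ) :=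
  I₀ * wordSum I₁ I₀ a' b' * I₁ * I₀ * wordSum I₁ I₀ a b * I₁

/-- The operator whose sequences sum to `S3 a b a' b' a'' b''`. -/
noncomputable def tripleOperator (a b a' b' a'' b'' : ℕ) : Module.End ℝ (ℕ → ℝ) :=
  I₀ * wordSum I₁ I₀ a'' b'' * I₀ * wordSum I₁ I₀ a' b' * I₁ * wordSum I₁ I₀ a b * I₁

theorem coeff_coeff_doubleSeries (k l : ℕ) :
    coeff k (coeff l (doubleSeries μ ξ μ' ξ')) =
      ∑ a ∈ antidiagonal k, ∑ b ∈ antidiagonal l,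
        (μ ^ a.1 * μ' ^ a.2 * ξ ^ b.1 * ξ' ^ b.2) • doubleOperator a.1 b.1 a.2 b.2 := by
  rw [doubleSeries, coeff_mul_C, coeff_mul_C, coeff_coeff_mul_wordSeries]
  simp only [sum_mul]
  refine sum_congr rfl fun a _ ↦ sum_congr rfl fun b _ ↦ ?_
  simp only [coeff_mul_C, coeff_C_mul, coeff_coeff_wordSeries, doubleOperator, smul_mul_assoc,
    mul_smul_comm, smul_smul]
  congr 1
  ring

theorem coeff_coeff_tripleSeries (k l : ℕ) :
    coeff k (coeff l (tripleSeries μ ξ μ' ξ')) =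
      ∑ a ∈ antidiagonal k, ∑ a' ∈ antidiagonal a.2,
        ∑ b ∈ antidiagonal l, ∑ b' ∈ antidiagonal b.2,
          (μ ^ a.1 * ξ ^ b.1 * (μ + μ') ^ a'.1 * (ξ + ξ') ^ b'.1 *
            (μ ^ a'.2 * ξ ^ b'.2 + μ' ^ a'.2 * ξ' ^ b'.2)) •
            tripleOperator a.1 b.1 a'.1 b'.1 a'.2 b'.2 := by
  rw [tripleSeries, coeff_mul_C, coeff_mul_C, coeff_coeff_mul_wordSeries]
  simp only [sum_mul]
  refine sum_congr rfl fun a _ ↦ ?_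
  rw [sum_comm]
  refine sum_congr rfl fun b _ ↦ ?_
  rw [coeff_mul_C, coeff_mul_C, coeff_coeff_mul_wordSeries]
  simp only [sum_mul, smul_sum]
  refine sum_congr rfl fun a' _ ↦ sum_congr rfl fun b' _ ↦ ?_
  simp only [coeff_mul_C, coeff_C_mul, map_add, coeff_coeff_wordSeries, tripleOperator, ← add_smul,
    smul_mul_assoc, mul_smul_comm, smul_smul]
  congr 1
  ring

end ProductFormula

section CompositionSums

theorem tsum_comp (a b : ℕ) (F : (Fin (a + 1) → ℕ) → ℝ) :
    ∑' α : Comp (a + 1) (a + b + 1), F α.1 =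
      ∑ v ∈ Nat.antidiagonalTuple (a + 1) b, F (fun i ↦ v i + 1) := by
  have sum_add_one (v : Fin (a + 1) → ℕ) : ∑ i, (v i + 1) = ∑ i, v i + (a + 1) := by
    simp [sum_add_distrib]
  let e : Nat.antidiagonalTuple (a + 1) b ≃ Comp (a + 1) (a + b + 1) :=
    { toFun v := ⟨fun i ↦ v.1 i + 1, fun i ↦ (v.1 i).succ_pos, by
        rw [sum_add_one, Nat.mem_antidiagonalTuple.1 v.2]
        ring⟩
      invFun α := ⟨fun i ↦ α.1 i - 1, by
        have h := sum_add_one fun i ↦ α.1 i - 1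
        simp only [Nat.sub_add_cancel (α.2.1 _), α.2.2] at h
        exact Nat.mem_antidiagonalTuple.2 (by omega)⟩
      left_inv v := rfl
      right_inv α := Subtype.ext <| funext fun i ↦ Nat.sub_add_cancel (α.2.1 i) }
  rw [← e.tsum_eq]
  exact Finset.tsum_subtype _ fun v : Fin (a + 1) → ℕ ↦ F fun i ↦ v i + 1

theorem S2_eq_sum (a b a' b' : ℕ) :
    S2 a b a' b' =
      ∑ p ∈ Nat.antidiagonalTuple (a + 1) b ×ˢ Nat.antidiagonalTuple (a' + 1) b',
        mzv (Fin.append (incLast fun i ↦ p.1 i + 1) (incLast fun i ↦ p.2 i + 1)) := by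
  rw [sum_product]
  refine (tsum_comp a b fun α ↦ ∑' β : Comp (a' + 1) (a' + b' + 1),
    mzv (Fin.append (incLast α) (incLast β.1))).trans (sum_congr rfl fun v _ ↦ ?_)
  exact tsum_comp a' b' fun β ↦ mzv (Fin.append (incLast fun i ↦ v i + 1) (incLast β))

theorem doubleOperator_eq_sum (a b a' b' : ℕ) :
    doubleOperator a b a' b' =
      ∑ p ∈ Nat.antidiagonalTuple (a + 1) b ×ˢ Nat.antidiagonalTuple (a' + 1) b',
        nestedSum (Fin.append (incLast fun i ↦ p.1 i + 1) (incLast fun i ↦ p.2 i + 1)) := by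
  simp only [sum_product, nestedSum_append, nestedSum_incLast (Nat.succ_ne_zero _),
    nestedSum_add_one, doubleOperator, wordSum, mul_sum, sum_mul, mul_assoc]

theorem hasSum_doubleOperator {a b a' b' : ℕ} (h : Summable (doubleOperator a b a' b' δ₀)) :
    HasSum (doubleOperator a b a' b' δ₀) (S2 a b a' b') := by
  rw [doubleOperator_eq_sum] at h ⊢
  exact S2_eq_sum a b a' b' ▸ hasSum_sum_nestedSum _ _ h

/-- The index `(α₀, …, β_{a'} + γ₀, γ₁, …, γ_{a''} + 1)` of a summand of `S3`. -/
def tripleIndex {a a' a'' : ℕ} (α : Fin (a + 1) → ℕ) (β : Fin (a' + 1) → ℕ)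
    (γ : Fin (a'' + 1) → ℕ) : Fin (a + 1 + (a' + 1 + a'')) → ℕ :=
  incLast (Fin.append α (Fin.append
    (Function.update β (Fin.last a') (β (Fin.last a') + γ 0)) (Fin.tail γ)))

theorem S3_eq_sum (a b a' b' a'' b'' : ℕ) :
    S3 a b a' b' a'' b'' =
      ∑ p ∈ Nat.antidiagonalTuple (a + 1) b ×ˢ
          (Nat.antidiagonalTuple (a' + 1) b' ×ˢ Nat.antidiagonalTuple (a'' + 1) b''),
        mzv (tripleIndex (p.1 · + 1) (p.2.1 · + 1) (p.2.2 · + 1)) := by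
  simp only [sum_product]
  refine (tsum_comp a b fun α ↦ ∑' (β : Comp (a' + 1) (a' + b' + 1))
    (γ : Comp (a'' + 1) (a'' + b'' + 1)), mzv (tripleIndex α β.1 γ.1)).trans
    (sum_congr rfl fun u _ ↦ ?_)
  refine (tsum_comp a' b' fun β ↦ ∑' γ : Comp (a'' + 1) (a'' + b'' + 1),
    mzv (tripleIndex (u · + 1) β γ.1)).trans (sum_congr rfl fun v _ ↦ ?_)
  exact tsum_comp a'' b'' fun γ ↦ mzv (tripleIndex (u · + 1) (v · + 1) γ)

theorem nestedSum_tripleIndex {a a' a'' : ℕ} (u : Fin (a + 1) → ℕ) (v : Fin (a' + 1) → ℕ)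
    (w : Fin (a'' + 1) → ℕ) :
    nestedSum (tripleIndex (u · + 1) (v · + 1) (w · + 1)) =
      I₀ * word I₁ I₀ a'' w * I₀ * word I₁ I₀ a' v * I₁ * word I₁ I₀ a u * I₁ := by
  rw [tripleIndex, nestedSum_incLast (by omega), nestedSum_append, nestedSum_append,
    nestedSum_update_last, nestedSum_add_one, nestedSum_add_one, pow_succ,
    ← nestedSum_tail_add_one w]
  simp only [mul_assoc]

theorem tripleOperator_eq_sum (a b a' b' a'' b'' : ℕ) :
    tripleOperator a b a' b' a'' b'' =
      ∑ p ∈ Nat.antidiagonalTuple (a + 1) b ×ˢ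
          (Nat.antidiagonalTuple (a' + 1) b' ×ˢ Nat.antidiagonalTuple (a'' + 1) b''),
        nestedSum (tripleIndex (p.1 · + 1) (p.2.1 · + 1) (p.2.2 · + 1)) := by
  simp only [sum_product, nestedSum_tripleIndex, tripleOperator, wordSum, mul_sum, sum_mul]

theorem hasSum_tripleOperator {a b a' b' a'' b'' : ℕ}
    (h : Summable (tripleOperator a b a' b' a'' b'' δ₀)) :
    HasSum (tripleOperator a b a' b' a'' b'' δ₀) (S3 a b a' b' a'' b'') := by
  rw [tripleOperator_eq_sum] at h ⊢
  exact S3_eq_sum a b a' b' a'' b'' ▸ hasSum_sum_nestedSum _ _ h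

theorem hasSum_mzv_singleton {n : ℕ} (hn : 2 ≤ n) :
    HasSum (fun m : ℕ ↦ (((m + 1 : ℕ) : ℝ) ^ n)⁻¹) (mzv ![n]) := by
  have hn₀ : n ≠ 0 := by omega
  have heq : nestedSum ![n] δ₀ = fun m : ℕ ↦ ((m : ℝ) ^ n)⁻¹ := by
    ext m
    have hm : ∑ j ∈ range m, δ₀ j = if m = 0 then 0 else 1 := by
      simp [δ₀, Pi.single_apply, Nat.pos_iff_ne_zero]
    rcases eq_or_ne m 0 with rfl | hm₀ <;> simp [nestedSum, J_apply, *]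
  have h := (Real.summable_nat_pow_inv.2 hn).hasSum
  rw [mzv_eq_of_hasSum ![n] (a := ∑' m : ℕ, ((m : ℝ) ^ n)⁻¹) (by rwa [heq])]
  simpa [hn₀] using (hasSum_nat_add_iff' 1).2 h

end CompositionSums

section CoefficientUniqueness

open Filter Topology
open scoped ENNReal

theorem eq_of_tsum_mul_pow_eq {c d : ℕ → ℝ} {r : ℝ} (hr : 0 < r)
    (hc : Summable fun n ↦ c n * r ^ n) (hd : Summable fun n ↦ d n * r ^ n)
    (h : ∀ y ∈ Set.Ioo 0 r, ∑' n, c n * y ^ n = ∑' n, d n * y ^ n) : c = d := by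
  have hasFPowerSeriesAt {c : ℕ → ℝ} (hc : Summable fun n ↦ c n * r ^ n) :
      HasFPowerSeriesAt (fun y ↦ ∑' n, c n * y ^ n) (FormalMultilinearSeries.ofScalars ℝ c) 0 := by
    have hle : (r.toNNReal : ℝ≥0∞) ≤ (FormalMultilinearSeries.ofScalars ℝ c).radius := by
      refine FormalMultilinearSeries.le_radius_of_summable _ (hc.norm.congr fun n ↦ ?_)
      simp [hr.le, abs_of_pos hr]
    convert (FormalMultilinearSeries.hasFPowerSeriesOnBall _
      (lt_of_lt_of_le (by simpa using hr) hle)).hasFPowerSeriesAt using 2 with y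
    exact tsum_congr fun n ↦ by simp [mul_comm]
  have hc' := hasFPowerSeriesAt hc
  have hd' := hasFPowerSeriesAt hd
  have hfreq : ∃ᶠ y in 𝓝[≠] (0 : ℝ), ∑' n, c n * y ^ n = ∑' n, d n * y ^ n :=
    (eventually_of_mem (Ioo_mem_nhdsGT hr) h).frequently.filter_mono
      (nhdsWithin_mono _ fun _ hy ↦ ne_of_gt hy)
  have heq := (hc'.analyticAt.frequently_eq_iff_eventually_eq hd'.analyticAt).1 hfreq
  exact FormalMultilinearSeries.ofScalars_series_injective ℝ ℝ
    (hc'.eq_formalMultilinearSeries_of_eventually hd' heq)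

theorem eq_of_tsum_mul_ofReal_pow_eq {p q : ℕ → ℝ≥0∞} {r : ℝ} (hr : 0 < r)
    (hq : ∑' n, q n * ENNReal.ofReal r ^ n ≠ ⊤)
    (h : ∀ y ∈ Set.Ioc 0 r, ∑' n, p n * ENNReal.ofReal y ^ n = ∑' n, q n * ENNReal.ofReal y ^ n) :
    p = q := by
  have hp : ∑' n, p n * ENNReal.ofReal r ^ n ≠ ⊤ := h r ⟨hr, le_rfl⟩ ▸ hq
  have ne_top {p : ℕ → ℝ≥0∞} (hp : ∑' n, p n * ENNReal.ofReal r ^ n ≠ ⊤) (n : ℕ) : p n ≠ ⊤ :=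
    fun hn ↦ ENNReal.ne_top_of_tsum_ne_top hp n (by simp [hn, ENNReal.top_mul, hr])
  have toReal_tsum {p : ℕ → ℝ≥0∞} (hp : ∀ n, p n ≠ ⊤) {y : ℝ} (hy : 0 ≤ y) :
      (∑' n, p n * ENNReal.ofReal y ^ n).toReal = ∑' n, (p n).toReal * y ^ n := by
    rw [ENNReal.tsum_toReal_eq fun n ↦ ENNReal.mul_ne_top (hp n) (by simp)]
    simp [hy]
  have summable {p : ℕ → ℝ≥0∞} (hp : ∑' n, p n * ENNReal.ofReal r ^ n ≠ ⊤) :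
      Summable fun n ↦ (p n).toReal * r ^ n := by
    simpa [hr.le] using ENNReal.summable_toReal hp
  have key := eq_of_tsum_mul_pow_eq hr (summable hp) (summable hq) fun y hy ↦ by
    rw [← toReal_tsum (ne_top hp) hy.1.le, ← toReal_tsum (ne_top hq) hy.1.le,
      h y ⟨hy.1, hy.2.le⟩]
  ext1 n
  exact (ENNReal.toReal_eq_toReal_iff' (ne_top hp n) (ne_top hq n)).1 (congrFun key n)

end CoefficientUniqueness

section ConnectedSum

open Filter Topology
open scoped ENNReal

variable {y : ℝ}

/-- The connector `(1 - y)_m (1 - y)_n / (1 - y)_{m + n}` (rising factorials), which at `y = 0` is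
the inverse binomial coefficient. -/
noncomputable def connector (y : ℝ) (m n : ℕ) : ℝ :=
  (ascPochhammer ℝ m).eval (1 - y) * (ascPochhammer ℝ n).eval (1 - y) /
    (ascPochhammer ℝ (m + n)).eval (1 - y)

theorem connector_comm (y : ℝ) (m n : ℕ) : connector y m n = connector y n m := by
  rw [connector, connector, add_comm m n, mul_comm (Polynomial.eval _ _)]

theorem connector_pos (hy : y < 1) (m n : ℕ) : 0 < connector y m n := by
  have hpos (n : ℕ) := ascPochhammer_pos n (1 - y) (by linarith)
  exact div_pos (mul_pos (hpos m) (hpos n)) (hpos (m + n))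

theorem connector_zero_left (hy : y < 1) (n : ℕ) : connector y 0 n = 1 := by
  have hpos := ascPochhammer_pos n (1 - y) (by linarith)
  simp [connector, hpos.ne']

theorem connector_succ (hy : y < 1) (m n : ℕ) :
    connector y (m + 1) n = connector y m n * ((m + 1 - y) / (m + n + 1 - y)) := by
  have hne (n : ℕ) : (ascPochhammer ℝ n).eval (1 - y) ≠ 0 :=
    (ascPochhammer_pos n (1 - y) (by linarith)).ne'
  have hmn : (m + n + 1 - y : ℝ) ≠ 0 := by
    have : (0 : ℝ) ≤ m + n := by positivity
    linarith
  have hmn' : (1 - y + (m + n) : ℝ) ≠ 0 := by convert hmn using 1; ring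
  rw [connector, connector, add_right_comm, ascPochhammer_succ_eval, ascPochhammer_succ_eval]
  push_cast
  field_simp [hne]
  ring

theorem connector_sub_connector_succ (hy : y < 1) (m n : ℕ) :
    connector y m n - connector y (m + 1) n = n * (connector y (m + 1) n / (m + 1 - y)) := by
  have h₁ : (m + 1 - y : ℝ) ≠ 0 := by linarith [m.cast_nonneg (α := ℝ)]
  have h₂ : (m + n + 1 - y : ℝ) ≠ 0 := by
    linarith [m.cast_nonneg (α := ℝ), n.cast_nonneg (α := ℝ)]
  rw [connector_succ hy]
  field_simp
  ring

theorem tendsto_connector (hy : y < 1) {n : ℕ} (hn : n ≠ 0) :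
    Tendsto (fun m ↦ connector y m n) atTop (𝓝 0) := by
  have h_one (m : ℕ) : connector y m 1 = (1 - y) / (m + 1 - y) := by
    rw [connector_comm, connector_succ hy, connector_zero_left hy]
    simp
  have hanti (m : ℕ) : Antitone (connector y m) := antitone_nat_of_succ_le fun n ↦ by
    have hn : (0 : ℝ) ≤ n + 1 - y := by linarith [n.cast_nonneg (α := ℝ)]
    rw [connector_comm y m n, connector_comm, ← sub_nonneg, connector_sub_connector_succ hy]
    exact mul_nonneg m.cast_nonneg (div_nonneg (connector_pos hy _ _).le hn)
  refine squeeze_zero (fun m ↦ (connector_pos hy m n).le)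
    (fun m ↦ (hanti m (Nat.one_le_iff_ne_zero.2 hn)).trans_eq (h_one m)) ?_
  simp only [add_sub_assoc]
  exact (tendsto_atTop_add_const_right _ _ tendsto_natCast_atTop_atTop).const_div_atTop _

theorem hasSum_connector (hy : y < 1) (m : ℕ) {n : ℕ} (hn : n ≠ 0) :
    HasSum (fun i : ℕ ↦ connector y (m + i + 1) n / ((m + i + 1 : ℕ) - y))
      (connector y m n / n) := by
  have hpos (i : ℕ) : 0 < ((m + i + 1 : ℕ) - y : ℝ) := by
    have : (0 : ℝ) ≤ m + i := by positivity
    push_cast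
    linarith
  rw [hasSum_iff_tendsto_nat_of_nonneg fun i ↦ div_nonneg (connector_pos hy _ _).le (hpos i).le]
  have hpartial (N : ℕ) : ∑ i ∈ range N, connector y (m + i + 1) n / ((m + i + 1 : ℕ) - y) =
      (connector y m n - connector y (m + N) n) / n := by
    rw [eq_div_iff (by exact_mod_cast hn), sum_mul]
    refine .trans (sum_congr rfl fun i _ ↦ ?_) (sum_range_sub' (fun i ↦ connector y (m + i) n) N)
    rw [← add_assoc, connector_sub_connector_succ hy, mul_comm, Nat.cast_succ]
  simp only [hpartial]
  have hlim := (tendsto_connector hy hn).comp (tendsto_add_atTop_nat m)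
  simpa [Function.comp_def, add_comm m] using (hlim.const_sub _).div_const (n : ℝ)

/-- The weights transported by the connected sums: summing against `connectedWeight y 0` is
summing against `1 / m`, and each integration moves one factor `1 / n` into the weight. -/
noncomputable def connectedWeight (y : ℝ) (r m : ℕ) : ℝ≥0∞ :=
  ∑' n : ℕ, ENNReal.ofReal (connector y m (n + 1) / ((n + 1 : ℕ) ^ r * ((n + 1 : ℕ) - y)))

theorem tsum_ofReal_of_hasSum {ι : Type*} {f : ι → ℝ} {a : ℝ} (hf : ∀ i, 0 ≤ f i)
    (h : HasSum f a) : ∑' i, ENNReal.ofReal (f i) = ENNReal.ofReal a := by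
  rw [← ENNReal.ofReal_tsum_of_nonneg hf h.summable, h.tsum_eq]

theorem connectedWeight_zero (hy : y < 1) {m : ℕ} (hm : m ≠ 0) :
    connectedWeight y 0 m = ENNReal.ofReal (m : ℝ)⁻¹ := by
  have h := hasSum_connector hy 0 hm
  simp only [zero_add, connector_zero_left hy, one_div] at h
  rw [← tsum_ofReal_of_hasSum (fun i ↦ ?_) h, connectedWeight]
  · simp only [connector_comm y m, pow_zero, one_mul]
  · have : (0 : ℝ) ≤ i := i.cast_nonneg
    push_cast
    exact div_nonneg (connector_pos hy _ _).le (by linarith)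

theorem tsum_connectedWeight_div (hy : y < 1) (r m : ℕ) :
    ∑' i : ℕ, ENNReal.ofReal ((m + i + 1 : ℕ) - y)⁻¹ * connectedWeight y r (m + i + 1) =
      connectedWeight y (r + 1) m := by
  have hpos (i : ℕ) : 0 < ((i + 1 : ℕ) - y : ℝ) := by
    have : (0 : ℝ) ≤ i := i.cast_nonneg
    push_cast
    linarith
  simp only [connectedWeight, ← ENNReal.tsum_mul_left]
  rw [ENNReal.tsum_comm]
  refine tsum_congr fun n ↦ ?_
  have h := (hasSum_connector hy m n.succ_ne_zero).div_const ((n + 1 : ℕ) ^ r * ((n + 1 : ℕ) - y))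
  have hn := hpos n
  have hterm (i : ℕ) : 0 ≤ connector y (m + i + 1) (n + 1) / ((m + i + 1 : ℕ) - y) /
      ((n + 1 : ℕ) ^ r * ((n + 1 : ℕ) - y)) :=
    div_nonneg (div_nonneg (connector_pos hy _ _).le (hpos _).le) (by positivity)
  rw [Nat.succ_eq_add_one, div_div (connector y m (n + 1)), ← mul_assoc, ← pow_succ'] at h
  rw [← tsum_ofReal_of_hasSum hterm h]
  refine tsum_congr fun i ↦ ?_
  rw [← ENNReal.ofReal_mul (inv_nonneg.2 (hpos _).le)]
  congr 1
  ring

/-- The operator `(1 - y I₀)⁻¹ I₁`, whose powers generate the word sums with a given number of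
letters `I₁`. -/
noncomputable def geomI₁ (y : ℝ) : Module.End ℝ (ℕ → ℝ) where
  toFun g m := (∑ j ∈ range m, g j) / (m - y)
  map_add' f g := by ext m; simp [add_div, sum_add_distrib]
  map_smul' c g := by ext m; simp [mul_div_assoc, ← mul_sum]

theorem geomI₁_apply (y : ℝ) (g : ℕ → ℝ) (m : ℕ) :
    geomI₁ y g m = (∑ j ∈ range m, g j) / (m - y) := rfl

theorem geomI₁_mem_nonnegOperators (hy : y < 1) : geomI₁ y ∈ nonnegOperators := by
  intro g hg m
  rw [geomI₁_apply]
  rcases m with _ | m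
  · simp
  · have : (0 : ℝ) ≤ m := m.cast_nonneg
    push_cast
    exact div_nonneg (sum_nonneg fun j _ ↦ hg j) (by linarith)

theorem tsum_sum_range_mul (f c : ℕ → ℝ≥0∞) :
    ∑' m, (∑ j ∈ range m, f j) * c m = ∑' j, f j * ∑' i, c (j + i + 1) := by
  have hleft (m : ℕ) : (∑ j ∈ range m, f j) * c m = ∑' j, if j < m then f j * c m else 0 := by
    rw [tsum_eq_sum (s := range m) fun j hj ↦ if_neg (by simpa using hj), sum_mul]
    exact sum_congr rfl fun j hj ↦ (if_pos (by simpa using hj)).symm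
  have hright (j : ℕ) : f j * ∑' i, c (j + i + 1) = ∑' m, if j < m then f j * c m else 0 := by
    have hzero : ∑ m ∈ range (j + 1), (if j < m then f j * c m else 0) = 0 :=
      sum_eq_zero fun m hm ↦ if_neg (Nat.lt_succ_iff.1 (mem_range.1 hm)).not_gt
    rw [← ENNReal.tsum_mul_left, ← Summable.sum_add_tsum_nat_add' (k := j + 1)
      (f := fun m ↦ if j < m then f j * c m else 0) ENNReal.summable, hzero, zero_add]
    refine tsum_congr fun i ↦ ?_
    rw [if_pos (by omega), add_right_comm, add_comm i, add_right_comm]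
  simp only [hleft, hright]
  exact ENNReal.tsum_comm

theorem tsum_geomI₁_mul_connectedWeight (hy : y < 1) {g : ℕ → ℝ} (hg : 0 ≤ g) (r : ℕ) :
    ∑' m, ENNReal.ofReal (geomI₁ y g m) * connectedWeight y r m =
      ∑' m, ENNReal.ofReal (g m) * connectedWeight y (r + 1) m := by
  simp only [← tsum_connectedWeight_div hy]
  rw [← tsum_sum_range_mul (fun j ↦ ENNReal.ofReal (g j))
    fun m ↦ ENNReal.ofReal (m - y)⁻¹ * connectedWeight y r m]
  refine tsum_congr fun m ↦ ?_
  rw [geomI₁_apply, div_eq_mul_inv, ENNReal.ofReal_mul (sum_nonneg fun j _ ↦ hg j),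
    ENNReal.ofReal_sum_of_nonneg fun j _ ↦ hg j, mul_assoc]

theorem tsum_geomI₁_pow_mul_connectedWeight (hy : y < 1) {g : ℕ → ℝ} (hg : 0 ≤ g) (a r : ℕ) :
    ∑' m, ENNReal.ofReal ((geomI₁ y ^ a) g m) * connectedWeight y r m =
      ∑' m, ENNReal.ofReal (g m) * connectedWeight y (r + a) m := by
  induction a generalizing r with
  | zero => simp
  | succ a ih =>
    rw [pow_succ', Module.End.mul_apply, tsum_geomI₁_mul_connectedWeight hy
      (pow_mem (geomI₁_mem_nonnegOperators hy) a g hg), ih, add_right_comm, add_assoc]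

theorem tsum_I₀_geomI₁_pow (hy : y < 1) (a : ℕ) :
    ∑' m, ENNReal.ofReal (I₀ ((geomI₁ y ^ (a + 1)) δ₀) m) =
      ∑' n : ℕ, ENNReal.ofReal ((n + 1 : ℕ) ^ (a + 1) * ((n + 1 : ℕ) - y))⁻¹ := by
  calc ∑' m, ENNReal.ofReal (I₀ ((geomI₁ y ^ (a + 1)) δ₀) m)
      = ∑' m, ENNReal.ofReal ((geomI₁ y ^ (a + 1)) δ₀ m) * connectedWeight y 0 m := by
        refine tsum_congr fun m ↦ ?_
        rcases eq_or_ne m 0 with rfl | hm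
        · simp [I₀_apply, pow_succ', geomI₁_apply]
        · rw [connectedWeight_zero hy hm, I₀_apply, div_eq_mul_inv, ENNReal.ofReal_mul
            (apply_δ₀_nonneg (pow_mem (geomI₁_mem_nonnegOperators hy) _) m)]
    _ = connectedWeight y (a + 1) 0 := by
        rw [tsum_geomI₁_pow_mul_connectedWeight hy (Pi.single_nonneg.2 zero_le_one), zero_add,
          tsum_eq_single 0 fun m hm ↦ by simp [hm]]
        simp
    _ = _ := by simp only [connectedWeight, connector_zero_left hy, one_div]

end ConnectedSum

section SumFormula

open scoped ENNReal

theorem hasSum_sum_mul_antidiagonal {f g : ℕ → ℝ} {s t : ℝ} (hf : HasSum f s) (hg : HasSum g t) :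
    HasSum (fun n ↦ ∑ p ∈ antidiagonal n, f p.1 * g p.2) (s * t) := by
  have hf' := hf.summable.norm
  have hg' := hg.summable.norm
  rw [← hf.tsum_eq, ← hg.tsum_eq, tsum_mul_tsum_eq_tsum_sum_antidiagonal_of_summable_norm hf' hg']
  exact (summable_norm_sum_mul_antidiagonal_of_summable_norm hf' hg').of_norm.hasSum

theorem hasSum_pow_mul_inv_pow {M y : ℝ} (hM : |y| < M) :
    HasSum (fun b ↦ y ^ b * (M ^ (b + 1))⁻¹) (M - y)⁻¹ := by
  have hM₀ : 0 < M := (abs_nonneg y).trans_lt hM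
  have hlt : |y / M| < 1 := by rwa [abs_div, abs_of_pos hM₀, div_lt_one hM₀]
  have h := (hasSum_geometric_of_abs_lt_one hlt).mul_left M⁻¹
  rw [← mul_inv, mul_sub, mul_one, mul_div_cancel₀ y hM₀.ne'] at h
  refine h.congr_fun fun b ↦ ?_
  rw [div_pow, pow_succ']
  field_simp

theorem hasSum_geomI₁ {y : ℝ} (hy : |y| < 1) {u : ℕ → ℕ → ℝ} {g : ℕ → ℝ}
    (h : ∀ m, HasSum (fun b ↦ y ^ b * u b m) (g m)) (m : ℕ) :
    HasSum (fun b ↦ y ^ b * ∑ p ∈ antidiagonal b, J (p.1 + 1) (u p.2) m) (geomI₁ y g m) := by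
  simp only [J_apply, geomI₁_apply]
  rcases eq_or_ne m 0 with rfl | hm
  · simp [hasSum_zero]
  have hm₁ : (1 : ℝ) ≤ m := by exact_mod_cast Nat.one_le_iff_ne_zero.2 hm
  rw [div_eq_inv_mul]
  refine (hasSum_sum_mul_antidiagonal (hasSum_pow_mul_inv_pow (hy.trans_le hm₁))
    (hasSum_sum fun j (_ : j ∈ range m) ↦ h j)).congr_fun fun b ↦ ?_
  rw [mul_sum]
  refine sum_congr rfl fun p hp ↦ ?_
  rw [← HasAntidiagonal.mem_antidiagonal.1 hp, ← mul_sum]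
  ring

theorem hasSum_wordSum {y : ℝ} (hy : |y| < 1) (g : ℕ → ℝ) (a m : ℕ) :
    HasSum (fun b ↦ y ^ b * (wordSum I₁ I₀ a b * I₁) g m) ((geomI₁ y ^ (a + 1)) g m) := by
  induction a generalizing m with
  | zero =>
    simp only [wordSum_zero_left, ← J_succ, J_apply, zero_add, pow_one, geomI₁_apply]
    rcases eq_or_ne m 0 with rfl | hm
    · simp [hasSum_zero]
    have hm₁ : (1 : ℝ) ≤ m := by exact_mod_cast Nat.one_le_iff_ne_zero.2 hm
    refine ((hasSum_pow_mul_inv_pow (hy.trans_le hm₁)).mul_left (∑ j ∈ range m, g j)).congr_fun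
      fun b ↦ ?_
    ring
  | succ a ih =>
    rw [pow_succ', Module.End.mul_apply]
    refine (hasSum_geomI₁ hy ih m).congr_fun fun b ↦ ?_
    simp only [wordSum_succ, ← J_succ, mul_assoc (J _), sum_mul, LinearMap.sum_apply,
      Finset.sum_apply, Module.End.mul_apply]

theorem tsum_ofReal_mul_pow_eq {f : ℕ → ℕ → ℝ} {g : ℕ → ℝ} {y : ℝ} (hy : 0 ≤ y)
    (hf : ∀ b m, 0 ≤ f b m) (h : ∀ m, HasSum (fun b ↦ y ^ b * f b m) (g m)) :
    ∑' b, (∑' m, ENNReal.ofReal (f b m)) * ENNReal.ofReal y ^ b =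
      ∑' m, ENNReal.ofReal (g m) := by
  simp only [← ENNReal.tsum_mul_right]
  rw [ENNReal.tsum_comm]
  refine tsum_congr fun m ↦ ?_
  rw [← tsum_ofReal_of_hasSum (fun b ↦ mul_nonneg (pow_nonneg hy b) (hf b m)) (h m)]
  refine tsum_congr fun b ↦ ?_
  rw [ENNReal.ofReal_mul (pow_nonneg hy b), ENNReal.ofReal_pow hy, mul_comm]

/-- The operator whose nested sum is the sum of `ζ(α₀, …, α_a + 1)` over all `α` of positive
integers with `|α| = a + b + 1`. -/
noncomputable def zetaOperator (a b : ℕ) : Module.End ℝ (ℕ → ℝ) :=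
  I₀ * wordSum I₁ I₀ a b * I₁

theorem zetaOperator_nonneg (a b m : ℕ) : 0 ≤ zetaOperator a b δ₀ m :=
  apply_δ₀_nonneg (mul_mem (mul_mem I₀_mem_nonnegOperators (wordSum_mem_nonnegOperators a b))
    (J_mem_nonnegOperators 1)) m

theorem tsum_zetaOperator_mul_pow (a : ℕ) {y : ℝ} (hy₀ : 0 ≤ y) (hy₁ : y < 1) :
    ∑' b, (∑' m, ENNReal.ofReal (zetaOperator a b δ₀ m)) * ENNReal.ofReal y ^ b =
      ∑' n : ℕ, ENNReal.ofReal ((n + 1 : ℕ) ^ (a + 1) * ((n + 1 : ℕ) - y))⁻¹ := by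
  rw [← tsum_I₀_geomI₁_pow hy₁]
  refine tsum_ofReal_mul_pow_eq hy₀ (zetaOperator_nonneg a) fun m ↦ ?_
  have hy : |y| < 1 := by rwa [abs_of_nonneg hy₀]
  refine ((hasSum_wordSum hy δ₀ a m).div_const (m : ℝ)).congr_fun fun b ↦ ?_
  rw [zetaOperator, mul_assoc, Module.End.mul_apply, I₀_apply, mul_div_assoc]

theorem tsum_mzv_singleton_mul_pow (a : ℕ) {y : ℝ} (hy₀ : 0 ≤ y) (hy₁ : y < 1) :
    ∑' b, ENNReal.ofReal (mzv ![a + b + 2]) * ENNReal.ofReal y ^ b =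
      ∑' n : ℕ, ENNReal.ofReal ((n + 1 : ℕ) ^ (a + 1) * ((n + 1 : ℕ) - y))⁻¹ := by
  have hmzv (b : ℕ) := tsum_ofReal_of_hasSum (fun n ↦ by positivity)
    (hasSum_mzv_singleton (Nat.le_add_left 2 (a + b)))
  simp only [← hmzv]
  refine tsum_ofReal_mul_pow_eq hy₀ (fun b n ↦ by positivity) fun n ↦ ?_
  have hy : |y| < (n + 1 : ℕ) := by
    rw [abs_of_nonneg hy₀]
    exact hy₁.trans_le (by exact_mod_cast n.succ_pos)
  rw [mul_inv]
  refine ((hasSum_pow_mul_inv_pow hy).mul_left _).congr_fun fun b ↦ ?_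
  rw [show a + b + 2 = a + 1 + (b + 1) by ring, pow_add _ (a + 1), mul_inv, mul_left_comm]

theorem tsum_inv_pow_mul_sub_ne_top (a : ℕ) {y : ℝ} (hy₀ : 0 ≤ y) (hy₁ : y < 1) :
    ∑' n : ℕ, ENNReal.ofReal ((n + 1 : ℕ) ^ (a + 1) * ((n + 1 : ℕ) - y))⁻¹ ≠ ⊤ := by
  have hsum : Summable fun n : ℕ ↦ (((n + 1 : ℕ) : ℝ) ^ 2)⁻¹ * (1 - y)⁻¹ :=
    ((summable_nat_add_iff 1).2 (Real.summable_nat_pow_inv.2 one_lt_two)).mul_right _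
  have one_le (n : ℕ) : (1 : ℝ) ≤ (n + 1 : ℕ) := by exact_mod_cast n.succ_pos
  have : 0 < 1 - y := sub_pos.2 hy₁
  refine (hsum.of_nonneg_of_le (fun n ↦ ?_) fun n ↦ ?_).tsum_ofReal_ne_top
  · exact inv_nonneg.2 (mul_nonneg (by positivity) (by linarith [one_le n]))
  · rw [← mul_inv, sq, mul_assoc]
    have hpow := le_self_pow₀ (one_le n) a.succ_ne_zero
    have hsub : (n + 1 : ℕ) * (1 - y) ≤ (n + 1 : ℕ) - y := by nlinarith [one_le n]
    gcongr

theorem hasSum_zetaOperator (a b : ℕ) : HasSum (zetaOperator a b δ₀) (mzv ![a + b + 2]) := by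
  have hhalf : (1 / 2 : ℝ) < 1 := by norm_num
  have hfinite : ∑' b, ENNReal.ofReal (mzv ![a + b + 2]) * ENNReal.ofReal (1 / 2) ^ b ≠ ⊤ := by
    rw [tsum_mzv_singleton_mul_pow a (by norm_num) hhalf]
    exact tsum_inv_pow_mul_sub_ne_top a (by norm_num) hhalf
  have key := congrFun (eq_of_tsum_mul_ofReal_pow_eq (by norm_num) hfinite
    fun y hy ↦ (tsum_zetaOperator_mul_pow a hy.1.le (hy.2.trans_lt hhalf)).trans
      (tsum_mzv_singleton_mul_pow a hy.1.le (hy.2.trans_lt hhalf)).symm) b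
  have hmzv : 0 ≤ mzv ![a + b + 2] :=
    (hasSum_mzv_singleton (Nat.le_add_left 2 (a + b))).nonneg fun n ↦ by positivity
  have h := ENNReal.hasSum_toReal (key ▸ ENNReal.ofReal_ne_top)
  rw [← ENNReal.tsum_toReal_eq fun m ↦ ENNReal.ofReal_ne_top, key, ENNReal.toReal_ofReal hmzv] at h
  simpa only [ENNReal.toReal_ofReal (zetaOperator_nonneg a b _)] using h

end SumFormula

section Conclusion

variable (μ ξ μ' ξ' : ℝ) (k l : ℕ)

theorem coeff_coeff_zetaSeries :
    coeff k (coeff l (zetaSeries μ ξ)) = (μ ^ k * ξ ^ l) • zetaOperator k l := by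
  rw [zetaSeries, polylogSeries, coeff_C_mul, coeff_C_mul, coeff_mul_C, coeff_mul_C,
    coeff_coeff_wordSeries, zetaOperator, smul_mul_assoc, mul_smul_comm, mul_assoc]

theorem coeff_genSeries_zetaSeries_mul_zetaSeries (m : ℕ) :
    coeff k (coeff l (coeff m (genSeries (zetaSeries μ ξ) * genSeries (zetaSeries μ' ξ')))) =
      (coeff k (coeff l (doubleSeries μ ξ μ' ξ')) δ₀ m +
        coeff k (coeff l (tripleSeries μ ξ μ' ξ')) δ₀ m) +
      (coeff k (coeff l (doubleSeries μ' ξ' μ ξ)) δ₀ m +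
        coeff k (coeff l (tripleSeries μ' ξ' μ ξ)) δ₀ m) := by
  rw [genSeries_zetaSeries_mul_zetaSeries, coeff_genSeries]
  simp only [map_add, LinearMap.add_apply, Pi.add_apply]

theorem hasSum_coeff_zetaSeries_mul_zetaSeries :
    HasSum (fun m ↦ coeff k (coeff l
        (coeff m (genSeries (zetaSeries μ ξ) * genSeries (zetaSeries μ' ξ')))))
      (∑ a ∈ antidiagonal k, ∑ b ∈ antidiagonal l,
        μ ^ a.1 * μ' ^ a.2 * ξ ^ b.1 * ξ' ^ b.2 *
          (mzv ![a.1 + b.1 + 2] * mzv ![a.2 + b.2 + 2])) := by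
  have hterm (a b : ℕ × ℕ) := (hasSum_sum_mul_antidiagonal (hasSum_zetaOperator a.1 b.1)
    (hasSum_zetaOperator a.2 b.2)).mul_left (μ ^ a.1 * μ' ^ a.2 * ξ ^ b.1 * ξ' ^ b.2)
  refine (hasSum_sum fun a _ ↦ hasSum_sum fun b _ ↦ hterm a b).congr_fun fun m ↦ ?_
  simp only [coeff_mul m, map_sum, coeff_coeff_mul, coeff_genSeries, coeff_coeff_zetaSeries]
  rw [sum_comm]
  refine sum_congr rfl fun a _ ↦ ?_
  rw [sum_comm]
  refine sum_congr rfl fun b _ ↦ ?_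
  rw [mul_sum]
  refine sum_congr rfl fun p _ ↦ ?_
  simp only [LinearMap.smul_apply, Pi.smul_apply, smul_eq_mul]
  ring

theorem doubleOperator_mem_nonnegOperators (a b a' b' : ℕ) :
    doubleOperator a b a' b' ∈ nonnegOperators :=
  have hI₁ := J_mem_nonnegOperators 1
  have hI₀ := I₀_mem_nonnegOperators
  have hword := wordSum_mem_nonnegOperators
  mul_mem (mul_mem (mul_mem (mul_mem (mul_mem hI₀ (hword a' b')) hI₁) hI₀) (hword a b)) hI₁

theorem tripleOperator_mem_nonnegOperators (a b a' b' a'' b'' : ℕ) :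
    tripleOperator a b a' b' a'' b'' ∈ nonnegOperators :=
  have hI₁ := J_mem_nonnegOperators 1
  have hI₀ := I₀_mem_nonnegOperators
  have hword := wordSum_mem_nonnegOperators
  mul_mem (mul_mem (mul_mem (mul_mem (mul_mem (mul_mem hI₀ (hword a'' b'')) hI₀) (hword a' b'))
    hI₁) (hword a b)) hI₁

theorem coeff_doubleSeries_one_mem_nonnegOperators :
    coeff k (coeff l (doubleSeries 1 1 1 1)) ∈ nonnegOperators := by
  rw [coeff_coeff_doubleSeries]
  exact sum_mem fun a _ ↦ sum_mem fun b _ ↦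
    smul_mem_nonnegOperators (by positivity) (doubleOperator_mem_nonnegOperators _ _ _ _)

theorem coeff_tripleSeries_one_mem_nonnegOperators :
    coeff k (coeff l (tripleSeries 1 1 1 1)) ∈ nonnegOperators := by
  rw [coeff_coeff_tripleSeries]
  exact sum_mem fun a _ ↦ sum_mem fun a' _ ↦ sum_mem fun b _ ↦ sum_mem fun b' _ ↦
    smul_mem_nonnegOperators (by positivity) (tripleOperator_mem_nonnegOperators _ _ _ _ _ _)

theorem summable_coeff_doubleSeries_one_add_tripleSeries_one :
    Summable ((coeff k (coeff l (doubleSeries 1 1 1 1)) +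
      coeff k (coeff l (tripleSeries 1 1 1 1))) δ₀) := by
  have h := (hasSum_coeff_zetaSeries_mul_zetaSeries 1 1 1 1 k l).summable
  have hmem := add_mem (coeff_doubleSeries_one_mem_nonnegOperators k l)
    (coeff_tripleSeries_one_mem_nonnegOperators k l)
  simp only [coeff_genSeries_zetaSeries_mul_zetaSeries] at h
  exact summable_of_summable_add hmem hmem h

theorem summable_doubleOperator (a b a' b' : ℕ) : Summable (doubleOperator a b a' b' δ₀) := by
  have h := summable_of_summable_add
    (coeff_doubleSeries_one_mem_nonnegOperators (a + a') (b + b'))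
    (coeff_tripleSeries_one_mem_nonnegOperators _ _)
    (summable_coeff_doubleSeries_one_add_tripleSeries_one _ _)
  simp only [coeff_coeff_doubleSeries, one_pow, mul_one, one_smul, ← sum_product'] at h
  exact summable_of_summable_sum (fun _ _ ↦ doubleOperator_mem_nonnegOperators _ _ _ _) h
    (i := ((a, a'), (b, b'))) (by simp)

theorem summable_tripleOperator (a b a' b' a'' b'' : ℕ) :
    Summable (tripleOperator a b a' b' a'' b'' δ₀) := by
  have h := summable_coeff_doubleSeries_one_add_tripleSeries_one
    (a + (a' + a'')) (b + (b' + b''))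
  rw [add_comm] at h
  replace h := summable_of_summable_add (coeff_tripleSeries_one_mem_nonnegOperators _ _)
    (coeff_doubleSeries_one_mem_nonnegOperators _ _) h
  simp only [coeff_coeff_tripleSeries, sum_sigma', one_pow, one_mul] at h
  replace h := summable_of_summable_sum (fun _ _ ↦ smul_mem_nonnegOperators (by positivity)
    (tripleOperator_mem_nonnegOperators _ _ _ _ _ _)) h
    (i := ⟨(a, a' + a''), (a', a''), (b, b' + b''), (b', b'')⟩) (by simp)
  exact (summable_mul_left_iff (by positivity)).1 h

theorem hasSum_coeff_doubleSeries :
    HasSum (coeff k (coeff l (doubleSeries μ ξ μ' ξ')) δ₀)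
      (∑ a ∈ antidiagonal k, ∑ b ∈ antidiagonal l,
        μ ^ a.1 * μ' ^ a.2 * ξ ^ b.1 * ξ' ^ b.2 * S2 a.1 b.1 a.2 b.2) := by
  rw [coeff_coeff_doubleSeries]
  exact hasSum_sum_apply fun a _ ↦ hasSum_sum_apply fun b _ ↦
    (hasSum_doubleOperator (summable_doubleOperator _ _ _ _)).mul_left _

theorem hasSum_coeff_tripleSeries :
    HasSum (coeff k (coeff l (tripleSeries μ ξ μ' ξ')) δ₀)
      (∑ a ∈ antidiagonal k, ∑ a' ∈ antidiagonal a.2,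
        ∑ b ∈ antidiagonal l, ∑ b' ∈ antidiagonal b.2,
          μ ^ a.1 * ξ ^ b.1 * (μ + μ') ^ a'.1 * (ξ + ξ') ^ b'.1 *
            (μ ^ a'.2 * ξ ^ b'.2 + μ' ^ a'.2 * ξ' ^ b'.2) *
            S3 a.1 b.1 a'.1 b'.1 a'.2 b'.2) := by
  rw [coeff_coeff_tripleSeries]
  exact hasSum_sum_apply fun a _ ↦ hasSum_sum_apply fun a' _ ↦ hasSum_sum_apply fun b _ ↦
    hasSum_sum_apply fun b' _ ↦
      (hasSum_tripleOperator (summable_tripleOperator _ _ _ _ _ _)).mul_left _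

theorem sum_perm_fin_two {M : Type*} [AddCommMonoid M] (f : Equiv.Perm (Fin 2) → M) :
    ∑ σ, f σ = f 1 + f (Equiv.swap 0 1) := by
  have huniv : (univ : Finset (Equiv.Perm (Fin 2))) = {1, Equiv.swap 0 1} := by decide
  rw [huniv, sum_pair (by decide)]

end Conclusion

end MultipleZeta

theorem weighted_sum_formula_two_factors (k ℓ : ℕ) (μ ξ : Fin 2 → ℝ) :
    (∑ a ∈ antidiagonal k, ∑ b ∈ antidiagonal ℓ,
      μ 0 ^ a.1 * μ 1 ^ a.2 * ξ 0 ^ b.1 * ξ 1 ^ b.2 *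
        (mzv ![a.1 + b.1 + 2] * mzv ![a.2 + b.2 + 2])) =
    ∑ σ : Equiv.Perm (Fin 2),
      ((∑ a ∈ antidiagonal k, ∑ b ∈ antidiagonal ℓ,
        μ (σ 0) ^ a.1 * μ (σ 1) ^ a.2 * ξ (σ 0) ^ b.1 * ξ (σ 1) ^ b.2 *
          S2 a.1 b.1 a.2 b.2) +
      ∑ a ∈ antidiagonal k, ∑ a' ∈ antidiagonal a.2,
        ∑ b ∈ antidiagonal ℓ, ∑ b' ∈ antidiagonal b.2,
          μ (σ 0) ^ a.1 * ξ (σ 0) ^ b.1 *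
            (μ (σ 0) + μ (σ 1)) ^ a'.1 * (ξ (σ 0) + ξ (σ 1)) ^ b'.1 *
            (μ (σ 0) ^ a'.2 * ξ (σ 0) ^ b'.2 + μ (σ 1) ^ a'.2 * ξ (σ 1) ^ b'.2) *
            S3 a.1 b.1 a'.1 b'.1 a'.2 b'.2) := by
  have hleft := MultipleZeta.hasSum_coeff_zetaSeries_mul_zetaSeries (μ 0) (ξ 0) (μ 1) (ξ 1) k ℓ
  have hright (i j : Fin 2) :=
    (MultipleZeta.hasSum_coeff_doubleSeries (μ i) (ξ i) (μ j) (ξ j) k ℓ).add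
      (MultipleZeta.hasSum_coeff_tripleSeries (μ i) (ξ i) (μ j) (ξ j) k ℓ)
  have hsum := hasSum_sum fun σ (_ : σ ∈ (univ : Finset (Equiv.Perm (Fin 2)))) ↦
    hright (σ 0) (σ 1)
  refine hleft.unique (hsum.congr_fun fun m ↦ ?_)
  rw [MultipleZeta.sum_perm_fin_two, MultipleZeta.coeff_genSeries_zetaSeries_mul_zetaSeries]
  simp only [Equiv.Perm.coe_one, id_eq, Equiv.swap_apply_left, Equiv.swap_apply_right]
end
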